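/- arXiv:0810.4122 — 4 statements merged into one kernel-verified Lean document; each statement's English description precedes it below -/
import Mathlib

section
/- Let b be a positive integer, C₁, C₂, C₃ ≥ 1 real numbers, and let θ : ℤ₊ → ℝ be non-negative and not identically zero, represented as θ(n) = c·∏_{p^ν ∥ n} A_p(ν) · ∏_{p ∤ n} A_p(0) with c ∈ ℝ and non-negative A_p : ℕ → ℝ (with the convention that an infinite product converges if the partial products of its nonzero factors converge to a nonzero limit, and equals 0 if some factor vanishes), satisfying: (i) for all primes p and all ν ≥ 1, |A_p(ν) − A_p(ν−1)| ≤ C₁ if p^ν | b and |A_p(ν) − A_p(ν−1)| ≤ C₂·p^{−ν} if p^ν ∤ b; and (ii) for all positive integers k, |c·∏_{p ∤ k} A_p(0)| ≤ C₃. Then for every positive integer q and every integer a with gcd(a,q) = 1 there is a constant K depending only on C₂ such that for all t ≥ 0, |∑_{0 < n ≤ t, n ≡ a (mod q)} θ(n) − (t/q)·A(θ,q)| ≤ K·τ(b)·(C₁C₂)^{ω(b)}·C₃·(log(t+2))^{C₂}, where A(θ,q) denotes the value of the convergent infinite product c·∏_{p ∤ q} [ (1 − 1/p)·∑_{ν=0}^∞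 A_p(ν)/p^ν ] · ∏_{p | q} A_p(0). -/
/-!
The proof writes `θ(n) = ∑_{d ∣ n} f(d)` with
`f(d) = c ∏_{p^ν ∥ d} (A_p(ν) - A_p(ν - 1)) ∏_{p ∤ d} A_p(0)` (`ThetaSum.theta_eq_sum`). The
smallness conditions give `|f(d)| ≤ C₃ h(d)` for an explicit multiplicative function `h`
(`ThetaSum.abs_coef_le`).

After interchanging the summations, only `d` coprime to `q` contribute, and the number of `n ≤ t`
with `n ≡ a (mod q)` and `d ∣ n` is `t / (q d)` up to an error `O(min(1, t / d))`, which is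
`O(((t + 2) / d) ^ s)` for every `0 < s ≤ 1` (`ThetaSum.count_bound_rpow`). By Rankin's trick, with
`s = log 2 / log (t + 2)` so that `(t + 2) ^ s = 2`, the total error is `O(C₃ ∑ h(d) d^{-s})`. The
local factors of this sum are bounded, using Bernoulli's inequality, by
`(1 - p^{-1-s})^{-C₂}`, times `(v_p(b) + 1) C₁` if `p ∣ b`. Hence the sum is at most
`τ(b) C₁^{ω(b)} ζ(1 + s)^{C₂} ≤ τ(b) (C₁ C₂)^{ω(b)} (1 + 1 / s)^{C₂}`
(`ThetaSum.majMul_bound`), and `1 + 1 / s` is `O(log (t + 2))`.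

The main term is `t / q` times `∑_{(d, q) = 1} f(d) / d`. Restricted to `d` composed of primes up to
`N`, this series is a finite Euler product times `∏_{p > N} A_p(0)`. As `N → ∞` the latter factor
tends to `1`, because some value of `θ` is nonzero, and dominated convergence identifies the series
with the required product (`ThetaSum.tsum_coefq`).
-/

open scoped Classical

/-- The Dirichlet convolution `θ ∗ μ` of a real-valued arithmetic function with the Möbius
function. -/
noncomputable def dconv (θ : ℕ → ℝ) (n : ℕ) : ℝ :=
  ∑ d ∈ n.divisors, (ArithmeticFunction.moebius d : ℝ) * θ (n / d)

/-- `θ` is represented by the constant `c` and the local data `A` in the sense that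
`θ(n) = c · ∏_{p^ν ∥ n} A_p(ν) · ∏_{p ∤ n} A_p(0)`, the infinite product over the primes not
dividing `n` being convergent. -/
def EulerRep (θ : ℕ → ℝ) (c : ℝ) (A : ℕ → ℕ → ℝ) : Prop :=
  (∀ p ν : ℕ, p.Prime → 0 ≤ A p ν) ∧
  (∀ n : ℕ, 0 < n → Multipliable (fun p : {p : ℕ // p.Prime ∧ ¬ p ∣ n} => A p.1 0)) ∧
  (∀ n : ℕ, 0 < n →
    θ n = c * (∏ p ∈ n.primeFactors, A p (n.factorization p)) *
      ∏' p : {p : ℕ // p.Prime ∧ ¬ p ∣ n}, A p.1 0)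

/-- The local data `c, A` satisfies the smallness conditions of the set `Θ₂(b, C₁, C₂, C₃)`. -/
def SmallCond (b : ℕ) (C₁ C₂ C₃ c : ℝ) (A : ℕ → ℕ → ℝ) : Prop :=
  (∀ p ν : ℕ, p.Prime → 1 ≤ ν →
    (p ^ ν ∣ b → |A p ν - A p (ν - 1)| ≤ C₁) ∧
    (¬ p ^ ν ∣ b → |A p ν - A p (ν - 1)| ≤ C₂ / (p : ℝ) ^ ν)) ∧
  (∀ k : ℕ, 0 < k → |c * ∏' p : {p : ℕ // p.Prime ∧ ¬ p ∣ k}, A p.1 0| ≤ C₃)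

namespace ThetaSum

open Nat Filter Topology

/-! ### The convolution identity -/

/-- A finite Euler product for arbitrary local data `g`. Unlike the Euler products in Mathlib, no
normalization `g p 0 = 1` is required; this is what allows the values `A_p(0)` to vanish. -/
lemma hasSum_factored (g : ℕ → ℕ → ℝ) (s : Finset ℕ) (hs : ∀ p ∈ s, p.Prime)
    (hg : ∀ p ∈ s, Summable (fun ν => ‖g p ν‖)) :
    Summable (fun m : factoredNumbers s => ‖∏ p ∈ s, g p (m.1.factorization p)‖) ∧
    HasSum (fun m : factoredNumbers s => ∏ p ∈ s, g p (m.1.factorization p))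
      (∏ p ∈ s, ∑' ν, g p ν) := by
  induction s using Finset.induction with
  | empty =>
    rw [factoredNumbers_empty]
    simp only [Finset.prod_empty]
    exact ⟨(Set.finite_singleton 1).summable (fun _ => ‖(1 : ℝ)‖),
      hasSum_singleton 1 (fun _ => (1 : ℝ))⟩
  | insert p s hp ih =>
    have hpp : p.Prime := hs p (Finset.mem_insert_self _ _)
    have ih := ih (fun r hr => hs r (Finset.mem_insert_of_mem hr))
      (fun r hr => hg r (Finset.mem_insert_of_mem hr))
    have hgp := hg p (Finset.mem_insert_self _ _)
    have key : ∀ x : ℕ × factoredNumbers s,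
        ∏ r ∈ insert p s, g r ((equivProdNatFactoredNumbers hpp hp x).1.factorization r) =
          g p x.1 * ∏ r ∈ s, g r (x.2.1.factorization r) := by
      rintro ⟨e, m, hm⟩
      have hm0 : m ≠ 0 := ne_zero_of_mem_factoredNumbers hm
      have hpm : ¬ p ∣ m := fun h => hp (primeFactors_subset_of_mem_factoredNumbers hm
        (Nat.mem_primeFactors.2 ⟨hpp, h, hm0⟩))
      have hfac : ∀ r, (p ^ e * m).factorization r =
          (if r = p then e else 0) + m.factorization r := by
        intro r
        rw [Nat.factorization_mul (pow_ne_zero e hpp.ne_zero) hm0, Finsupp.add_apply,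
          hpp.factorization_pow, Finsupp.single_apply]
        simp [eq_comm]
      simp only [equivProdNatFactoredNumbers_apply', hfac]
      rw [Finset.prod_insert hp]
      congr 1
      · simp [factorization_eq_zero_of_not_dvd hpm]
      · refine Finset.prod_congr rfl fun r hr => ?_
        have : r ≠ p := fun h => hp (h ▸ hr)
        simp [this]
    constructor
    · rw [← (equivProdNatFactoredNumbers hpp hp).summable_iff]
      simp only [Function.comp_def, key, norm_mul]
      exact Summable.mul_of_nonneg hgp ih.1 (fun _ => norm_nonneg _) (fun _ => norm_nonneg _)
    · rw [Finset.prod_insert hp, ← (equivProdNatFactoredNumbers hpp hp).hasSum_iff]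
      simp only [Function.comp_def, key]
      apply hgp.of_norm.hasSum.mul ih.2
      exact summable_mul_of_summable_norm (f := fun e => g p e)
        (g := fun m : factoredNumbers s => ∏ r ∈ s, g r (m.1.factorization r)) hgp ih.1

/-- The increments of the local data: `A_p(0)` at `ν = 0` and `A_p(ν) - A_p(ν - 1)` at `ν ≥ 1`. -/
noncomputable def incr (A : ℕ → ℕ → ℝ) (p ν : ℕ) : ℝ :=
  if ν = 0 then A p 0 else A p ν - A p (ν - 1)

/-- The infinite product `∏_{p ∤ k} A_p(0)`. -/
noncomputable def ptail (A : ℕ → ℕ → ℝ) (k : ℕ) : ℝ :=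
  ∏' p : {p : ℕ // p.Prime ∧ ¬ p ∣ k}, A p.1 0

/-- The coefficients `f = θ ∗ μ`, in their product form
`f(d) = c ∏_{p^ν ∥ d} (A_p(ν) - A_p(ν - 1)) ∏_{p ∤ d} A_p(0)`. -/
noncomputable def coef (c : ℝ) (A : ℕ → ℕ → ℝ) (d : ℕ) : ℝ :=
  c * (∏ p ∈ d.primeFactors, incr A p (d.factorization p)) * ptail A d

lemma sum_incr (A : ℕ → ℕ → ℝ) (p n : ℕ) :
    ∑ ν ∈ Finset.range (n + 1), incr A p ν = A p n := by
  induction n with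
  | zero => simp [incr]
  | succ n ih => rw [Finset.sum_range_succ, ih]; simp [incr]

lemma ptail_eq_tprod (A : ℕ → ℕ → ℝ) (k : ℕ) :
    ptail A k = ∏' p, Set.mulIndicator {p : ℕ | p.Prime ∧ ¬ p ∣ k} (fun p => A p 0) p :=
  tprod_subtype {p : ℕ | p.Prime ∧ ¬ p ∣ k} (fun p => A p 0)

lemma multipliable_ind {A : ℕ → ℕ → ℝ}
    (hA : ∀ n : ℕ, 0 < n → Multipliable (fun p : {p : ℕ // p.Prime ∧ ¬ p ∣ n} => A p.1 0))
    {k : ℕ} (hk : 0 < k) :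
    Multipliable (Set.mulIndicator {p : ℕ | p.Prime ∧ ¬ p ∣ k} (fun p => A p 0)) :=
  multipliable_subtype_iff_mulIndicator.1 (hA k hk)

/-- The primes of `l` can be split off from the tail product. The statement has no division, so it
holds also when some `A_p(0)` vanishes. -/
lemma ptail_split {A : ℕ → ℕ → ℝ}
    (hA : ∀ n : ℕ, 0 < n → Multipliable (fun p : {p : ℕ // p.Prime ∧ ¬ p ∣ n} => A p.1 0))
    {k l : ℕ} (hk : 0 < k) (hl : 0 < l) (hkl : k.primeFactors ⊆ l.primeFactors) :
    ptail A k = (∏ p ∈ l.primeFactors \ k.primeFactors, A p 0) * ptail A l := by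
  have h1 : HasProd (Set.mulIndicator (↑(l.primeFactors \ k.primeFactors) : Set ℕ)
      (fun p => A p 0)) (∏ p ∈ l.primeFactors \ k.primeFactors, A p 0) :=
    hasProd_subtype_iff_mulIndicator.1
      (Finset.hasProd (l.primeFactors \ k.primeFactors) (fun p => A p 0))
  have h2 := (multipliable_ind hA hl).hasProd
  rw [← ptail_eq_tprod] at h2
  rw [ptail_eq_tprod, ← (h1.mul h2).tprod_eq]
  congr 1
  funext p
  have hp' : p.Prime → p ∣ k → p ∣ l := fun hp h =>
    (Nat.mem_primeFactors.1 (hkl (Nat.mem_primeFactors.2 ⟨hp, h, hk.ne'⟩))).2.1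
  simp only [Set.mulIndicator_apply, Set.mem_ofPred_eq, Finset.coe_sdiff, Set.mem_sdiff,
    Finset.mem_coe, Nat.mem_primeFactors]
  by_cases hp : p.Prime <;> by_cases h1 : p ∣ k <;> by_cases h2 : p ∣ l <;>
    simp_all [hk.ne', hl.ne']

/-- On numbers whose primes all divide `l`, the coefficient is a product over the primes of `l`. -/
lemma coef_eq {c : ℝ} {A : ℕ → ℕ → ℝ}
    (hA : ∀ n : ℕ, 0 < n → Multipliable (fun p : {p : ℕ // p.Prime ∧ ¬ p ∣ n} => A p.1 0))
    {d l : ℕ} (hd : 0 < d) (hl : 0 < l) (hdl : d.primeFactors ⊆ l.primeFactors) :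
    coef c A d = c * (∏ p ∈ l.primeFactors, incr A p (d.factorization p)) * ptail A l := by
  rw [coef, ptail_split hA hd hl hdl, ← Finset.prod_sdiff hdl]
  have : ∏ p ∈ l.primeFactors \ d.primeFactors, incr A p (d.factorization p) =
      ∏ p ∈ l.primeFactors \ d.primeFactors, A p 0 := by
    refine Finset.prod_congr rfl fun p hp => ?_
    have : d.factorization p = 0 := by
      rw [← Finsupp.notMem_support_iff, Nat.support_factorization]
      exact (Finset.mem_sdiff.1 hp).2
    simp [incr, this]
  rw [this]; ring

/-- `θ = f ∗ 1`: expand `∏_{p^ν ∥ n} A_p(ν)`, each factor being the telescoping sum of its increments. -/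
lemma theta_eq_sum {θ : ℕ → ℝ} {c : ℝ} {A : ℕ → ℕ → ℝ} (h : EulerRep θ c A) {n : ℕ} (hn : 0 < n) :
    θ n = ∑ d ∈ n.divisors, coef c A d := by
  set g : ℕ → ℕ → ℝ := fun p ν => if ν ≤ n.factorization p then incr A p ν else 0 with hg
  have hgs : ∀ p, ∀ ν ∉ Finset.range (n.factorization p + 1), g p ν = 0 := by
    intro p ν hν
    simp only [Finset.mem_range, Nat.lt_succ_iff, not_le] at hν
    simp [hg, hν]
  have hsum := (hasSum_factored g n.primeFactors (fun p hp => Nat.prime_of_mem_primeFactors hp)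
    (fun p _ => summable_of_ne_finset_zero (s := Finset.range (n.factorization p + 1))
      (fun ν hν => by simp [hgs p ν hν]))).2
  have h1 : ∏ p ∈ n.primeFactors, ∑' ν, g p ν = ∏ p ∈ n.primeFactors, A p (n.factorization p) := by
    refine Finset.prod_congr rfl fun p _ => ?_
    rw [tsum_eq_sum (hgs p), ← sum_incr A p (n.factorization p)]
    refine Finset.sum_congr rfl fun ν hν => ?_
    simp only [Finset.mem_range, Nat.lt_succ_iff] at hν
    simp [hg, hν]
  have hsum' : HasSum (Set.indicator (factoredNumbers n.primeFactors)
      (fun m => ∏ p ∈ n.primeFactors, g p (m.factorization p)))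
      (∏ p ∈ n.primeFactors, ∑' ν, g p ν) := hasSum_subtype_iff_indicator.1 hsum
  have h2 : HasSum (Set.indicator (factoredNumbers n.primeFactors)
      (fun m => ∏ p ∈ n.primeFactors, g p (m.factorization p)))
      (∑ d ∈ n.divisors, ∏ p ∈ n.primeFactors, incr A p (d.factorization p)) := by
    have : ∑ d ∈ n.divisors, ∏ p ∈ n.primeFactors, incr A p (d.factorization p) =
        ∑ d ∈ n.divisors, (Set.indicator (factoredNumbers n.primeFactors)
          (fun m => ∏ p ∈ n.primeFactors, g p (m.factorization p))) d := by
      refine Finset.sum_congr rfl fun d hd => ?_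
      have hdn := Nat.dvd_of_mem_divisors hd
      have hd0 : d ≠ 0 := (Nat.pos_of_mem_divisors hd).ne'
      rw [Set.indicator_of_mem (mem_factoredNumbers_of_primeFactors_subset hd0
        (Nat.primeFactors_mono hdn hn.ne'))]
      refine Finset.prod_congr rfl fun p _ => ?_
      have : d.factorization p ≤ n.factorization p :=
        (Nat.factorization_le_iff_dvd hd0 hn.ne').2 hdn p
      simp [hg, this]
    rw [this]
    refine hasSum_sum_of_ne_finset_zero fun d hd => ?_
    by_contra hne
    have hmem : d ∈ factoredNumbers n.primeFactors := Set.mem_of_indicator_ne_zero hne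
    rw [Set.indicator_of_mem hmem, ← ne_eq, Finset.prod_ne_zero_iff] at hne
    have hd0 := ne_zero_of_mem_factoredNumbers hmem
    apply hd
    rw [Nat.mem_divisors]
    refine ⟨(Nat.factorization_le_iff_dvd hd0 hn.ne').1 fun p => ?_, hn.ne'⟩
    by_cases hp : p ∈ n.primeFactors
    · by_contra hlt
      exact hne p hp (by simp only [hg]; rw [if_neg hlt])
    · have : d.factorization p = 0 := by
        rw [← Finsupp.notMem_support_iff, Nat.support_factorization]
        exact fun h => hp (primeFactors_subset_of_mem_factoredNumbers hmem h)
      omega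
  have h3 := hsum'.unique h2
  rw [h.2.2 n hn, ← h1, h3, Finset.mul_sum, Finset.sum_mul]
  refine Finset.sum_congr rfl fun d hd => ?_
  rw [coef_eq h.2.1 (Nat.pos_of_mem_divisors hd) hn
    (Nat.primeFactors_mono (Nat.dvd_of_mem_divisors hd) hn.ne')]
  rfl

/-! ### The majorant of the coefficients -/

/-- The majorant of `|A_p(ν) - A_p(ν - 1)|` provided by the smallness condition, with value `1`
at `ν = 0`. -/
noncomputable def maj (b : ℕ) (C₁ C₂ : ℝ) (p ν : ℕ) : ℝ :=
  if ν = 0 then 1 else if p ^ ν ∣ b then C₁ else C₂ / (p : ℝ) ^ ν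

/-- The multiplicative function `h(d) = ∏_{p^ν ∥ d} maj_p(ν)`; it majorizes `|f| / C₃`. -/
noncomputable def majMul (b : ℕ) (C₁ C₂ : ℝ) (d : ℕ) : ℝ :=
  ∏ p ∈ d.primeFactors, maj b C₁ C₂ p (d.factorization p)

lemma maj_nonneg {b : ℕ} {C₁ C₂ : ℝ} (h1 : 1 ≤ C₁) (h2 : 1 ≤ C₂) (p ν : ℕ) :
    0 ≤ maj b C₁ C₂ p ν := by
  unfold maj; split_ifs <;> positivity

lemma majMul_nonneg {b : ℕ} {C₁ C₂ : ℝ} (h1 : 1 ≤ C₁) (h2 : 1 ≤ C₂) (d : ℕ) :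
    0 ≤ majMul b C₁ C₂ d := Finset.prod_nonneg fun _ _ => maj_nonneg h1 h2 _ _

lemma abs_incr_le {b : ℕ} {C₁ C₂ C₃ c : ℝ} {A : ℕ → ℕ → ℝ} (h : SmallCond b C₁ C₂ C₃ c A)
    {p ν : ℕ} (hp : p.Prime) (hν : ν ≠ 0) : |incr A p ν| ≤ maj b C₁ C₂ p ν := by
  simp only [incr, maj, hν, if_false]
  split_ifs with hb
  · exact (h.1 p ν hp (Nat.one_le_iff_ne_zero.2 hν)).1 hb
  · exact (h.1 p ν hp (Nat.one_le_iff_ne_zero.2 hν)).2 hb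

lemma abs_coef_le {b : ℕ} {C₁ C₂ C₃ c : ℝ} {A : ℕ → ℕ → ℝ} (h : SmallCond b C₁ C₂ C₃ c A)
    {d : ℕ} (hd : 0 < d) :
    |coef c A d| ≤ C₃ * majMul b C₁ C₂ d := by
  have : coef c A d = (c * ptail A d) * ∏ p ∈ d.primeFactors, incr A p (d.factorization p) := by
    rw [coef]; ring
  rw [this, abs_mul, Finset.abs_prod]
  have h3 := h.2 d hd
  refine mul_le_mul h3 ?_ (Finset.prod_nonneg fun _ _ => abs_nonneg _) ((abs_nonneg _).trans h3)
  refine Finset.prod_le_prod (fun _ _ => abs_nonneg _) fun p hp => ?_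
  refine abs_incr_le h (Nat.prime_of_mem_primeFactors hp) ?_
  rw [← Nat.support_factorization] at hp
  exact Finsupp.mem_support_iff.1 hp

/-! ### Local factors and the sum of the majorant -/

/-- Partial sums of `ζ(1 + s)` are at most `1 + 1 / s`. The term `n = 0` is zero by the convention
for `0 ^ x` with `x ≠ 0`, and the other terms are compared with a telescoping sum of `n ^ (-s) / s`. -/
lemma sum_range_rpow_le {s : ℝ} (hs0 : 0 < s) (hs1 : s ≤ 1) (N : ℕ) :
    ∑ n ∈ Finset.range N, (n : ℝ) ^ (-(1 + s)) ≤ 1 + 1 / s := by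
  have key : ∀ N : ℕ, ∑ n ∈ Finset.range (N + 2), (n : ℝ) ^ (-(1 + s)) ≤
      1 + 1 / s - ((N : ℝ) + 1) ^ (-s) / s := by
    intro N
    induction N with
    | zero =>
      have : -s + -1 ≠ 0 := by linarith
      simp [Finset.sum_range_succ, Real.zero_rpow this]
    | succ N ih =>
      rw [Finset.sum_range_succ]
      push_cast
      set m : ℝ := (N : ℝ) + 1 with hm
      have hm0 : 0 < m := by positivity
      have hM : (N : ℝ) + 2 = m + 1 := by rw [hm]; ring
      rw [hM]
      set M : ℝ := m + 1 with hMdef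
      have hM0 : 0 < M := by positivity
      have hM1 : 1 < M := by linarith
      have hsM : s / M < 1 := by rw [div_lt_one hM0]; linarith
      -- Bernoulli's inequality for the exponent `s ∈ [0, 1]`
      have h1 : m ^ s ≤ M ^ s * (1 - s / M) := by
        have hb := rpow_one_add_le_one_add_mul_self (s := -(1 / M)) (p := s)
          (by rw [neg_le_neg_iff, div_le_one hM0]; exact hM1.le) hs0.le hs1
        have hmM : m = M * (1 + -(1 / M)) := by field_simp; linarith
        have hpos : (0 : ℝ) ≤ 1 + -(1 / M) := by
          have : 1 / M ≤ 1 := by rw [div_le_one hM0]; exact hM1.le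
          linarith
        conv_lhs => rw [hmM]
        rw [Real.mul_rpow hM0.le hpos]
        refine mul_le_mul_of_nonneg_left ?_ (by positivity)
        calc _ ≤ _ := hb
          _ = _ := by ring
      have ha : 0 < m ^ s := by positivity
      have hB : 0 < M ^ s := by positivity
      have e1 : M ^ (-(1 + s)) = (M ^ s)⁻¹ / M := by
        rw [Real.rpow_neg hM0.le, Real.rpow_add hM0, Real.rpow_one]; field_simp
      have e2 : M ^ (-s) = (M ^ s)⁻¹ := Real.rpow_neg hM0.le _
      have e3 : m ^ (-s) = (m ^ s)⁻¹ := Real.rpow_neg hm0.le _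
      have h2 : (M ^ s)⁻¹ * (1 + s / M) ≤ (m ^ s)⁻¹ := by
        rw [inv_mul_le_iff₀ hB, ← div_eq_mul_inv, le_div_iff₀ ha]
        have hsM0 : 0 < s / M := by positivity
        calc (1 + s / M) * m ^ s ≤ (1 + s / M) * (M ^ s * (1 - s / M)) := by gcongr
          _ = M ^ s * (1 - (s / M) ^ 2) := by ring
          _ ≤ M ^ s * 1 := by
            refine mul_le_mul_of_nonneg_left ?_ hB.le
            nlinarith
          _ = M ^ s := mul_one _
      have h3 : M ^ (-(1 + s)) ≤ (m ^ (-s) - M ^ (-s)) / s := by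
        rw [le_div_iff₀ hs0, e1, e2, e3]
        have : (M ^ s)⁻¹ / M * s = (M ^ s)⁻¹ * (s / M) := by ring
        rw [this]; linarith
      rw [sub_div] at h3
      linarith
  calc ∑ n ∈ Finset.range N, (n : ℝ) ^ (-(1 + s))
      ≤ ∑ n ∈ Finset.range (N + 2), (n : ℝ) ^ (-(1 + s)) :=
        Finset.sum_le_sum_of_subset_of_nonneg (Finset.range_mono (by omega))
          (fun _ _ _ => by positivity)
    _ ≤ _ := key N
    _ ≤ 1 + 1 / s := by
      have : 0 ≤ ((N : ℝ) + 1) ^ (-s) / s := by positivity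
      linarith

lemma prod_rpow_factorization (r : ℝ) {S : Finset ℕ} {d : ℕ} (hd : d ∈ factoredNumbers S) :
    ∏ p ∈ S, ((p : ℝ) ^ r) ^ d.factorization p = (d : ℝ) ^ r := by
  have hd0 := ne_zero_of_mem_factoredNumbers hd
  have h1 : d = ∏ p ∈ S, p ^ d.factorization p := by
    conv_lhs => rw [← Nat.prod_factorization_pow_eq_self hd0]
    refine Finsupp.prod_of_support_subset _ ?_ _ (by simp)
    rw [Nat.support_factorization]
    exact primeFactors_subset_of_mem_factoredNumbers hd
  conv_rhs => rw [h1]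
  push_cast
  rw [← Real.finsetProd_rpow _ _ (fun _ _ => by positivity)]
  refine Finset.prod_congr rfl fun p _ => ?_
  rw [← Real.rpow_natCast, ← Real.rpow_natCast, ← Real.rpow_mul (by positivity),
    ← Real.rpow_mul (by positivity), mul_comm]

lemma prime_rpow_lt_one {s : ℝ} (hs0 : 0 < s) {p : ℕ} (hp : p.Prime) :
    (p : ℝ) ^ (-(1 + s)) < 1 :=
  Real.rpow_lt_one_of_one_lt_of_neg (by exact_mod_cast hp.one_lt) (by linarith)

/-- A finite Euler product is at most `ζ(1 + s) ≤ 1 + 1 / s`. -/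
lemma prod_inv_le {s : ℝ} (hs0 : 0 < s) (hs1 : s ≤ 1) (S : Finset ℕ) (hS : ∀ p ∈ S, p.Prime) :
    ∏ p ∈ S, (1 - (p : ℝ) ^ (-(1 + s)))⁻¹ ≤ 1 + 1 / s := by
  have hsum := (hasSum_factored (fun p ν => ((p : ℝ) ^ (-(1 + s))) ^ ν) S hS (fun p hp => by
    simp only [norm_pow]
    refine summable_geometric_of_lt_one (norm_nonneg _) ?_
    rw [Real.norm_of_nonneg (by positivity)]
    exact prime_rpow_lt_one hs0 (hS p hp))).2
  have hsum' := hasSum_subtype_iff_indicator (f := fun d : ℕ =>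
    ∏ p ∈ S, ((p : ℝ) ^ (-(1 + s))) ^ d.factorization p).1 hsum
  have e : ∏ p ∈ S, (1 - (p : ℝ) ^ (-(1 + s)))⁻¹ =
      ∏ p ∈ S, ∑' ν : ℕ, ((p : ℝ) ^ (-(1 + s))) ^ ν :=
    Finset.prod_congr rfl fun p hp =>
      (tsum_geometric_of_lt_one (by positivity) (prime_rpow_lt_one hs0 (hS p hp))).symm
  rw [e]
  have hz : Summable (fun n : ℕ => (n : ℝ) ^ (-(1 + s))) :=
    Real.summable_nat_rpow.2 (by linarith)
  refine (hasSum_le (fun d => ?_) hsum' hz.hasSum).trans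
    (Real.tsum_le_of_sum_range_le (fun _ => by positivity) (sum_range_rpow_le hs0 hs1))
  by_cases hd : d ∈ factoredNumbers S
  · rw [Set.indicator_of_mem hd, prod_rpow_factorization _ hd]
  · rw [Set.indicator_of_notMem hd]; positivity

/-- The local factors of `∑ h(d) d^{-s}` are bounded by those of `ζ(1 + s)^{C₂}`, up to the
factor `(v_p(b) + 1) C₁` at the primes dividing `b`. -/
lemma local_bound {b : ℕ} (hb : 0 < b) {C₁ C₂ : ℝ} (h1 : 1 ≤ C₁) (h2 : 1 ≤ C₂) {s : ℝ}
    (hs0 : 0 < s) {p : ℕ} (hp : p.Prime) :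
    Summable (fun ν => maj b C₁ C₂ p ν * ((p : ℝ) ^ (-s)) ^ ν) ∧
    ∑' ν, maj b C₁ C₂ p ν * ((p : ℝ) ^ (-s)) ^ ν ≤
      (if p ∣ b then (b.factorization p + 1) * C₁ else 1) *
        ((1 - (p : ℝ) ^ (-(1 + s)))⁻¹) ^ C₂ := by
  set x : ℝ := (p : ℝ) ^ (-(1 + s)) with hx
  have hp0 : (0 : ℝ) < p := by exact_mod_cast hp.pos
  have hp1 : (1 : ℝ) < p := by exact_mod_cast hp.one_lt
  have hx0 : 0 < x := by positivity
  have hx1 : x < 1 := prime_rpow_lt_one hs0 hp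
  have hxe : x = (p : ℝ) ^ (-s) / p := by
    rw [hx, neg_add, Real.rpow_add hp0, Real.rpow_neg_one]; field_simp
  have hps1 : (p : ℝ) ^ (-s) ≤ 1 := Real.rpow_le_one_of_one_le_of_nonpos hp1.le (by linarith)
  have hps0 : 0 < (p : ℝ) ^ (-s) := by positivity
  set v := b.factorization p with hv
  have hF : HasSum (fun ν : ℕ => if ν ∈ Finset.range (v + 1) then (if ν = 0 then 1 else C₁) else 0)
      (1 + C₁ * v) := by
    have := hasSum_sum_of_ne_finset_zero (L := .unconditional ℕ) (s := Finset.range (v + 1))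
      (f := fun ν : ℕ => if ν ∈ Finset.range (v + 1) then (if ν = 0 then 1 else C₁) else 0)
      (fun ν hν => if_neg hν)
    convert this using 1
    rw [Finset.sum_congr rfl (fun ν hν => if_pos hν), Finset.sum_range_succ']
    simp; ring
  have hG : HasSum (fun ν : ℕ => C₂ * x ^ ν - if ν = 0 then C₂ else 0) (C₂ * (1 - x)⁻¹ - C₂) :=
    ((hasSum_geometric_of_lt_one hx0.le hx1).mul_left C₂).sub (hasSum_ite_eq 0 C₂)
  have hM := hF.add hG
  have hle : ∀ ν, maj b C₁ C₂ p ν * ((p : ℝ) ^ (-s)) ^ ν ≤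
      (if ν ∈ Finset.range (v + 1) then (if ν = 0 then 1 else C₁) else 0) +
        (C₂ * x ^ ν - if ν = 0 then C₂ else 0) := by
    intro ν
    rcases Nat.eq_zero_or_pos ν with rfl | hν
    · simp [maj]
    · have hxν : 0 ≤ C₂ * x ^ ν := by positivity
      simp only [maj, hν.ne', if_false, sub_zero]
      have hdv : p ^ ν ∣ b ↔ ν ∈ Finset.range (v + 1) := by
        rw [hp.pow_dvd_iff_le_factorization hb.ne', Finset.mem_range, Nat.lt_succ_iff]
      by_cases hd : p ^ ν ∣ b
      · rw [if_pos hd, if_pos (hdv.1 hd)]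
        have : ((p : ℝ) ^ (-s)) ^ ν ≤ 1 := pow_le_one₀ hps0.le hps1
        nlinarith
      · rw [if_neg hd, if_neg (fun h => hd (hdv.2 h)), hxe, div_pow, zero_add]
        exact le_of_eq (by ring)
  have hS : Summable (fun ν => maj b C₁ C₂ p ν * ((p : ℝ) ^ (-s)) ^ ν) :=
    Summable.of_nonneg_of_le (fun ν => mul_nonneg (maj_nonneg h1 h2 _ _) (by positivity)) hle
      hM.summable
  refine ⟨hS, (hasSum_le hle hS.hasSum hM).trans ?_⟩
  set y : ℝ := (1 - x)⁻¹ - 1 with hy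
  have hy0 : 0 ≤ y := by
    rw [hy, sub_nonneg]; exact (one_le_inv₀ (by linarith)).2 (by linarith)
  have hyy : (1 - x)⁻¹ = 1 + y := by rw [hy]; ring
  rw [hyy]
  have hB : 1 + C₂ * y ≤ (1 + y) ^ C₂ := one_add_mul_self_le_rpow_one_add (by linarith) h2
  have hC : 0 ≤ C₂ * y := by positivity
  split_ifs with hd
  · have hv0 : (0 : ℝ) ≤ v := by positivity
    have hw : 1 + C₁ * v ≤ (v + 1) * C₁ := by linarith
    have hw1 : 1 ≤ (v + 1) * C₁ := by nlinarith
    calc 1 + C₁ * v + (C₂ * (1 + y) - C₂) = (1 + C₁ * v) + C₂ * y := by ring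
      _ ≤ (v + 1) * C₁ + ((v + 1) * C₁) * (C₂ * y) := by nlinarith
      _ = (v + 1) * C₁ * (1 + C₂ * y) := by ring
      _ ≤ _ := mul_le_mul_of_nonneg_left hB (by linarith)
  · have hv0 : v = 0 := Nat.factorization_eq_zero_of_not_dvd hd
    rw [hv0]; push_cast; linarith

lemma mem_factored_factorial {d N : ℕ} (hd : d ≠ 0) (hN : d ≤ N) :
    d ∈ factoredNumbers (N !).primeFactors := by
  refine mem_factoredNumbers_of_primeFactors_subset hd fun p hp => ?_
  rw [Nat.mem_primeFactors] at hp ⊢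
  exact ⟨hp.1, hp.1.dvd_factorial.2 ((Nat.le_of_dvd (Nat.pos_of_ne_zero hd) hp.2.1).trans hN),
    Nat.factorial_ne_zero _⟩

lemma prod_maj_eq {b : ℕ} {C₁ C₂ : ℝ} {S : Finset ℕ} {d : ℕ} (hd : d ∈ factoredNumbers S) :
    ∏ p ∈ S, maj b C₁ C₂ p (d.factorization p) = majMul b C₁ C₂ d := by
  refine (Finset.prod_subset (primeFactors_subset_of_mem_factoredNumbers hd) ?_).symm
  intro p _ hp
  have : d.factorization p = 0 := by
    rwa [← Finsupp.notMem_support_iff, Nat.support_factorization]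
  simp [this, maj]

/-- Only finite Euler products are used: every finite set of positive `d` consists of numbers composed
of primes up to its maximum. The factors `(v_p(b) + 1) C₁` for `p ∣ b` multiply to `τ(b) C₁^{ω(b)}`, and the remaining factors are
at most `ζ(1 + s) ^ C₂`. -/
lemma majMul_bound {b : ℕ} (hb : 0 < b) {C₁ C₂ : ℝ} (h1 : 1 ≤ C₁) (h2 : 1 ≤ C₂) {s : ℝ}
    (hs0 : 0 < s) (hs1 : s ≤ 1) :
    Summable (fun d : ℕ => majMul b C₁ C₂ d * (d : ℝ) ^ (-s)) ∧
    ∑' d : ℕ, majMul b C₁ C₂ d * (d : ℝ) ^ (-s) ≤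
      b.divisors.card * (C₁ * C₂) ^ b.primeFactors.card * (1 + 1 / s) ^ C₂ := by
  have hnn : ∀ d : ℕ, 0 ≤ majMul b C₁ C₂ d * (d : ℝ) ^ (-s) := fun d =>
    mul_nonneg (majMul_nonneg h1 h2 d) (by positivity)
  set w : ℕ → ℝ := fun p => if p ∣ b then (b.factorization p + 1) * C₁ else 1 with hw
  have hprod : ∀ S : Finset ℕ, (∀ p ∈ S, p.Prime) →
      ∏ p ∈ S, ∑' ν, maj b C₁ C₂ p ν * ((p : ℝ) ^ (-s)) ^ ν ≤
        b.divisors.card * (C₁ * C₂) ^ b.primeFactors.card * (1 + 1 / s) ^ C₂ := by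
    intro S hS
    have hw1 : ∀ p, 1 ≤ w p := by
      intro p
      simp only [hw]
      split_ifs
      · have : (0 : ℝ) ≤ b.factorization p := by positivity
        nlinarith
      · exact le_rfl
    have hx : ∀ p ∈ S, 0 ≤ (1 - (p : ℝ) ^ (-(1 + s)))⁻¹ := fun p hp =>
      inv_nonneg.2 (by linarith [prime_rpow_lt_one hs0 (hS p hp)])
    calc _ ≤ ∏ p ∈ S, w p * ((1 - (p : ℝ) ^ (-(1 + s)))⁻¹) ^ C₂ :=
          Finset.prod_le_prod
            (fun p _ => tsum_nonneg fun ν => mul_nonneg (maj_nonneg h1 h2 _ _) (by positivity))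
            (fun p hp => (local_bound hb h1 h2 hs0 (hS p hp)).2)
      _ = (∏ p ∈ S, w p) * (∏ p ∈ S, (1 - (p : ℝ) ^ (-(1 + s)))⁻¹) ^ C₂ := by
          rw [Finset.prod_mul_distrib, Real.finsetProd_rpow _ _ hx]
      _ ≤ (b.divisors.card * (C₁ * C₂) ^ b.primeFactors.card) * (1 + 1 / s) ^ C₂ := by
          have hA : ∏ p ∈ S, w p ≤ b.divisors.card * (C₁ * C₂) ^ b.primeFactors.card := by
            calc ∏ p ∈ S, w p ≤ ∏ p ∈ S ∪ b.primeFactors, w p := by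
                  rw [← Finset.prod_sdiff (Finset.subset_union_left (s₁ := S)
                    (s₂ := b.primeFactors))]
                  exact le_mul_of_one_le_left (Finset.prod_nonneg fun p _ => by linarith [hw1 p])
                    (Finset.prod_induction w (1 ≤ ·) (fun _ _ => one_le_mul_of_one_le_of_one_le)
                      le_rfl (fun p _ => hw1 p))
              _ = ∏ p ∈ b.primeFactors, w p := by
                  refine (Finset.prod_subset Finset.subset_union_right ?_).symm
                  intro p hp hpb
                  have hpS : p ∈ S := (Finset.mem_union.1 hp).resolve_right hpb
                  have : ¬ p ∣ b := fun h =>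
                    hpb (Nat.mem_primeFactors.2 ⟨hS p hpS, h, hb.ne'⟩)
                  simp [hw, this]
              _ = ∏ p ∈ b.primeFactors, ((b.factorization p + 1 : ℕ) : ℝ) * C₁ := by
                  refine Finset.prod_congr rfl fun p hp => ?_
                  simp [hw, Nat.dvd_of_mem_primeFactors hp]
              _ = b.divisors.card * C₁ ^ b.primeFactors.card := by
                  rw [Finset.prod_mul_distrib, Finset.prod_const, Nat.card_divisors hb.ne']
                  push_cast; rfl
              _ ≤ b.divisors.card * (C₁ * C₂) ^ b.primeFactors.card := by
                  gcongr
                  nlinarith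
          refine mul_le_mul hA ?_ (Real.rpow_nonneg (Finset.prod_nonneg hx) _) (by positivity)
          exact Real.rpow_le_rpow (Finset.prod_nonneg hx) (prod_inv_le hs0 hs1 S hS) (by linarith)
  have hfin : ∀ u : Finset ℕ, ∑ d ∈ u, majMul b C₁ C₂ d * (d : ℝ) ^ (-s) ≤
      b.divisors.card * (C₁ * C₂) ^ b.primeFactors.card * (1 + 1 / s) ^ C₂ := by
    intro u
    set S := ((u.sup id)!).primeFactors with hSdef
    have hS : ∀ p ∈ S, p.Prime := fun p hp => Nat.prime_of_mem_primeFactors hp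
    have hsum := (hasSum_factored (fun p ν => maj b C₁ C₂ p ν * ((p : ℝ) ^ (-s)) ^ ν) S hS
      (fun p hp => (local_bound hb h1 h2 hs0 (hS p hp)).1.norm)).2
    have hsum' := hasSum_subtype_iff_indicator (f := fun d : ℕ =>
      ∏ p ∈ S, (maj b C₁ C₂ p (d.factorization p) * ((p : ℝ) ^ (-s)) ^ d.factorization p)).1 hsum
    have hind : ∀ d ∈ factoredNumbers S, ∏ p ∈ S, (maj b C₁ C₂ p (d.factorization p) *
        ((p : ℝ) ^ (-s)) ^ d.factorization p) = majMul b C₁ C₂ d * (d : ℝ) ^ (-s) := by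
      intro d hd
      rw [Finset.prod_mul_distrib, prod_maj_eq hd, prod_rpow_factorization _ hd]
    refine le_trans ?_ ((sum_le_hasSum u (fun d _ => ?_) hsum').trans (hprod S hS))
    · refine Finset.sum_le_sum fun d hd => ?_
      by_cases hd0 : d = 0
      · subst hd0
        rw [Nat.cast_zero, Real.zero_rpow (by linarith), mul_zero,
          Set.indicator_of_notMem (fun h => ne_zero_of_mem_factoredNumbers h rfl)]
      · have hmem : d ∈ factoredNumbers S :=
          mem_factored_factorial hd0 (Finset.le_sup (f := id) hd)
        rw [Set.indicator_of_mem hmem, hind d hmem]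
    · by_cases hmem : d ∈ factoredNumbers S
      · rw [Set.indicator_of_mem hmem, hind d hmem]; exact hnn d
      · rw [Set.indicator_of_notMem hmem]
  have hSum := summable_of_sum_le hnn hfin
  exact ⟨hSum, hSum.tsum_le_of_sum_le hfin⟩

/-! ### Counting multiples in a residue class -/

/-- The two conditions amount to one residue class modulo `q d`. -/
lemma count_bound {q d : ℕ} (hq : 0 < q) (hd : 0 < d) (hco : Nat.Coprime d q) (a : ℤ) {t : ℝ}
    (ht : 0 ≤ t) :
    |((((Finset.Icc 1 ⌊t⌋₊).filter (fun n : ℕ => (n : ℤ) % (q : ℤ) = a % (q : ℤ))).filter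
      (fun n => d ∣ n)).card : ℝ) - t / q * (d : ℝ) ^ (-(1 : ℝ))| ≤ 2 := by
  obtain ⟨v, hv1, hv2⟩ := Nat.chineseRemainder hco.symm (a % q).toNat 0
  have hr : 0 < q * d := Nat.mul_pos hq hd
  have hset : ((Finset.Icc 1 ⌊t⌋₊).filter (fun n : ℕ => (n : ℤ) % (q : ℤ) = a % (q : ℤ))).filter
      (fun n => d ∣ n) = (Finset.Ioc 0 ⌊t⌋₊).filter (fun n => n ≡ v [MOD q * d]) := by
    ext n
    have h0 : (0 : ℤ) ≤ a % q := Int.emod_nonneg _ (by exact_mod_cast hq.ne')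
    have h1 : (n : ℤ) % (q : ℤ) = a % (q : ℤ) ↔ n ≡ v [MOD q] := by
      have : n ≡ v [MOD q] ↔ n ≡ (a % q).toNat [MOD q] :=
        ⟨fun h => h.trans hv1, fun h => h.trans hv1.symm⟩
      rw [this, ← Int.natCast_modEq_iff, Int.toNat_of_nonneg h0, Int.ModEq, Int.emod_emod]
    have h2 : d ∣ n ↔ n ≡ v [MOD d] := by
      rw [← Nat.modEq_zero_iff_dvd]
      exact ⟨fun h => h.trans hv2.symm, fun h => h.trans hv2⟩
    simp only [Finset.mem_filter, Finset.mem_Icc, Finset.mem_Ioc, h1, h2,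
      ← Nat.modEq_and_modEq_iff_modEq_mul hco.symm, and_assoc]
    rfl
  rw [hset]
  set N := ((Finset.Ioc 0 ⌊t⌋₊).filter (fun n => n ≡ v [MOD q * d])).card with hN
  have hcard : (N : ℤ) = _ := Nat.Ioc_filter_modEq_card 0 ⌊t⌋₊ hr v
  have hrQ : (0 : ℚ) < ((q * d : ℕ) : ℚ) := by exact_mod_cast hr
  set x : ℚ := ((⌊t⌋₊ : ℚ) - v) / ((q * d : ℕ) : ℚ) with hx
  set y : ℚ := (((0 : ℕ) : ℚ) - v) / ((q * d : ℕ) : ℚ) with hy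
  have hxy : x - y = (⌊t⌋₊ : ℚ) / ((q * d : ℕ) : ℚ) := by
    rw [hx, hy, ← sub_div]; congr 1; push_cast; ring
  have hle : y ≤ x := by
    rw [← sub_nonneg, hxy]; positivity
  rw [max_eq_left (sub_nonneg.2 (Int.floor_mono hle))] at hcard
  have hQ : |(N : ℚ) - (⌊t⌋₊ : ℚ) / ((q * d : ℕ) : ℚ)| ≤ 1 := by
    have e : (N : ℚ) = (⌊x⌋ : ℚ) - ⌊y⌋ := by exact_mod_cast hcard
    rw [← hxy, e, abs_le]
    have := Int.floor_le x; have := Int.lt_floor_add_one x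
    have := Int.floor_le y; have := Int.lt_floor_add_one y
    constructor <;> linarith
  have hR : |(N : ℝ) - (⌊t⌋₊ : ℝ) / ((q * d : ℕ) : ℝ)| ≤ 1 := by
    have h := (Rat.cast_le (K := ℝ)).2 hQ
    push_cast at h ⊢
    exact h
  have hrR : (1 : ℝ) ≤ ((q * d : ℕ) : ℝ) := by exact_mod_cast hr
  have he : t / q * (d : ℝ) ^ (-(1 : ℝ)) = t / ((q * d : ℕ) : ℝ) := by
    rw [Real.rpow_neg_one]; push_cast; field_simp
  have hdiff : |(⌊t⌋₊ : ℝ) / ((q * d : ℕ) : ℝ) - t / ((q * d : ℕ) : ℝ)| ≤ 1 := by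
    rw [← sub_div, abs_div, abs_of_pos (by linarith : (0 : ℝ) < ((q * d : ℕ) : ℝ)),
      div_le_one (by linarith)]
    refine le_trans ?_ hrR
    have := Nat.floor_le ht; have := Nat.lt_floor_add_one t
    rw [abs_le]; constructor <;> linarith
  rw [he]
  calc _ ≤ _ := abs_sub_le _ ((⌊t⌋₊ : ℝ) / ((q * d : ℕ) : ℝ)) _
    _ ≤ 2 := by linarith

/-- Interpolation between the trivial bounds `O(1)` and `O(t / d)` for the error of counting
multiples of `d` in a residue class. -/
lemma count_bound_rpow {q d : ℕ} (hq : 0 < q) (hd : 0 < d) (hco : Nat.Coprime d q) (a : ℤ) {t : ℝ}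
    (ht : 0 ≤ t) {s : ℝ} (hs0 : 0 < s) (hs1 : s ≤ 1) :
    |((((Finset.Icc 1 ⌊t⌋₊).filter (fun n : ℕ => (n : ℤ) % (q : ℤ) = a % (q : ℤ))).filter
      (fun n => d ∣ n)).card : ℝ) - t / q * (d : ℝ) ^ (-(1 : ℝ))| ≤
        2 * (t + 2) ^ s * (d : ℝ) ^ (-s) := by
  have hdR : (0 : ℝ) < d := by exact_mod_cast hd
  have e : (t + 2) ^ s * (d : ℝ) ^ (-s) = ((t + 2) / d) ^ s := by
    rw [Real.div_rpow (by linarith) hdR.le, Real.rpow_neg hdR.le, div_eq_mul_inv]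
  rw [mul_assoc, e]
  rcases le_or_gt (d : ℝ) (t + 2) with h | h
  · refine (count_bound hq hd hco a ht).trans ?_
    have : 1 ≤ ((t + 2) / d) ^ s :=
      Real.one_le_rpow ((one_le_div hdR).2 h) hs0.le
    linarith
  · have hempty : (((Finset.Icc 1 ⌊t⌋₊).filter (fun n : ℕ => (n : ℤ) % (q : ℤ) = a % (q : ℤ))).filter
      (fun n => d ∣ n)) = ∅ := by
      ext n
      simp only [Finset.mem_filter, Finset.mem_Icc, Finset.notMem_empty, iff_false]
      rintro ⟨⟨⟨h1, h2⟩, -⟩, h3⟩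
      have h4 : d ≤ n := Nat.le_of_dvd (by omega) h3
      have h5 : (d : ℝ) ≤ ⌊t⌋₊ := by exact_mod_cast h4.trans h2
      linarith [Nat.floor_le ht]
    rw [hempty, Finset.card_empty, Nat.cast_zero, zero_sub, abs_neg, abs_of_nonneg (by positivity),
      Real.rpow_neg_one]
    have hb1 : (t + 2) / d ≤ 1 := (div_le_one hdR).2 h.le
    have hb0 : 0 < (t + 2) / d := by positivity
    have h6 : ((t + 2) / d) ≤ ((t + 2) / d) ^ s := by
      conv_lhs => rw [← Real.rpow_one ((t + 2) / d)]
      exact Real.rpow_le_rpow_of_exponent_ge hb0 hb1 hs1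
    have hq1 : (1 : ℝ) ≤ q := by exact_mod_cast hq
    have h7 : t / q * (d : ℝ)⁻¹ ≤ (t + 2) / d := by
      rw [← div_eq_mul_inv]
      have : t / q ≤ t + 2 := (div_le_self ht hq1).trans (by linarith)
      gcongr
    linarith

/-! ### Euler factors -/

/-- The Euler factor `∑_ν (A_p(ν) - A_p(ν - 1)) p^{-ν}`, which equals
`(1 - 1 / p) ∑_ν A_p(ν) p^{-ν}`. -/
noncomputable def efac (A : ℕ → ℕ → ℝ) (p : ℕ) : ℝ :=
  ∑' ν, incr A p ν * ((p : ℝ) ^ (-(1 : ℝ))) ^ ν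

section local_factors

variable {b : ℕ} {C₁ C₂ C₃ c : ℝ} {A : ℕ → ℕ → ℝ}

lemma summable_incr (h : SmallCond b C₁ C₂ C₃ c A) (hb : 0 < b) (h1 : 1 ≤ C₁) (h2 : 1 ≤ C₂)
    {p : ℕ} (hp : p.Prime) :
    Summable (fun ν => ‖incr A p ν * ((p : ℝ) ^ (-(1 : ℝ))) ^ ν‖) := by
  have hs := (local_bound hb h1 h2 (s := 1) one_pos hp).1
  rw [← summable_nat_add_iff 1] at hs ⊢
  refine Summable.of_nonneg_of_le (fun _ => norm_nonneg _) (fun ν => ?_) hs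
  rw [norm_mul, Real.norm_of_nonneg (by positivity : 0 ≤ ((p : ℝ) ^ (-(1 : ℝ))) ^ (ν + 1))]
  gcongr
  exact abs_incr_le h hp (Nat.succ_ne_zero ν)

/-- The Euler factor in its two forms: `∑_ν A_p(ν) p^{-ν}` is the Cauchy product of the increment series
with the geometric series. -/
lemma local_factor (h : SmallCond b C₁ C₂ C₃ c A) (hb : 0 < b) (h1 : 1 ≤ C₁) (h2 : 1 ≤ C₂)
    {p : ℕ} (hp : p.Prime) :
    Summable (fun ν : ℕ => A p ν / (p : ℝ) ^ ν) ∧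
      (1 - 1 / (p : ℝ)) * ∑' ν : ℕ, A p ν / (p : ℝ) ^ ν = efac A p := by
  set z : ℝ := (p : ℝ) ^ (-(1 : ℝ)) with hz
  have hzi : z = (p : ℝ)⁻¹ := Real.rpow_neg_one _
  have hp1 : (1 : ℝ) < p := by exact_mod_cast hp.one_lt
  have hz0 : 0 < z := by positivity
  have hz1 : z < 1 := by rw [hzi]; exact inv_lt_one_of_one_lt₀ hp1
  have hf := summable_incr h hb h1 h2 hp
  have hg : Summable (fun ν : ℕ => ‖z ^ ν‖) := by
    simp only [norm_pow]
    exact summable_geometric_of_lt_one (norm_nonneg _) (by rwa [Real.norm_of_nonneg hz0.le])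
  have e : ∀ n, ∑ k ∈ Finset.range (n + 1), incr A p k * z ^ k * z ^ (n - k) =
      A p n / (p : ℝ) ^ n := by
    intro n
    rw [← sum_incr A p n, Finset.sum_div]
    refine Finset.sum_congr rfl fun k hk => ?_
    have hk' : k ≤ n := Nat.lt_succ_iff.1 (Finset.mem_range.1 hk)
    rw [mul_assoc, ← pow_add, Nat.add_sub_cancel' hk', hzi, inv_pow, div_eq_mul_inv]
  have hs := summable_norm_sum_mul_range_of_summable_norm hf hg
  have ht := tsum_mul_tsum_eq_tsum_sum_range_of_summable_norm hf hg
  simp only [← hz] at hs ht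
  simp only [e] at hs ht
  refine ⟨hs.of_norm, ?_⟩
  rw [← ht, tsum_geometric_of_lt_one hz0.le hz1, one_div, ← hzi, mul_comm, mul_assoc,
    inv_mul_cancel₀ (by linarith), mul_one]
  rfl

/-- Away from `b` the increments are at most `C₂ p^{-ν}`, so only terms of size `p^{-2}` remain. -/
lemma efac_sub_le (h : SmallCond b C₁ C₂ C₃ c A) (hb : 0 < b) (h1 : 1 ≤ C₁) (h2 : 1 ≤ C₂)
    {p : ℕ} (hp : p.Prime) (hpb : ¬ p ∣ b) :
    |efac A p - A p 0| ≤ 2 * C₂ * (1 / (p : ℝ) ^ 2) := by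
  have hp2 : (2 : ℝ) ≤ p := by exact_mod_cast hp.two_le
  set x : ℝ := 1 / (p : ℝ) ^ 2 with hx
  have hx0 : 0 < x := by positivity
  have hx1 : x ≤ 1 / 2 := by
    rw [hx]; apply one_div_le_one_div_of_le (by norm_num); nlinarith
  have e : efac A p - A p 0 = ∑' ν, incr A p (ν + 1) * ((p : ℝ) ^ (-(1 : ℝ))) ^ (ν + 1) := by
    rw [efac, (summable_incr h hb h1 h2 hp).of_norm.tsum_eq_zero_add]
    simp [incr]
  have hg : HasSum (fun ν : ℕ => C₂ * x * x ^ ν) (C₂ * x * (1 - x)⁻¹) :=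
    (hasSum_geometric_of_lt_one hx0.le (by linarith)).mul_left _
  rw [e, ← Real.norm_eq_abs]
  refine (tsum_of_norm_bounded hg fun ν => ?_).trans ?_
  · rw [norm_mul, Real.norm_of_nonneg (by positivity : 0 ≤ ((p : ℝ) ^ (-(1 : ℝ))) ^ (ν + 1))]
    have hi := abs_incr_le h hp (Nat.succ_ne_zero ν)
    have hnd : ¬ p ^ (ν + 1) ∣ b := fun hd => hpb ((dvd_pow_self p (Nat.succ_ne_zero ν)).trans hd)
    rw [maj, if_neg (Nat.succ_ne_zero ν), if_neg hnd] at hi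
    calc _ ≤ C₂ / (p : ℝ) ^ (ν + 1) * ((p : ℝ) ^ (-(1 : ℝ))) ^ (ν + 1) := by
          gcongr; exact hi
      _ = C₂ * x * x ^ ν := by
          have hxx : x = (p : ℝ)⁻¹ * (p : ℝ)⁻¹ := by rw [hx, one_div, sq, mul_inv]
          rw [Real.rpow_neg_one, mul_assoc, ← _root_.pow_succ', hxx, mul_pow, div_eq_mul_inv, inv_pow,
            mul_assoc]
  · have : (1 - x)⁻¹ ≤ 2 := by
      rw [inv_le_comm₀ (by linarith) (by norm_num)]; linarith
    have : C₂ * x * (1 - x)⁻¹ ≤ C₂ * x * 2 := by gcongr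
    linarith

end local_factors

/-! ### The main term -/

lemma prod_primeFactors_factorial (G : ℕ → ℝ) (N : ℕ) :
    ∏ p ∈ (N !).primeFactors, G p =
      ∏ p ∈ Finset.range (N + 1), if p.Prime then G p else 1 := by
  rw [← Finset.prod_filter]
  refine Finset.prod_congr ?_ fun _ _ => rfl
  ext p
  simp only [Nat.mem_primeFactors, Finset.mem_filter, Finset.mem_range, Nat.lt_succ_iff]
  constructor
  · rintro ⟨h1, h2, -⟩; exact ⟨h1.dvd_factorial.1 h2, h1⟩
  · rintro ⟨h1, h2⟩; exact ⟨h2, h2.dvd_factorial.2 h1, Nat.factorial_ne_zero _⟩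

section products

variable {b : ℕ} {C₁ C₂ C₃ c : ℝ} {A : ℕ → ℕ → ℝ}

/-- The family `p ↦ A_p(0)` for primes `p ∤ k`, extended by `1` to all natural numbers. -/
noncomputable def base (A : ℕ → ℕ → ℝ) (k : ℕ) : ℕ → ℝ :=
  Set.mulIndicator {p : ℕ | p.Prime ∧ ¬ p ∣ k} (fun p => A p 0)

lemma base_apply (A : ℕ → ℕ → ℝ) (k p : ℕ) :
    base A k p = if p.Prime ∧ ¬ p ∣ k then A p 0 else 1 := by
  rw [base, Set.mulIndicator_apply]; rfl

lemma hasProd_base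
    (hA : ∀ n : ℕ, 0 < n → Multipliable (fun p : {p : ℕ // p.Prime ∧ ¬ p ∣ n} => A p.1 0))
    {k : ℕ} (hk : 0 < k) : HasProd (base A k) (ptail A k) := by
  rw [ptail_eq_tprod]; exact (multipliable_ind hA hk).hasProd

lemma base_ne_zero {k : ℕ} (h0 : ptail A k ≠ 0) (p : ℕ) : base A k p ≠ 0 := by
  intro h
  apply h0
  rw [ptail_eq_tprod]
  exact tprod_of_exists_eq_zero ⟨p, h⟩

/-- The factors of a convergent product with nonzero value tend to `1`. -/
lemma tendsto_base
    (hA : ∀ n : ℕ, 0 < n → Multipliable (fun p : {p : ℕ // p.Prime ∧ ¬ p ∣ n} => A p.1 0))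
    {k : ℕ} (hk : 0 < k) (h0 : ptail A k ≠ 0) : Tendsto (base A k) atTop (𝓝 1) := by
  have h1 := (hasProd_base hA hk).tendsto_prod_nat
  have h2 := (tendsto_add_atTop_iff_nat 1).2 h1
  have h3 := h2.div h1 h0
  rw [div_self h0] at h3
  refine h3.congr fun n => ?_
  have : ∏ i ∈ Finset.range n, base A k i ≠ 0 :=
    Finset.prod_ne_zero_iff.2 fun i _ => base_ne_zero h0 i
  simp only [Pi.div_apply]
  rw [Finset.prod_range_succ, mul_div_assoc, mul_comm, div_mul_cancel₀ _ this]

/-- The tails of the convergent product `∏ A_p(0)` tend to `1`. One non-vanishing tail `ptail A k` is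
enough, since the finitely many primes dividing `k` divide `N !` as soon as `N ≥ k`. -/
lemma tendsto_ptail_factorial
    (hA : ∀ n : ℕ, 0 < n → Multipliable (fun p : {p : ℕ // p.Prime ∧ ¬ p ∣ n} => A p.1 0))
    {k : ℕ} (hk : 0 < k) (h0 : ptail A k ≠ 0) :
    Tendsto (fun N : ℕ => ptail A (N !)) atTop (𝓝 1) := by
  have h1 := (hasProd_base hA hk).tendsto_prod_nat
  have h2 := (tendsto_add_atTop_iff_nat 1).2 h1
  have h3 := (tendsto_const_nhds (x := ptail A k)).div h2 h0
  rw [div_self h0] at h3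
  refine h3.congr' ?_
  filter_upwards [eventually_ge_atTop k] with N hN
  have hne : ∏ i ∈ Finset.range (N + 1), base A k i ≠ 0 :=
    Finset.prod_ne_zero_iff.2 fun i _ => base_ne_zero h0 i
  have hsub : k.primeFactors ⊆ (N !).primeFactors :=
    Nat.primeFactors_mono (Nat.dvd_factorial hk hN) (Nat.factorial_ne_zero _)
  have hs := ptail_split hA hk (Nat.factorial_pos N) hsub
  have e : ∏ p ∈ (N !).primeFactors \ k.primeFactors, A p 0 =
      ∏ i ∈ Finset.range (N + 1), base A k i := by
    have e1 : ∏ p ∈ (N !).primeFactors, base A k p = ∏ i ∈ Finset.range (N + 1), base A k i := by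
      rw [prod_primeFactors_factorial]
      refine Finset.prod_congr rfl fun p _ => ?_
      rw [base_apply]
      by_cases hp : p.Prime <;> simp [hp]
    rw [← e1, ← Finset.prod_sdiff hsub]
    have e2 : ∏ p ∈ k.primeFactors, base A k p = 1 :=
      Finset.prod_eq_one fun p hp => by
        rw [base_apply]; simp [Nat.dvd_of_mem_primeFactors hp]
    rw [e2, mul_one]
    refine Finset.prod_congr rfl fun p hp => ?_
    rw [Finset.mem_sdiff] at hp
    have hpp := Nat.prime_of_mem_primeFactors hp.1
    have : ¬ p ∣ k := fun hd => hp.2 (Nat.mem_primeFactors.2 ⟨hpp, hd, hk.ne'⟩)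
    simp [base_apply, hpp, this]
  rw [e] at hs
  simp only [Pi.div_apply]
  rw [hs, mul_comm, mul_div_assoc, div_self hne, mul_one]

/-- The Euler factors differ from `A_p(0)` by `O(p^{-2})` and `A_p(0) → 1`, so their product
converges together with `∏ A_p(0)`. -/
lemma multipliable_efac
    (hA : ∀ n : ℕ, 0 < n → Multipliable (fun p : {p : ℕ // p.Prime ∧ ¬ p ∣ n} => A p.1 0))
    (h : SmallCond b C₁ C₂ C₃ c A) (hb : 0 < b) (h1 : 1 ≤ C₁) (h2 : 1 ≤ C₂)
    {k : ℕ} (hk : 0 < k) (h0 : ptail A k ≠ 0) {q : ℕ} (hq : 0 < q) :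
    Multipliable (Set.mulIndicator {p : ℕ | p.Prime ∧ ¬ p ∣ q} (efac A)) := by
  set F := Set.mulIndicator {p : ℕ | p.Prime ∧ ¬ p ∣ q} (efac A) with hF
  have hFa : ∀ p, F p = if p.Prime ∧ ¬ p ∣ q then efac A p else 1 := fun p => by
    rw [hF, Set.mulIndicator_apply]; rfl
  have hsum : Summable (fun p => F p / base A k p - 1) := by
    have hz : Summable (fun p : ℕ => 4 * C₂ * (1 / (p : ℝ) ^ 2)) :=
      (Real.summable_one_div_nat_pow.2 one_lt_two).mul_left _
    refine hz.of_norm_bounded_eventually_nat ?_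
    have hhalf : ∀ᶠ p in atTop, 1 / 2 < base A k p :=
      (tendsto_base hA hk h0).eventually (lt_mem_nhds (by norm_num))
    filter_upwards [hhalf, eventually_gt_atTop b, eventually_gt_atTop k, eventually_gt_atTop q]
      with p hp hpb hpk hpq
    have hnb : ¬ p ∣ b := Nat.not_dvd_of_pos_of_lt hb hpb
    have hnk : ¬ p ∣ k := Nat.not_dvd_of_pos_of_lt hk hpk
    have hnq : ¬ p ∣ q := Nat.not_dvd_of_pos_of_lt hq hpq
    by_cases hpp : p.Prime
    · rw [base_apply, if_pos ⟨hpp, hnk⟩] at hp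
      rw [hFa, if_pos ⟨hpp, hnq⟩, base_apply, if_pos ⟨hpp, hnk⟩]
      have hpos : 0 < A p 0 := by linarith
      have e : efac A p / A p 0 - 1 = (efac A p - A p 0) / A p 0 := by
        rw [sub_div, div_self hpos.ne']
      rw [e, Real.norm_eq_abs, abs_div, abs_of_pos hpos, div_le_iff₀ hpos]
      refine (efac_sub_le h hb h1 h2 hpp hnb).trans ?_
      have hx : 0 ≤ C₂ * (1 / (p : ℝ) ^ 2) := by positivity
      nlinarith
    · rw [hFa, if_neg (fun hh => hpp hh.1), base_apply, if_neg (fun hh => hpp hh.1)]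
      simp only [div_one, sub_self, norm_zero]
      positivity
  have hm := (hasProd_base hA hk).multipliable.mul (Real.multipliable_one_add_of_summable hsum)
  refine hm.congr fun p => ?_
  have := base_ne_zero h0 p
  field_simp
  ring

/-- The coefficient `f(d)` restricted to `d` coprime to `q`. -/
noncomputable def coefq (c : ℝ) (A : ℕ → ℕ → ℝ) (q d : ℕ) : ℝ :=
  if Nat.Coprime d q then coef c A d else 0

lemma abs_coefq_le (h : SmallCond b C₁ C₂ C₃ c A) (h1 : 1 ≤ C₁) (h2 : 1 ≤ C₂) (h3 : 1 ≤ C₃)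
    (q : ℕ) {d : ℕ} (hd : 0 < d) : |coefq c A q d| ≤ C₃ * majMul b C₁ C₂ d := by
  unfold coefq
  split_ifs
  · exact abs_coef_le h hd
  · rw [abs_zero]; exact mul_nonneg (by linarith) (majMul_nonneg h1 h2 d)

lemma abs_coefq_mul_le (h : SmallCond b C₁ C₂ C₃ c A) (h1 : 1 ≤ C₁) (h2 : 1 ≤ C₂) (h3 : 1 ≤ C₃)
    (q d : ℕ) : ‖coefq c A q d * (d : ℝ) ^ (-(1 : ℝ))‖ ≤
      C₃ * (majMul b C₁ C₂ d * (d : ℝ) ^ (-(1 : ℝ))) := by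
  rcases Nat.eq_zero_or_pos d with rfl | hd
  · simp [Real.rpow_neg_one]
  · rw [norm_mul, Real.norm_of_nonneg (by positivity : 0 ≤ (d : ℝ) ^ (-(1 : ℝ))), ← mul_assoc]
    gcongr
    exact abs_coefq_le h h1 h2 h3 q hd

/-- The Euler product for the sum over `d` composed of primes up to `N`. -/
lemma hasSum_coefq_smooth
    (hA : ∀ n : ℕ, 0 < n → Multipliable (fun p : {p : ℕ // p.Prime ∧ ¬ p ∣ n} => A p.1 0))
    (h : SmallCond b C₁ C₂ C₃ c A) (hb : 0 < b) (h1 : 1 ≤ C₁) (h2 : 1 ≤ C₂) (q N : ℕ) :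
    HasSum (Set.indicator (factoredNumbers (N !).primeFactors)
        (fun d : ℕ => coefq c A q d * (d : ℝ) ^ (-(1 : ℝ))))
      (c * ptail A (N !) * ∏ p ∈ (N !).primeFactors, if p ∣ q then A p 0 else efac A p) := by
  set S := (N !).primeFactors with hS
  set g : ℕ → ℕ → ℝ := fun p ν =>
    (if p ∣ q ∧ ν ≠ 0 then 0 else incr A p ν) * ((p : ℝ) ^ (-(1 : ℝ))) ^ ν with hg
  have hSp : ∀ p ∈ S, p.Prime := fun p hp => Nat.prime_of_mem_primeFactors hp
  have hsum := (hasSum_factored g S hSp (fun p hp => by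
    refine Summable.of_nonneg_of_le (fun _ => norm_nonneg _) (fun ν => ?_)
      (summable_incr h hb h1 h2 (hSp p hp))
    simp only [hg]
    split_ifs
    · rw [zero_mul, norm_zero]; exact norm_nonneg _
    · exact le_rfl)).2
  have hE : ∀ p, ∑' ν, g p ν = if p ∣ q then A p 0 else efac A p := by
    intro p
    split_ifs with hpq
    · rw [tsum_eq_single 0 (fun ν hν => by simp [hg, hpq, hν])]
      simp [hg, incr]
    · simp [hg, hpq, efac]
  simp only [hE] at hsum
  have hsum' := (hasSum_subtype_iff_indicator (f := fun d : ℕ =>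
      ∏ p ∈ S, g p (d.factorization p)).1 hsum).mul_left (c * ptail A (N !))
  suffices hfun : ∀ d, Set.indicator (factoredNumbers S)
      (fun d : ℕ => coefq c A q d * (d : ℝ) ^ (-(1 : ℝ))) d = c * ptail A (N !) *
        Set.indicator (factoredNumbers S) (fun d : ℕ => ∏ p ∈ S, g p (d.factorization p)) d from
    (congrArg (fun F : ℕ → ℝ => HasSum F _) (funext hfun)).mpr hsum'
  intro d
  by_cases hd : d ∈ factoredNumbers S
  · have hd0 := ne_zero_of_mem_factoredNumbers hd
    have hdS := primeFactors_subset_of_mem_factoredNumbers hd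
    rw [Set.indicator_of_mem hd, Set.indicator_of_mem hd]
    simp only [hg]
    rw [Finset.prod_mul_distrib, prod_rpow_factorization _ hd, ← mul_assoc]
    congr 1
    unfold coefq
    split_ifs with hco
    · rw [coef_eq hA (Nat.pos_of_ne_zero hd0) (Nat.factorial_pos N) hdS]
      have : ∏ p ∈ S, (if p ∣ q ∧ d.factorization p ≠ 0 then 0 else incr A p (d.factorization p)) =
          ∏ p ∈ S, incr A p (d.factorization p) := by
        refine Finset.prod_congr rfl fun p hp => if_neg ?_
        rintro ⟨hpq, hpd⟩
        have hpd' : p ∣ d := by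
          by_contra hn
          exact hpd (Nat.factorization_eq_zero_of_not_dvd hn)
        exact Nat.not_coprime_of_dvd_of_dvd (hSp p hp).one_lt hpd' hpq hco
      rw [this]; ring
    · obtain ⟨p, hpp, hpd, hpq⟩ := Nat.Prime.not_coprime_iff_dvd.1 hco
      have hpS : p ∈ S := hdS (Nat.mem_primeFactors.2 ⟨hpp, hpd, hd0⟩)
      rw [Finset.prod_eq_zero hpS, mul_zero]
      exact if_pos ⟨hpq, (hpp.factorization_pos_of_dvd hd0 hpd).ne'⟩
  · rw [Set.indicator_of_notMem hd, Set.indicator_of_notMem hd, mul_zero]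

/-- The main term: `∑_{(d, q) = 1} f(d) / d` is the limit over `N` of its restrictions to numbers
composed of primes up to `N`, which are finite Euler products. -/
lemma tsum_coefq
    (hA : ∀ n : ℕ, 0 < n → Multipliable (fun p : {p : ℕ // p.Prime ∧ ¬ p ∣ n} => A p.1 0))
    (h : SmallCond b C₁ C₂ C₃ c A) (hb : 0 < b) (h1 : 1 ≤ C₁) (h2 : 1 ≤ C₂) (h3 : 1 ≤ C₃)
    {k : ℕ} (hk : 0 < k) (h0 : ptail A k ≠ 0) {q : ℕ} (hq : 0 < q) :
    HasSum (fun d : ℕ => coefq c A q d * (d : ℝ) ^ (-(1 : ℝ)))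
      (c * (∏' p : {p : ℕ // p.Prime ∧ ¬ p ∣ q}, efac A p.1) * ∏ p ∈ q.primeFactors, A p 0) := by
  have hbd : Summable (fun d : ℕ => C₃ * (majMul b C₁ C₂ d * (d : ℝ) ^ (-(1 : ℝ)))) :=
    (majMul_bound hb h1 h2 one_pos le_rfl).1.mul_left _
  have hS : Summable (fun d : ℕ => coefq c A q d * (d : ℝ) ^ (-(1 : ℝ))) :=
    Summable.of_norm_bounded hbd (abs_coefq_mul_le h h1 h2 h3 q)
  have hT1 : Tendsto (fun N : ℕ => ∑' d, Set.indicator (factoredNumbers (N !).primeFactors)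
        (fun d : ℕ => coefq c A q d * (d : ℝ) ^ (-(1 : ℝ))) d) atTop
      (𝓝 (∑' d : ℕ, coefq c A q d * (d : ℝ) ^ (-(1 : ℝ)))) := by
    refine tendsto_tsum_of_dominated_convergence hbd (fun d => ?_) (Eventually.of_forall
      fun N d => (norm_indicator_le_norm_self _ _).trans (abs_coefq_mul_le h h1 h2 h3 q d))
    refine tendsto_const_nhds.congr' ?_
    filter_upwards [eventually_ge_atTop d] with N hN
    by_cases hd : d = 0
    · subst hd
      rw [Set.indicator_of_notMem (fun h => ne_zero_of_mem_factoredNumbers h rfl)]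
      simp [Real.rpow_neg_one]
    · rw [Set.indicator_of_mem (mem_factored_factorial hd hN)]
  have hm := multipliable_efac hA h hb h1 h2 hk h0 hq
  have hpe : ∏' p : {p : ℕ // p.Prime ∧ ¬ p ∣ q}, efac A p.1 =
      ∏' p, Set.mulIndicator {p : ℕ | p.Prime ∧ ¬ p ∣ q} (efac A) p :=
    tprod_subtype {p : ℕ | p.Prime ∧ ¬ p ∣ q} (efac A)
  have hT2 : Tendsto (fun N : ℕ => c * ptail A (N !) *
      ∏ p ∈ (N !).primeFactors, if p ∣ q then A p 0 else efac A p) atTop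
      (𝓝 (c * 1 * ((∏' p : {p : ℕ // p.Prime ∧ ¬ p ∣ q}, efac A p.1) *
        ∏ p ∈ q.primeFactors, A p 0))) := by
    refine ((tendsto_ptail_factorial hA hk h0).const_mul c).mul ?_
    have ht := ((tendsto_add_atTop_iff_nat 1).2 hm.hasProd.tendsto_prod_nat).mul_const
      (∏ p ∈ q.primeFactors, A p 0)
    rw [hpe]
    refine ht.congr' ?_
    filter_upwards [eventually_ge_atTop q] with N hN
    have hsub : q.primeFactors ⊆ Finset.range (N + 1) := fun p hp => by
      have := Nat.le_of_mem_primeFactors hp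
      rw [Finset.mem_range]; omega
    rw [prod_primeFactors_factorial]
    have e : ∏ p ∈ q.primeFactors, A p 0 =
        ∏ p ∈ Finset.range (N + 1), if p ∈ q.primeFactors then A p 0 else 1 := by
      rw [Finset.prod_ite_mem, Finset.inter_eq_right.2 hsub]
    rw [e, ← Finset.prod_mul_distrib]
    refine Finset.prod_congr rfl fun p _ => ?_
    rw [Set.mulIndicator_apply]
    by_cases hp : p.Prime <;> by_cases hpq : p ∣ q <;> simp [hp, hpq, hq.ne']
  have hT3 := hT1.congr fun N => (hasSum_coefq_smooth hA h hb h1 h2 q N).tsum_eq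
  have := tendsto_nhds_unique hT3 hT2
  rw [mul_one, ← mul_assoc] at this
  rw [← this]
  exact hS.hasSum

/-- Interchanging the order of summation; only `d` coprime to `q` divide some `n ≡ a (mod q)`. -/
lemma hasSum_theta {θ : ℕ → ℝ} (h : EulerRep θ c A) {q : ℕ} {a : ℤ}
    (ha : Int.gcd a q = 1) (t : ℝ) :
    HasSum (fun d : ℕ => coefq c A q d *
        ((((Finset.Icc 1 ⌊t⌋₊).filter (fun n : ℕ => (n : ℤ) % (q : ℤ) = a % (q : ℤ))).filter
          (fun n => d ∣ n)).card : ℝ))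
      (∑ n ∈ (Finset.Icc 1 ⌊t⌋₊).filter (fun n : ℕ => (n : ℤ) % (q : ℤ) = a % (q : ℤ)), θ n) := by
  set F := (Finset.Icc 1 ⌊t⌋₊).filter (fun n : ℕ => (n : ℤ) % (q : ℤ) = a % (q : ℤ)) with hF
  have hmem : ∀ n ∈ F, 0 < n ∧ n ≤ ⌊t⌋₊ ∧ (n : ℤ) % (q : ℤ) = a % (q : ℤ) := by
    intro n hn
    rw [hF, Finset.mem_filter, Finset.mem_Icc] at hn
    exact ⟨hn.1.1, hn.1.2, hn.2⟩
  have e : ∑ n ∈ F, θ n = ∑ d ∈ Finset.Icc 1 ⌊t⌋₊,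
      coefq c A q d * ((F.filter (fun n => d ∣ n)).card : ℝ) := by
    have e1 : ∀ n ∈ F, θ n = ∑ d ∈ Finset.Icc 1 ⌊t⌋₊, if d ∣ n then coefq c A q d else 0 := by
      intro n hn
      obtain ⟨hn0, hnt, hna⟩ := hmem n hn
      rw [theta_eq_sum h hn0, ← Finset.sum_filter]
      have hset : n.divisors = (Finset.Icc 1 ⌊t⌋₊).filter (fun d => d ∣ n) := by
        ext d
        simp only [Nat.mem_divisors, Finset.mem_filter, Finset.mem_Icc]
        constructor
        · rintro ⟨hd, -⟩
          exact ⟨⟨Nat.pos_of_dvd_of_pos hd hn0, (Nat.le_of_dvd hn0 hd).trans hnt⟩, hd⟩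
        · rintro ⟨-, hd⟩; exact ⟨hd, hn0.ne'⟩
      rw [← hset]
      refine Finset.sum_congr rfl fun d hd => ?_
      have hnq : Nat.Coprime n q := by
        have : Int.gcd n q = 1 := by
          rw [← Int.gcd_emod, hna, Int.gcd_emod]; exact ha
        simpa using this
      rw [coefq, if_pos (Nat.Coprime.coprime_dvd_left (Nat.dvd_of_mem_divisors hd) hnq)]
    rw [Finset.sum_congr rfl e1, Finset.sum_comm]
    refine Finset.sum_congr rfl fun d _ => ?_
    rw [← Finset.sum_filter, Finset.sum_const, nsmul_eq_mul, mul_comm]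
  rw [e]
  refine hasSum_sum_of_ne_finset_zero fun d hd => ?_
  have : F.filter (fun n => d ∣ n) = ∅ := by
    refine Finset.filter_eq_empty_iff.2 fun n hn hdn => hd ?_
    obtain ⟨hn0, hnt, -⟩ := hmem n hn
    exact Finset.mem_Icc.2 ⟨Nat.pos_of_dvd_of_pos hdn hn0, (Nat.le_of_dvd hn0 hdn).trans hnt⟩
  rw [this]; simp

end products

end ThetaSum

/-- The average of a non-trivial `θ ∈ Θ₂(b, C₁, C₂, C₃)` over a residue class `a (mod q)`
with `gcd(a, q) = 1`:
`∑_{0 < n ≤ t, n ≡ a mod q} θ(n) = (t/q)·A(θ,q) + O_{C₂}(τ(b)(C₁C₂)^{ω(b)} C₃ (log(t+2))^{C₂})`,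
where `A(θ,q)` is the value of the convergent product
`c ∏_{p ∤ q} [(1 - 1/p) ∑_ν A_p(ν)/p^ν] ∏_{p | q} A_p(0)`. -/
theorem sum_theta_residue_class (C₂ : ℝ) (hC₂ : 1 ≤ C₂) :
    ∃ K : ℝ, 0 < K ∧
      ∀ (b : ℕ) (C₁ C₃ : ℝ) (θ : ℕ → ℝ) (c : ℝ) (A : ℕ → ℕ → ℝ),
        0 < b → 1 ≤ C₁ → 1 ≤ C₃ →
        (∀ n : ℕ, 0 ≤ θ n) →
        (∃ n : ℕ, 0 < n ∧ θ n ≠ 0) →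
        EulerRep θ c A →
        SmallCond b C₁ C₂ C₃ c A →
        ∀ (q : ℕ) (a : ℤ), 0 < q → Int.gcd a q = 1 →
          (∀ p : ℕ, p.Prime → ¬ p ∣ q → Summable (fun ν : ℕ => A p ν / (p : ℝ) ^ ν)) ∧
          Multipliable (fun p : {p : ℕ // p.Prime ∧ ¬ p ∣ q} =>
            (1 - 1 / (p.1 : ℝ)) * ∑' ν : ℕ, A p.1 ν / (p.1 : ℝ) ^ ν) ∧
          ∀ t : ℝ, 0 ≤ t →
            |(∑ n ∈ (Finset.Icc 1 ⌊t⌋₊).filter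
                  (fun n : ℕ => (n : ℤ) % (q : ℤ) = a % (q : ℤ)), θ n) -
                (t / q) * (c * (∏' p : {p : ℕ // p.Prime ∧ ¬ p ∣ q},
                    (1 - 1 / (p.1 : ℝ)) * ∑' ν : ℕ, A p.1 ν / (p.1 : ℝ) ^ ν) *
                  ∏ p ∈ q.primeFactors, A p 0)| ≤
              K * b.divisors.card * (C₁ * C₂) ^ b.primeFactors.card * C₃ *
                Real.log (t + 2) ^ C₂ := by
  open ThetaSum in
  have hl2 : 0 < Real.log 2 := Real.log_pos one_lt_two
  refine ⟨4 * (2 / Real.log 2) ^ C₂, by positivity, ?_⟩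
  intro b C₁ C₃ θ c A hb hC₁ hC₃ _ hne hrep hsmall q a hq ha
  obtain ⟨k, hk, hθk⟩ := hne
  have h0 : ptail A k ≠ 0 := by
    intro h
    apply hθk
    have := hrep.2.2 k hk
    rw [show (∏' p : {p : ℕ // p.Prime ∧ ¬ p ∣ k}, A p.1 0) = 0 from h, mul_zero] at this
    exact this
  have hloc := fun (p : ℕ) (hp : p.Prime) => local_factor hsmall hb hC₁ hC₂ hp
  have hfun : (fun p : {p : ℕ // p.Prime ∧ ¬ p ∣ q} =>
      (1 - 1 / (p.1 : ℝ)) * ∑' ν : ℕ, A p.1 ν / (p.1 : ℝ) ^ ν) = fun p => efac A p.1 :=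
    funext fun p => (hloc p.1 p.2.1).2
  refine ⟨fun p hp _ => (hloc p hp).1, ?_, ?_⟩
  · rw [hfun]
    exact multipliable_subtype_iff_mulIndicator.2
      (multipliable_efac hrep.2.1 hsmall hb hC₁ hC₂ hk h0 hq)
  intro t ht
  simp only [hfun]
  -- Rankin's choice of exponent: `(t + 2) ^ s = 2`
  set L := Real.log (t + 2) with hL
  have hL2 : Real.log 2 ≤ L := Real.log_le_log two_pos (by linarith)
  have hL0 : 0 < L := by linarith
  set s := Real.log 2 / L with hs
  have hs0 : 0 < s := by positivity
  have hs1 : s ≤ 1 := (div_le_one hL0).2 hL2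
  have hts : (t + 2) ^ s = 2 := by
    rw [Real.rpow_def_of_pos (by linarith), ← hL, hs, mul_div_cancel₀ _ hL0.ne',
      Real.exp_log two_pos]
  have hmain := (hasSum_theta hrep ha t).sub
    ((tsum_coefq hrep.2.1 hsmall hb hC₁ hC₂ hC₃ hk h0 hq).mul_left (t / q))
  obtain ⟨hmS, hmB⟩ := majMul_bound hb hC₁ hC₂ hs0 hs1
  have hbound := hmain.norm_le_of_bounded (hmS.hasSum.mul_left (4 * C₃)) (fun d => by
    rcases Nat.eq_zero_or_pos d with rfl | hd
    · have : (((Finset.Icc 1 ⌊t⌋₊).filter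
          (fun n : ℕ => (n : ℤ) % (q : ℤ) = a % (q : ℤ))).filter (fun n => 0 ∣ n)) = ∅ := by
        refine Finset.filter_eq_empty_iff.2 fun n hn h => ?_
        rw [Finset.mem_filter, Finset.mem_Icc] at hn
        have := zero_dvd_iff.1 h
        omega
      rw [this]
      have hs' : -s ≠ 0 := by linarith
      simp [Real.rpow_neg_one, Real.zero_rpow hs']
    · by_cases hco : Nat.Coprime d q
      · have hc := count_bound_rpow hq hd hco a ht hs0 hs1
        rw [hts] at hc
        have hk := abs_coefq_le hsmall hC₁ hC₂ hC₃ q hd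
        calc _ = |coefq c A q d| * |((((Finset.Icc 1 ⌊t⌋₊).filter
                (fun n : ℕ => (n : ℤ) % (q : ℤ) = a % (q : ℤ))).filter
                  (fun n => d ∣ n)).card : ℝ) - t / q * (d : ℝ) ^ (-(1 : ℝ))| := by
              rw [Real.norm_eq_abs, ← abs_mul]; congr 1; ring
          _ ≤ (C₃ * majMul b C₁ C₂ d) * (2 * 2 * (d : ℝ) ^ (-s)) :=
              mul_le_mul hk hc (abs_nonneg _) ((abs_nonneg _).trans hk)
          _ = 4 * C₃ * (majMul b C₁ C₂ d * (d : ℝ) ^ (-s)) := by ring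
      · have hz : coefq c A q d = 0 := if_neg hco
        rw [hz]
        have := majMul_nonneg (b := b) hC₁ hC₂ d
        simp only [zero_mul, mul_zero, sub_zero, norm_zero]
        positivity)
  rw [Real.norm_eq_abs] at hbound
  refine hbound.trans ?_
  have h1s : 1 + 1 / s ≤ 2 / Real.log 2 * L := by
    have e : 1 / s = L / Real.log 2 := by rw [hs, one_div_div]
    have : 1 ≤ L / Real.log 2 := (one_le_div hl2).2 hL2
    rw [e, div_mul_eq_mul_div, mul_div_assoc]
    linarith
  have hpow : (1 + 1 / s) ^ C₂ ≤ (2 / Real.log 2) ^ C₂ * L ^ C₂ := by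
    rw [← Real.mul_rpow (by positivity) hL0.le]
    exact Real.rpow_le_rpow (by positivity) h1s (by linarith)
  calc 4 * C₃ * ∑' d : ℕ, majMul b C₁ C₂ d * (d : ℝ) ^ (-s)
      ≤ 4 * C₃ * (b.divisors.card * (C₁ * C₂) ^ b.primeFactors.card *
          ((2 / Real.log 2) ^ C₂ * L ^ C₂)) := by
        refine mul_le_mul_of_nonneg_left (hmB.trans ?_) (by positivity)
        exact mul_le_mul_of_nonneg_left hpow (by positivity)
    _ = _ := by ring
end

section
/- Let r ≥ 2 be an integer, C ≥ 1 real, and for each prime p let θ_p : ℕ^r → ℝ be a non-negative function satisfying: (a) for all k, k' ∈ ℕ^r that differ only in the i-th coordinate with k_i = k'_i + 1, one has |θ_p(k) − θ_p(k')| ≤ C if k_i = 1 and #supp(k) ≥ 2, and |θ_p(k) − θ_p(k')| ≤ C·p^{−k_i} otherwise; and (b) θ_p(0,…,0) ≤ 1 + C·p^{−2}, and θ_p(k) ≤ 1 + #supp(k)·C·p^{−1} for all k ≠ (0,…,0), where supp(k) = {i : k_i ≠ 0}. For each prime p define θ'_p : ℕ^{r−1} → ℝ by θ'_p(k) = (1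 − 1/p)·∑_{m=0}^∞ θ_p(k,m)/p^m (the series converges). Then the family (θ'_p) satisfies conditions (a) and (b) above on ℕ^{r−1} with the constant C replaced by 3C. -/
/-!
The averaged function is a weighted mean with weights `(1 - 1/p) p⁻ⁿ`, of total mass one; the index
`n = 0` carries mass `1 - 1/p` and the indices `n ≥ 1` together carry mass `1/p`. Hence a sequence
bounded by `A` at `0` and by `B` afterwards has mean at most `(1 - 1/p) A + B / p`
(`abs_geomMean_le`). All claims follow by applying this to `θ_p(k, ·)` or to
`θ_p(k, ·) - θ_p(k', ·)`, since `#supp(k, n)` is `#supp(k)` for `n = 0` and `#supp(k) + 1` otherwise.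

The bound deteriorates only where appending a nonzero coordinate changes the applicable condition.
If `k_i = 1` and `#supp(k) = 1`, the differences are at most `C / p` for `n = 0` and at most `C`
for `n ≥ 1`, with mean at most `2C / p`. If `k = 0`, the excess over `1` is at most `C / p²` for
`n = 0` and `C / p` for `n ≥ 1`, with mean at most `2C / p²`.
-/

/-- The number of nonzero coordinates of `k`, i.e. `#supp(k)`. -/
def suppCard {r : ℕ} (k : Fin r → ℕ) : ℕ := (Finset.univ.filter fun i => k i ≠ 0).card

/-- The local conditions of the set `Θ₄,ᵣ(C)`: each `θ_p` is non-negative, and satisfies the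
difference conditions (a) and the size conditions (b). -/
def LocCond (r : ℕ) (C : ℝ) (θ : ℕ → (Fin r → ℕ) → ℝ) : Prop :=
  ∀ p : ℕ, p.Prime →
    (∀ k : Fin r → ℕ, 0 ≤ θ p k) ∧
    (∀ k k' : Fin r → ℕ, ∀ i : Fin r, k i = k' i + 1 → (∀ j : Fin r, j ≠ i → k j = k' j) →
      ((k i = 1 ∧ 2 ≤ suppCard k) → |θ p k - θ p k'| ≤ C) ∧
      (¬(k i = 1 ∧ 2 ≤ suppCard k) → |θ p k - θ p k'| ≤ C / (p : ℝ) ^ (k i))) ∧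
    (θ p (fun _ => 0) ≤ 1 + C / (p : ℝ) ^ 2) ∧
    (∀ k : Fin r → ℕ, k ≠ (fun _ => 0) → θ p k ≤ 1 + (suppCard k : ℝ) * C / (p : ℝ))

theorem suppCard_snoc {r : ℕ} (k : Fin r → ℕ) (n : ℕ) :
    suppCard (Fin.snoc k n : Fin (r + 1) → ℕ) = suppCard k + if n ≠ 0 then 1 else 0 := by
  simp only [suppCard, Finset.card_filter, Fin.sum_univ_castSucc, Fin.snoc_castSucc, Fin.snoc_last]

/-- Bound for the geometric mean of a sequence bounded by `A` at `0` and by `B` at positive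
indices. -/
theorem abs_geomMean_le {p : ℕ} (hp : p.Prime) (g : ℕ → ℝ) (A B : ℝ) (h0 : |g 0| ≤ A)
    (h1 : ∀ n, |g (n + 1)| ≤ B) :
    Summable (fun n : ℕ => g n / (p : ℝ) ^ n) ∧
      |(1 - 1 / (p : ℝ)) * ∑' n : ℕ, g n / (p : ℝ) ^ n| ≤ (1 - 1 / (p : ℝ)) * A + B / p := by
  have hp2 : (2 : ℝ) ≤ p := by exact_mod_cast hp.two_le
  have hp0 : (0 : ℝ) < p := by linarith
  have hq0 : (0 : ℝ) ≤ (p : ℝ)⁻¹ := by positivity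
  have hq1 : (p : ℝ)⁻¹ < 1 := inv_lt_one_of_one_lt₀ (by linarith)
  have hgeo : HasSum (fun n : ℕ => B / p * ((p : ℝ)⁻¹) ^ n) (B / p * (1 - (p : ℝ)⁻¹)⁻¹) :=
    (hasSum_geometric_of_lt_one hq0 hq1).mul_left _
  have hb : ∀ n : ℕ, ‖g (n + 1) / (p : ℝ) ^ (n + 1)‖ ≤ B / p * ((p : ℝ)⁻¹) ^ n := by
    intro n
    have e : B / p * ((p : ℝ)⁻¹) ^ n = B / (p : ℝ) ^ (n + 1) := by
      rw [inv_pow, pow_succ]; field_simp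
    rw [e, Real.norm_eq_abs, abs_div, abs_of_pos (pow_pos hp0 (n + 1))]
    exact div_le_div_of_nonneg_right (h1 n) (by positivity)
  have hs1 : Summable (fun n : ℕ => g (n + 1) / (p : ℝ) ^ (n + 1)) :=
    Summable.of_norm_bounded hgeo.summable hb
  have hs : Summable (fun n : ℕ => g n / (p : ℝ) ^ n) :=
    (summable_nat_add_iff (f := fun n : ℕ => g n / (p : ℝ) ^ n) 1).1 hs1
  refine ⟨hs, ?_⟩
  have ht : |∑' n : ℕ, g (n + 1) / (p : ℝ) ^ (n + 1)| ≤ B / p * (1 - (p : ℝ)⁻¹)⁻¹ :=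
    tsum_of_norm_bounded hgeo hb
  have h1q : (0 : ℝ) < 1 - (p : ℝ)⁻¹ := by linarith
  rw [hs.tsum_eq_zero_add, abs_mul, one_div, abs_of_pos h1q]
  have h2 : |g 0 / (p : ℝ) ^ 0 + ∑' n : ℕ, g (n + 1) / (p : ℝ) ^ (n + 1)|
      ≤ A + B / p * (1 - (p : ℝ)⁻¹)⁻¹ :=
    (abs_add_le _ _).trans (add_le_add (by simpa using h0) ht)
  calc _ ≤ (1 - (p : ℝ)⁻¹) * (A + B / p * (1 - (p : ℝ)⁻¹)⁻¹) :=
        mul_le_mul_of_nonneg_left h2 h1q.le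
    _ = _ := by rw [mul_add, mul_left_comm, mul_inv_cancel₀ h1q.ne', mul_one]

/-- Averaging a family in `Θ₄,ᵣ(C)` (here `r = m + 2 ≥ 2`) over its last variable: the series
`∑_m θ_p(k, m)/p^m` converges, and `θ'_p(k) = (1 − 1/p) ∑_m θ_p(k, m)/p^m` defines a family in
`Θ₄,ᵣ₋₁(3C)`. -/
theorem locCond_average (m : ℕ) (C : ℝ) (hC : 1 ≤ C)
    (θ : ℕ → (Fin (m + 2) → ℕ) → ℝ) (hθ : LocCond (m + 2) C θ) :
    (∀ p : ℕ, p.Prime → ∀ k : Fin (m + 1) → ℕ,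
      Summable (fun n : ℕ => θ p (Fin.snoc k n) / (p : ℝ) ^ n)) ∧
    LocCond (m + 1) (3 * C)
      (fun p k => (1 - 1 / (p : ℝ)) * ∑' n : ℕ, θ p (Fin.snoc k n) / (p : ℝ) ^ n) := by
  have bound : ∀ p : ℕ, p.Prime → ∀ (k : Fin (m + 1) → ℕ) (n : ℕ),
      |θ p (Fin.snoc k (n + 1))| ≤ 1 + ((suppCard k : ℝ) + 1) * C / p := by
    intro p hp k n
    obtain ⟨hnn, -, -, hb⟩ := hθ p hp
    rw [abs_of_nonneg (hnn _)]
    have hne : (Fin.snoc k (n + 1) : Fin (m + 2) → ℕ) ≠ fun _ => 0 := by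
      intro h
      have := congrFun h (Fin.last _)
      simp at this
    have h := hb _ hne
    rw [suppCard_snoc] at h
    simpa using h
  have hsum : ∀ p : ℕ, p.Prime → ∀ k : Fin (m + 1) → ℕ,
      Summable (fun n : ℕ => θ p (Fin.snoc k n) / (p : ℝ) ^ n) := fun p hp k =>
    (abs_geomMean_le hp (fun n => θ p (Fin.snoc k n)) _ _ le_rfl (bound p hp k)).1
  refine ⟨hsum, fun p hp => ?_⟩
  obtain ⟨hnn, hd, hz, hb⟩ := hθ p hp
  have hp2 : (2 : ℝ) ≤ p := by exact_mod_cast hp.two_le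
  have hp0 : (0 : ℝ) < p := by linarith
  have hq0 : (0 : ℝ) < 1 / (p : ℝ) := by positivity
  have hq1 : 1 / (p : ℝ) ≤ 1 := (div_le_one hp0).2 (by linarith)
  refine ⟨fun k => ?_, fun k k' i hi hj => ?_, ?_, fun k hk => ?_⟩
  · exact mul_nonneg (by linarith) (tsum_nonneg fun n => div_nonneg (hnn _) (by positivity))
  · have hdiff : ∀ A B : ℝ, |θ p (Fin.snoc k 0) - θ p (Fin.snoc k' 0)| ≤ A →
        (∀ n : ℕ, |θ p (Fin.snoc k (n + 1)) - θ p (Fin.snoc k' (n + 1))| ≤ B) →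
        |(1 - 1 / (p : ℝ)) * ∑' n : ℕ, θ p (Fin.snoc k n) / (p : ℝ) ^ n
          - (1 - 1 / (p : ℝ)) * ∑' n : ℕ, θ p (Fin.snoc k' n) / (p : ℝ) ^ n|
          ≤ (1 - 1 / (p : ℝ)) * A + B / p := by
      intro A B hA hB
      have h := (abs_geomMean_le hp
        (fun n => θ p (Fin.snoc k n) - θ p (Fin.snoc k' n)) A B hA hB).2
      simp only [sub_div] at h
      rwa [(hsum p hp k).tsum_sub (hsum p hp k'), mul_sub] at h
    have key : ∀ n : ℕ,
        ((k i = 1 ∧ 2 ≤ suppCard k + if n ≠ 0 then 1 else 0) →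
          |θ p (Fin.snoc k n) - θ p (Fin.snoc k' n)| ≤ C) ∧
        (¬(k i = 1 ∧ 2 ≤ suppCard k + if n ≠ 0 then 1 else 0) →
          |θ p (Fin.snoc k n) - θ p (Fin.snoc k' n)| ≤ C / (p : ℝ) ^ (k i)) := by
      intro n
      have h := hd (Fin.snoc k n) (Fin.snoc k' n) i.castSucc (by simpa using hi) (by
        intro j
        refine Fin.lastCases ?_ (fun j => ?_) j
        · simp
        · intro hne
          simpa using hj j (fun h => hne (by rw [h])))
      rwa [suppCard_snoc, Fin.snoc_castSucc] at h
    refine ⟨fun h => ?_, fun h => ?_⟩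
    · have h' := hdiff C C ((key 0).1 ⟨h.1, by simpa using h.2⟩)
        (fun n => (key (n + 1)).1 ⟨h.1, le_add_right h.2⟩)
      have e : (1 - 1 / (p : ℝ)) * C + C / p = C := by ring
      rw [e] at h'
      exact h'.trans (by linarith)
    · by_cases h1 : k i = 1
      · have hs : suppCard k < 2 := by
          by_contra hc
          exact h ⟨h1, not_lt.1 hc⟩
        have hpos : 1 ≤ suppCard k :=
          Finset.card_pos.2 ⟨i, by simp [h1]⟩
        have h' := hdiff (C / (p : ℝ) ^ (k i)) C
          ((key 0).2 (by rintro ⟨-, hc⟩; simp at hc; omega))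
          (fun n => (key (n + 1)).1 ⟨h1, by simp; omega⟩)
        refine h'.trans ?_
        rw [h1, pow_one]
        have hCp : 0 < C / p := by positivity
        have e : 3 * C / (p : ℝ) = 3 * (C / p) := by ring
        rw [e]
        nlinarith
      · have h' := hdiff _ _ ((key 0).2 fun hc => h1 hc.1) (fun n => (key (n + 1)).2 fun hc => h1 hc.1)
        have e : (1 - 1 / (p : ℝ)) * (C / (p : ℝ) ^ (k i)) + C / (p : ℝ) ^ (k i) / p
          = C / (p : ℝ) ^ (k i) := by ring
        rw [e] at h'
        refine h'.trans (div_le_div_of_nonneg_right (by linarith) (by positivity))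
  · have hz' : (Fin.snoc (fun _ => 0 : Fin (m + 1) → ℕ) 0 : Fin (m + 2) → ℕ) = fun _ => 0 := by
      funext j
      refine Fin.lastCases ?_ (fun j => ?_) j <;> simp
    have h := (abs_geomMean_le hp (fun n => θ p (Fin.snoc (fun _ => 0) n)) (1 + C / (p : ℝ) ^ 2) _
      (by simp only [hz', abs_of_nonneg (hnn _)]; exact hz) (bound p hp fun _ => 0)).2
    refine (le_abs_self _).trans (h.trans ?_)
    have hs : suppCard (fun _ => 0 : Fin (m + 1) → ℕ) = 0 := by simp [suppCard]
    rw [hs]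
    have e : (1 - 1 / (p : ℝ)) * (1 + C / (p : ℝ) ^ 2) + (1 + (((0 : ℕ) : ℝ) + 1) * C / p) / p
        = 1 + 2 * (C / (p : ℝ) ^ 2) - 1 / (p : ℝ) * (C / (p : ℝ) ^ 2) := by
      push_cast; ring
    have e2 : 3 * C / (p : ℝ) ^ 2 = 3 * (C / (p : ℝ) ^ 2) := by ring
    have hCp : 0 < C / (p : ℝ) ^ 2 := by positivity
    have := mul_pos hq0 hCp
    rw [e, e2]
    linarith
  · have hne : (Fin.snoc k 0 : Fin (m + 2) → ℕ) ≠ fun _ => 0 := by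
      intro h
      apply hk
      funext j
      have := congrFun h j.castSucc
      simpa using this
    have h0 := hb _ hne
    rw [suppCard_snoc] at h0
    have h := (abs_geomMean_le hp (fun n => θ p (Fin.snoc k n)) (1 + (suppCard k : ℝ) * C / p) _
      (by simp only [abs_of_nonneg (hnn _)]; simpa using h0) (bound p hp k)).2
    refine (le_abs_self _).trans (h.trans ?_)
    have hs : (1 : ℝ) ≤ suppCard k := by
      obtain ⟨j, hj⟩ := Function.ne_iff.1 hk
      exact_mod_cast (Finset.card_pos.2 ⟨j, by simpa using hj⟩ : 0 < suppCard k)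
    have hCp : 0 < C / p := by positivity
    have e : (1 - 1 / (p : ℝ)) * (1 + (suppCard k : ℝ) * C / p)
        + (1 + ((suppCard k : ℝ) + 1) * C / p) / p
        = 1 + suppCard k * (C / p) + 1 / (p : ℝ) * (C / p) := by ring
    have e2 : (suppCard k : ℝ) * (3 * C) / p = 3 * (suppCard k * (C / p)) := by ring
    rw [e, e2]
    have i1 : 1 / (p : ℝ) * (C / p) ≤ 1 * (C / p) := mul_le_mul_of_nonneg_right hq1 hCp.le
    have i2 : 1 * (C / p) ≤ suppCard k * (C / p) := mul_le_mul_of_nonneg_right hs hCp.le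
    linarith
end

section
/- Let ψ : ℤ⁹ → ℤ⁵ be given by ψ(η₁,…,η₉) = (η₂η₃η₄η₅η₆η₇η₈, η₁²η₂²η₃³η₄²η₆, η₁η₂η₃²η₄²η₅²η₆²η₇, η₃η₄²η₅⁴η₆³η₇², η₇η₈η₉). Let E = {{1,3},{2,3},{4,3},{1,9},{2,8},{7,5},{5,6},{6,4},{9,7},{9,8},{8,7}}. For B ≥ 3 let T₀(B) be the set of (η₁,…,η₉) ∈ ℤ⁹ with η₁,…,η₆ ≥ 1, η₇ ≠ 0, satisfying: η₁η₉ + η₂η₈ + η₄η₅³η₆²η₇ = 0; max_{0 ≤ i ≤ 4} |ψ(η)_i| ≤ B; and gcd(η_i, η_j) = 1 for every pair {i,j} ⊂ {1,…,9} with i ≠ j and {i,j} ∉ E. Let S ⊂ P⁴_ℚ be the surface defined by x₀² + x₀x₃ + x₂x₄ = 0 and x₁x₃ − x₂² = 0, let U be the complement in S of the three lines {x₀=x₁=x₂=0}, {x₀+x₃=x₁=x₂=0}, {x₀=x₂=x₃=0}, and let H(x) = max{|x₀|,…,|x₄|} where (x₀,…,x₄) are coprime integer coordinates of x. Then η ↦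 ψ(η), viewed as a point of P⁴(ℚ), defines a bijection between T₀(B) and {x ∈ U(ℚ) : H(x) ≤ B}. -/
/-!
The map is inverted by successive greatest common divisors. On `U` one has `x₂ ≠ 0`, so `x₁` and
`x₃` have the same sign, and after a change of sign of the whole vector
`(x₁, x₂, x₃) = (g s², g s t, g t²)` with `g, s > 0` and `gcd(s, t) = 1`. In terms of the torsor
coordinates, `g = η₃η₄²η₆`, `s = η₁η₂η₃`, `t = η₅²η₆η₇`, and the coprimality conditions give

* `η₆ = gcd(η₆ · η₃η₄², η₆ · η₇η₅²) = gcd(g, t)`,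
* `η₃ = gcd(η₃ · η₄², η₃ · η₁η₂) = gcd(g / η₆, s)`,
* `|η₇| = gcd(η₇ · η₅², η₇ · η₈η₉) = gcd(t / η₆, x₄)`, the sign of `η₇` being that of `t`,
* `η₂ = gcd(η₂ · η₁, η₂ · η₈) = gcd(s / η₃, x₀ / (η₃η₄η₅η₆η₇))`,

and the torsor equation determines `η₉`. This is injectivity (`torsor_unique`), each step being an
instance of `common_factor_unique`.

For surjectivity (`exists_torsor`) the same gcds are extracted from `g, s, t, x₀, x₄`. Once
`η₃, η₆, η₇` are split off, the first quadric becomes monic in `x₀ / (η₃η₆η₇)`, which is therefore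
an integer `z`; coprimality then forces the remaining parts of `g` and `t` to be squares
`η₄²`, `η₅²` with `η₄η₅ ∣ z`, and one last gcd produces `η₁, η₂, η₈, η₉` together with the torsor
equation.
-/

/-- The map `ψ` from the universal torsor to `P⁴`, in coordinates `η₁, …, η₉` (zero-indexed):
`ψ(η) = (η₂η₃η₄η₅η₆η₇η₈, η₁²η₂²η₃³η₄²η₆, η₁η₂η₃²η₄²η₅²η₆²η₇, η₃η₄²η₅⁴η₆³η₇², η₇η₈η₉)`. -/
def psiMap (η : Fin 9 → ℤ) : Fin 5 → ℤ :=
  ![η 1 * η 2 * η 3 * η 4 * η 5 * η 6 * η 7,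
    η 0 ^ 2 * η 1 ^ 2 * η 2 ^ 3 * η 3 ^ 2 * η 5,
    η 0 * η 1 * η 2 ^ 2 * η 3 ^ 2 * η 4 ^ 2 * η 5 ^ 2 * η 6,
    η 2 * η 3 ^ 2 * η 4 ^ 4 * η 5 ^ 3 * η 6 ^ 2,
    η 6 * η 7 * η 8]

/-- The edges of the extended Dynkin diagram (zero-indexed pairs), i.e. the pairs of
coordinates that are *not* required to be coprime. -/
def edgeSet : Set (Finset (Fin 9)) :=
  {{0, 2}, {1, 2}, {3, 2}, {0, 8}, {1, 7}, {6, 4}, {4, 5}, {5, 3}, {8, 6}, {8, 7}, {7, 6}}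

/-- The set `T₀(B)` of integral points on the universal torsor: positivity/nonvanishing
conditions, the torsor equation, the height conditions and the coprimality conditions. -/
def T0 (B : ℝ) : Set (Fin 9 → ℤ) :=
  {η | (∀ i : Fin 9, i.val ≤ 5 → 1 ≤ η i) ∧ η 6 ≠ 0 ∧
    η 0 * η 8 + η 1 * η 7 + η 3 * η 4 ^ 3 * η 5 ^ 2 * η 6 = 0 ∧
    (∀ j : Fin 5, (|psiMap η j| : ℝ) ≤ B) ∧
    (∀ i j : Fin 9, i ≠ j → ({i, j} : Finset (Fin 9)) ∉ edgeSet →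
      Int.gcd (η i) (η j) = 1)}

/-- `v` is a primitive integral vector: the gcd of its coordinates is `1`. -/
def Primitive (v : Fin 5 → ℤ) : Prop := Finset.univ.gcd v = 1

/-- `v` satisfies the equations of the quartic del Pezzo surface
`x₀² + x₀x₃ + x₂x₄ = x₁x₃ − x₂² = 0` and lies on none of its three lines. -/
def OnU (v : Fin 5 → ℤ) : Prop :=
  v 0 ^ 2 + v 0 * v 3 + v 2 * v 4 = 0 ∧ v 1 * v 3 - v 2 ^ 2 = 0 ∧
  ¬(v 0 = 0 ∧ v 1 = 0 ∧ v 2 = 0) ∧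
  ¬(v 0 + v 3 = 0 ∧ v 1 = 0 ∧ v 2 = 0) ∧
  ¬(v 0 = 0 ∧ v 2 = 0 ∧ v 3 = 0)

/-! ### Coprimality conditions -/

/-- The 25 pairwise coprimality conditions, grouped into coprimality of products. -/
theorem coprimality_iff (η : Fin 9 → ℤ) :
    (∀ i j : Fin 9, i ≠ j → ({i, j} : Finset (Fin 9)) ∉ edgeSet → Int.gcd (η i) (η j) = 1) ↔
    IsCoprime (η 0 * η 1 * η 2) (η 4 * η 5 * η 6) ∧
    IsCoprime (η 2 * η 3 * η 5) (η 6 * η 7 * η 8) ∧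
    IsCoprime (η 3) (η 4) ∧ IsCoprime (η 3) (η 0 * η 1) ∧ IsCoprime (η 4) (η 7 * η 8) ∧
    IsCoprime (η 0) (η 7) ∧ IsCoprime (η 0) (η 1) ∧ IsCoprime (η 1) (η 8) := by
  simp only [IsCoprime.mul_left_iff, IsCoprime.mul_right_iff, ← Int.isCoprime_iff_gcd_eq_one]
  constructor
  · intro h
    have h' : ∀ i j : Fin 9, (i ≠ j ∧ ({i, j} : Finset (Fin 9)) ∉ edgeSet) →
        IsCoprime (η i) (η j) := fun i j hij => h i j hij.1 hij.2
    simp only [edgeSet, Set.mem_insert_iff, Set.mem_singleton_iff] at h'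
    and_intros <;> exact h' _ _ (by decide)
  · intro h
    have key : ∀ i j : Fin 9, i < j → ({i, j} : Finset (Fin 9)) ∉ edgeSet →
        IsCoprime (η i) (η j) := by
      intro i j hij hE
      have hlist : ∀ i j : Fin 9, i < j → ({i, j} : Finset (Fin 9)) ∉ edgeSet → (i, j) ∈
          ([(0, 1), (0, 3), (0, 4), (0, 5), (0, 6), (0, 7), (1, 3), (1, 4), (1, 5), (1, 6), (1, 8),
            (2, 4), (2, 5), (2, 6), (2, 7), (2, 8), (3, 4), (3, 6), (3, 7), (3, 8), (4, 7), (4, 8),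
            (5, 6), (5, 7), (5, 8)] : List (Fin 9 × Fin 9)) := by
        simp only [edgeSet, Set.mem_insert_iff, Set.mem_singleton_iff]
        decide
      have := hlist i j hij hE
      simp only [List.mem_cons, Prod.mk.injEq, List.not_mem_nil, or_false] at this
      rcases this with h1 | h1 | h1 | h1 | h1 | h1 | h1 | h1 | h1 | h1 | h1 | h1 | h1 | h1 | h1 |
        h1 | h1 | h1 | h1 | h1 | h1 | h1 | h1 | h1 | h1 <;> obtain ⟨rfl, rfl⟩ := h1 <;>
        tauto
    intro i j hij hE
    rcases lt_or_gt_of_ne hij with hlt | hlt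
    · exact key i j hlt hE
    · exact (key j i hlt (by rwa [Finset.pair_comm])).symm

/-- Primitivity as the absence of a prime dividing all coordinates. -/
theorem primitive_iff (v : Fin 5 → ℤ) :
    Primitive v ↔ ∀ p : ℤ, Prime p → ¬ ∀ i, p ∣ v i := by
  unfold Primitive
  constructor
  · intro h p hp hd
    have : p ∣ Finset.univ.gcd v := Finset.dvd_gcd fun i _ => hd i
    rw [h] at this
    exact hp.not_isUnit (isUnit_of_dvd_one this)
  · intro h
    by_contra hne
    have hnu : ¬ IsUnit (Finset.univ.gcd v) := by
      intro hu
      apply hne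
      rw [← Finset.normalize_gcd]
      exact normalize_eq_one.2 hu
    by_cases h0 : Finset.univ.gcd v = 0
    · refine h 2 Int.prime_two fun i => ?_
      rw [Finset.gcd_eq_zero_iff.1 h0 i (Finset.mem_univ i)]
      exact dvd_zero _
    · obtain ⟨p, hp, hpd⟩ := WfDvdMonoid.exists_irreducible_factor hnu h0
      exact h p hp.prime fun i => hpd.trans (Finset.gcd_dvd (Finset.mem_univ i))

/-! ### Extracting common factors -/

theorem exists_gcd_factor (x y : ℤ) (hx : x ≠ 0) :
    ∃ f a b : ℤ, 0 < f ∧ x = f * a ∧ y = f * b ∧ IsCoprime a b := by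
  have hpos : 0 < Int.gcd x y := Int.gcd_pos_of_ne_zero_left y hx
  obtain ⟨a, b, hab, h1, h2⟩ := Int.exists_gcd_one hpos
  exact ⟨Int.gcd x y, a, b, by exact_mod_cast hpos, by rw [mul_comm]; exact h1,
    by rw [mul_comm]; exact h2, Int.isCoprime_iff_gcd_eq_one.2 hab⟩

/-- A pair of integers determines its greatest common divisor, taken with a prescribed sign, and
the two cofactors. -/
theorem common_factor_unique {f a b f' a' b' : ℤ} (hf : 0 < f * f')
    (hab : IsCoprime a b) (hab' : IsCoprime a' b') (h1 : f * a = f' * a') (h2 : f * b = f' * b') :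
    f = f' ∧ a = a' ∧ b = b' := by
  have hd : ∀ {f a b f' a' b' : ℤ}, IsCoprime a b → f * a = f' * a' → f * b = f' * b' →
      f' ∣ f := by
    rintro f a b f' a' b' ⟨u, w, huw⟩ h1 h2
    exact ⟨u * a' + w * b', by linear_combination (-f) * huw + u * h1 + w * h2⟩
  have hff : f = f' := by
    rcases Int.associated_iff.1 (associated_of_dvd_dvd (hd hab' h1.symm h2.symm) (hd hab h1 h2))
      with h | h
    · exact h
    · subst h
      nlinarith [sq_nonneg f']
  subst hff
  have hf0 : f ≠ 0 := by rintro rfl; simp at hf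
  exact ⟨rfl, mul_left_cancel₀ hf0 h1, mul_left_cancel₀ hf0 h2⟩

/-- A root of `X² + ubX + u²e` is divisible by `u`, as `ℤ` is integrally closed. -/
theorem dvd_of_monic {x u b e : ℤ} (hu : u ≠ 0) (h : x ^ 2 + x * (u * b) + u ^ 2 * e = 0) :
    u ∣ x := by
  obtain ⟨f, u', x', hf, rfl, rfl, hc⟩ := exists_gcd_factor u x hu
  have h' : x' ^ 2 + x' * (u' * b) + u' ^ 2 * e = 0 := by
    have : f ^ 2 * (x' ^ 2 + x' * (u' * b) + u' ^ 2 * e) = 0 := by linear_combination h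
    simpa [hf.ne'] using this
  have hdvd : u' ∣ x' ^ 2 := ⟨-(x' * b + u' * e), by linear_combination h'⟩
  have : IsUnit u' := (hc.pow_right (n := 2)).isUnit_of_dvd' dvd_rfl hdvd
  exact mul_dvd_mul_left f this.dvd

/-- A positive factor of a square that is prime to its cofactor is itself a square. -/
theorem exists_pos_sq {a b c : ℤ} (ha : 0 < a) (hc : IsCoprime a b) (h : a * b = c ^ 2) :
    ∃ r : ℤ, 0 < r ∧ a = r ^ 2 := by
  obtain ⟨r, hr | hr⟩ := Int.sq_of_isCoprime hc h
  · have hr0 : r ≠ 0 := by rintro rfl; simp at hr; omega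
    exact ⟨|r|, abs_pos.2 hr0, by rw [sq_abs, hr]⟩
  · nlinarith [sq_nonneg r]

/-! ### Injectivity -/

/-- Two torsor points with the same image coincide. -/
theorem torsor_unique {η θ : Fin 9 → ℤ}
    (hη : ∀ i : Fin 9, i.val ≤ 5 → 1 ≤ η i) (hη6 : η 6 ≠ 0)
    (hθ : ∀ i : Fin 9, i.val ≤ 5 → 1 ≤ θ i) (hθ6 : θ 6 ≠ 0)
    (eη : η 0 * η 8 + η 1 * η 7 + η 3 * η 4 ^ 3 * η 5 ^ 2 * η 6 = 0)
    (eθ : θ 0 * θ 8 + θ 1 * θ 7 + θ 3 * θ 4 ^ 3 * θ 5 ^ 2 * θ 6 = 0)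
    (cη : ∀ i j : Fin 9, i ≠ j → ({i, j} : Finset (Fin 9)) ∉ edgeSet → Int.gcd (η i) (η j) = 1)
    (cθ : ∀ i j : Fin 9, i ≠ j → ({i, j} : Finset (Fin 9)) ∉ edgeSet → Int.gcd (θ i) (θ j) = 1)
    (h : psiMap η = psiMap θ) : η = θ := by
  rw [coprimality_iff] at cη cθ
  have x0 := congrFun h 0
  have x1 := congrFun h 1
  have x2 := congrFun h 2
  have x3 := congrFun h 3
  have x4 := congrFun h 4
  simp only [psiMap, Fin.isValue, Matrix.cons_val] at x0 x1 x2 x3 x4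
  have p0 := hη 0 (by decide)
  have p1 := hη 1 (by decide)
  have p2 := hη 2 (by decide)
  have p3 := hη 3 (by decide)
  have p4 := hη 4 (by decide)
  have p5 := hη 5 (by decide)
  have q0 := hθ 0 (by decide)
  have q1 := hθ 1 (by decide)
  have q2 := hθ 2 (by decide)
  have q3 := hθ 3 (by decide)
  have q4 := hθ 4 (by decide)
  have q5 := hθ 5 (by decide)
  suffices H : η 0 = θ 0 ∧ η 1 = θ 1 ∧ η 2 = θ 2 ∧ η 3 = θ 3 ∧ η 4 = θ 4 ∧ η 5 = θ 5 ∧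
      η 6 = θ 6 ∧ η 7 = θ 7 ∧ η 8 = θ 8 by
    obtain ⟨h0, h1, h2, h3, h4, h5, h6, h7, h8⟩ := H
    funext i
    fin_cases i <;> assumption
  clear h hη hθ
  -- `(k, h, c, a, b, f, d, q, m)` stands for `(η₁, …, η₉)` in one-based numbering
  generalize η 0 = k at *
  generalize η 1 = h at *
  generalize η 2 = c at *
  generalize η 3 = a at *
  generalize η 4 = b at *
  generalize η 5 = f at *
  generalize η 6 = d at *
  generalize η 7 = q at *
  generalize η 8 = m at *
  generalize θ 0 = k' at *
  generalize θ 1 = h' at *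
  generalize θ 2 = c' at *
  generalize θ 3 = a' at *
  generalize θ 4 = b' at *
  generalize θ 5 = f' at *
  generalize θ 6 = d' at *
  generalize θ 7 = q' at *
  generalize θ 8 = m' at *
  have sq_inj : ∀ {x y : ℤ}, 0 < x → 0 < y → x ^ 2 = y ^ 2 → x = y := fun hx hy hxy =>
    (sq_eq_sq₀ hx.le hy.le).1 hxy
  -- `g`, `s`, `t` from `x₁ = g s²`, `x₂ = g s t`, `x₃ = g t²`
  have st : ∀ {k h c b f d : ℤ}, IsCoprime (k * h * c) (b * f * d) →
      IsCoprime ((k * h * c) ^ 2) ((b ^ 2 * f * d) ^ 2) := by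
    intro k h c b f d hh
    simp only [IsCoprime.mul_left_iff, IsCoprime.mul_right_iff] at hh
    apply IsCoprime.pow
    simp only [IsCoprime.mul_left_iff, IsCoprime.mul_right_iff]
    have := fun (x y : ℤ) (h : IsCoprime x y) => h.pow_right (n := 2)
    tauto
  obtain ⟨hg, hs2, -⟩ := common_factor_unique (f := c * a ^ 2 * f) (f' := c' * a' ^ 2 * f')
    (by positivity) (st cη.1) (st cθ.1) (by linear_combination x1) (by linear_combination x3)
  have hs : k * h * c = k' * h' * c' := sq_inj (by positivity) (by positivity) hs2
  have ht : b ^ 2 * f * d = b' ^ 2 * f' * d' := by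
    have : 0 < c * a ^ 2 * f * (k * h * c) := by positivity
    apply mul_left_cancel₀ this.ne'
    calc _ = c' * a' ^ 2 * f' * (k' * h' * c') * (b' ^ 2 * f' * d') := by
          linear_combination x2
      _ = _ := by rw [hg, hs]
  simp only [IsCoprime.mul_left_iff, IsCoprime.mul_right_iff] at cη cθ
  obtain ⟨⟨⟨⟨⟨k_b, h_b⟩, c_b⟩, ⟨k_f, h_f⟩, c_f⟩, ⟨k_d, h_d⟩, c_d⟩,
    ⟨⟨⟨⟨-, a_d⟩, f_d⟩, -, -⟩, -⟩, a_b, ⟨a_k, a_h⟩, ⟨b_q, b_m⟩, k_q, k_h, h_m⟩ := cη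
  obtain ⟨⟨⟨⟨⟨k_b', h_b'⟩, c_b'⟩, ⟨k_f', h_f'⟩, c_f'⟩, ⟨k_d', h_d'⟩, c_d'⟩,
    ⟨⟨⟨⟨-, a_d'⟩, f_d'⟩, -, -⟩, -⟩, a_b', ⟨a_k', a_h'⟩, ⟨b_q', b_m'⟩, k_q', k_h', h_m'⟩ := cθ
  obtain ⟨rfl, hg1, ht1⟩ := common_factor_unique (f := f) (f' := f') (a := c * a ^ 2)
    (a' := c' * a' ^ 2) (b := d * b ^ 2) (b' := d' * b' ^ 2) (by positivity)
    ((c_d.mul_right c_b.pow_right).mul_left (a_d.mul_right a_b.pow_right).pow_left)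
    ((c_d'.mul_right c_b'.pow_right).mul_left (a_d'.mul_right a_b'.pow_right).pow_left)
    (by linear_combination hg) (by linear_combination ht)
  obtain ⟨rfl, ha2, hs1⟩ := common_factor_unique (f := c) (f' := c') (a := a ^ 2) (a' := a' ^ 2)
    (b := h * k) (b' := h' * k') (by positivity) (a_h.mul_right a_k).pow_left
    (a_h'.mul_right a_k').pow_left hg1 (by linear_combination hs)
  obtain rfl : a = a' := sq_inj (by omega) (by omega) ha2
  have hdd : 0 < d * d' := by
    have h1 : 0 < (d * b ^ 2) * (d' * b' ^ 2) := by
      rw [← ht1]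
      exact mul_self_pos.2 (mul_ne_zero hη6 (by positivity))
    have h2 : 0 < b ^ 2 * b' ^ 2 := by positivity
    exact pos_of_mul_pos_left (b := b ^ 2 * b' ^ 2) (by linarith) h2.le
  obtain ⟨rfl, hb2, -⟩ := common_factor_unique (f := d) (f' := d') (a := b ^ 2) (a' := b' ^ 2)
    (b := q * m) (b' := q' * m') hdd (b_q.mul_right b_m).pow_left
    (b_q'.mul_right b_m').pow_left ht1 (by linear_combination x4)
  obtain rfl : b = b' := sq_inj (by omega) (by omega) hb2
  have hz : h * q = h' * q' := by
    have : c * a * b * f * d ≠ 0 := mul_ne_zero (by positivity) hη6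
    apply mul_left_cancel₀ this
    linear_combination x0
  obtain ⟨rfl, rfl, rfl⟩ := common_factor_unique (f := h) (f' := h') (by positivity) k_q k_q' hs1 hz
  have hm : m = m' := by
    have : k ≠ 0 := by omega
    apply mul_left_cancel₀ this
    linear_combination eη - eθ
  exact ⟨rfl, rfl, rfl, rfl, rfl, rfl, rfl, rfl, hm⟩

/-! ### Surjectivity -/

/-- Primitive solutions with `x₁ > 0` lift to torsor points. -/
theorem exists_torsor (v : Fin 5 → ℤ) (hv : Primitive v)
    (e1 : v 0 ^ 2 + v 0 * v 3 + v 2 * v 4 = 0) (e2 : v 1 * v 3 - v 2 ^ 2 = 0)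
    (h1 : 0 < v 1) (h2 : v 2 ≠ 0) :
    ∃ η : Fin 9 → ℤ, (∀ i : Fin 9, i.val ≤ 5 → 1 ≤ η i) ∧ η 6 ≠ 0 ∧
      η 0 * η 8 + η 1 * η 7 + η 3 * η 4 ^ 3 * η 5 ^ 2 * η 6 = 0 ∧
      (∀ i j : Fin 9, i ≠ j → ({i, j} : Finset (Fin 9)) ∉ edgeSet → Int.gcd (η i) (η j) = 1) ∧
      psiMap η = v := by
  rw [primitive_iff] at hv
  have hv' : ∀ p : ℤ, Prime p → p ∣ v 0 → p ∣ v 1 → p ∣ v 2 → p ∣ v 3 → p ∣ v 4 → False := by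
    intro p hp d0 d1 d2 d3 d4
    refine hv p hp fun i => ?_
    fin_cases i <;> assumption
  -- `(k, h, c, a, b, f, d, q, m)` stands for `(η₁, …, η₉)` in one-based numbering
  suffices H : ∃ k h c a b f d q m : ℤ, 0 < k ∧ 0 < h ∧ 0 < c ∧ 0 < a ∧ 0 < b ∧ 0 < f ∧ d ≠ 0 ∧
      k * m + h * q + a * b ^ 3 * f ^ 2 * d = 0 ∧
      (IsCoprime (k * h * c) (b * f * d) ∧ IsCoprime (c * a * f) (d * q * m) ∧ IsCoprime a b ∧
        IsCoprime a (k * h) ∧ IsCoprime b (q * m) ∧ IsCoprime k q ∧ IsCoprime k h ∧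
        IsCoprime h m) ∧
      h * c * a * b * f * d * q = v 0 ∧ k ^ 2 * h ^ 2 * c ^ 3 * a ^ 2 * f = v 1 ∧
      k * h * c ^ 2 * a ^ 2 * b ^ 2 * f ^ 2 * d = v 2 ∧
      c * a ^ 2 * b ^ 4 * f ^ 3 * d ^ 2 = v 3 ∧ d * q * m = v 4 by
    obtain ⟨k, h, c, a, b, f, d, q, m, pk, ph, pc, pa, pb, pf, pd, he, hc, w0, w1, w2, w3, w4⟩ := H
    refine ⟨![k, h, c, a, b, f, d, q, m], ?_, pd, he, (coprimality_iff _).2 hc, ?_⟩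
    · intro i hi
      fin_cases i <;> simp at hi ⊢ <;> omega
    · funext i
      fin_cases i <;> simp [psiMap, w0, w1, w2, w3, w4]
  clear hv
  generalize v 0 = x0 at *
  generalize v 1 = x1 at *
  generalize v 2 = x2 at *
  generalize v 3 = x3 at *
  generalize v 4 = x4 at *
  -- `x₁ = g s²`, `x₂ = g s t`, `x₃ = g t²`
  obtain ⟨g, s, t, hg, hs, ht, hst, rfl, rfl, rfl⟩ : ∃ g s t : ℤ, 0 < g ∧ 0 < s ∧ t ≠ 0 ∧
      IsCoprime s t ∧ x1 = g * s ^ 2 ∧ x2 = g * s * t ∧ x3 = g * t ^ 2 := by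
    obtain ⟨g, A, C, hg, rfl, rfl, hAC⟩ := exists_gcd_factor x1 x3 h1.ne'
    have hdvd : g ∣ x2 := (Int.pow_dvd_pow_iff two_ne_zero).1 ⟨A * C, by linear_combination -e2⟩
    obtain ⟨D, rfl⟩ := hdvd
    have hA : 0 < A := pos_of_mul_pos_right h1 hg.le
    have hD : D ≠ 0 := right_ne_zero_of_mul h2
    have hACD : A * C = D ^ 2 := by
      have : g ^ 2 ≠ 0 := by positivity
      apply mul_left_cancel₀ this
      linear_combination e2
    obtain ⟨s, hs, rfl⟩ := exists_pos_sq hA hAC hACD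
    obtain ⟨t, rfl⟩ : s ∣ D := (Int.pow_dvd_pow_iff two_ne_zero).1 ⟨C, hACD.symm⟩
    obtain rfl : C = t ^ 2 := by
      have : s ^ 2 ≠ 0 := by positivity
      apply mul_left_cancel₀ this
      linear_combination hACD
    exact ⟨g, s, t, hg, hs, right_ne_zero_of_mul hD, (IsCoprime.pow_iff two_pos two_pos).1 hAC,
      rfl, by ring, rfl⟩
  have hgx4 : IsCoprime g x4 := by
    refine isCoprime_of_prime_dvd (fun h => hg.ne' h.1) fun p hp hpg hp4 => ?_
    have hp0 : p ∣ x0 := hp.dvd_of_dvd_pow (n := 2) (hpg.trans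
      ⟨-(x0 * t ^ 2 + s * t * x4), by linear_combination e1⟩)
    exact hv' p hp hp0 (hpg.mul_right _) ((hpg.mul_right _).mul_right _) (hpg.mul_right _) hp4
  -- `f = gcd(g, t)`, `c = gcd(g / f, s)`, `d = ± gcd(t / f, x₄)`
  obtain ⟨f, g1, t1, hf, rfl, rfl, hgt1⟩ := exists_gcd_factor g t hg.ne'
  have hg1 : 0 < g1 := pos_of_mul_pos_right hg hf.le
  have ht1 : t1 ≠ 0 := right_ne_zero_of_mul ht
  obtain ⟨c, g2, s1, hc, rfl, rfl, hgs⟩ := exists_gcd_factor g1 s hg1.ne'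
  have hg2 : 0 < g2 := pos_of_mul_pos_right hg1 hc.le
  have hs1 : 0 < s1 := pos_of_mul_pos_right hs hc.le
  obtain ⟨d, t2, y, hd, ht2, rfl, rfl, hty⟩ : ∃ d t2 y : ℤ, d ≠ 0 ∧ 0 < t2 ∧ t1 = d * t2 ∧
      x4 = d * y ∧ IsCoprime t2 y := by
    obtain ⟨d, t2, y, hd, rfl, rfl, hty⟩ := exists_gcd_factor t1 x4 ht1
    rcases lt_or_gt_of_ne (right_ne_zero_of_mul ht1) with hneg | hpos
    · exact ⟨-d, -t2, -y, by omega, by omega, by ring, by ring, hty.neg_neg⟩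
    · exact ⟨d, t2, y, hd.ne', hpos, rfl, rfl, hty⟩
  -- the first quadric is monic in `x₀ / (f c d)`
  have hu : f * c * d ≠ 0 := mul_ne_zero (by positivity) hd
  obtain ⟨z, rfl⟩ : f * c * d ∣ x0 :=
    dvd_of_monic (b := f ^ 2 * d * g2 * t2 ^ 2) (e := g2 * t2 * s1 * y) hu
      (by linear_combination e1)
  have hz : z ^ 2 + z * (f ^ 2 * d * g2 * t2 ^ 2) + g2 * t2 * s1 * y = 0 := by
    have : (f * c * d) ^ 2 ≠ 0 := pow_ne_zero _ hu
    apply mul_left_cancel₀ this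
    linear_combination e1
  simp only [IsCoprime.mul_left_iff, IsCoprime.mul_right_iff] at hst hgx4 hgt1
  obtain ⟨⟨c_f, s_f⟩, ⟨c_d, s_d⟩, c_t, s_t⟩ := hst
  obtain ⟨⟨f_d, -, g_d⟩, f_y, c_y, g_y⟩ := hgx4
  obtain ⟨-, -, g_t⟩ := hgt1
  -- `g2 * t2` is prime to the cofactor in `z² = g2 * t2 * (…)`, so both factors are squares
  have hcop : IsCoprime (g2 * t2) (-(z * (f ^ 2 * d * t2) + s1 * y)) := by
    refine isCoprime_of_prime_dvd (fun h => (mul_pos hg2 ht2).ne' h.1) fun p hp hpg hpw => ?_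
    have hpz : p ∣ z := hp.dvd_of_dvd_pow (n := 2) (hpg.trans
      ⟨-(z * (f ^ 2 * d * t2) + s1 * y), by linear_combination hz⟩)
    have hsy : p ∣ s1 * y := by
      have := (dvd_neg.1 hpw).sub (hpz.mul_right (f ^ 2 * d * t2))
      simpa using this
    have : IsCoprime (g2 * t2) (s1 * y) :=
      (hgs.mul_right g_y).mul_left (s_t.symm.mul_right hty)
    exact hp.not_isUnit (this.isUnit_of_dvd' hpg hsy)
  have hprod : g2 * t2 * (-(z * (f ^ 2 * d * t2) + s1 * y)) = z ^ 2 := by linear_combination -hz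
  have hcop' := IsCoprime.mul_left_iff.1 hcop
  obtain ⟨a, ha, rfl⟩ := exists_pos_sq hg2 (g_t.mul_right hcop'.1) (by rw [← mul_assoc]; exact hprod)
  obtain ⟨b, hb, rfl⟩ := exists_pos_sq (c := z) ht2 (g_t.symm.mul_right hcop'.2)
    (by linear_combination hprod)
  obtain ⟨w, rfl⟩ : a * b ∣ z := (Int.pow_dvd_pow_iff two_ne_zero).1
    ⟨-(z * (f ^ 2 * d * b ^ 2) + s1 * y), by rw [← hprod]; ring⟩
  have hw : w ^ 2 + w * (f ^ 2 * d * a * b ^ 3) + s1 * y = 0 := by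
    have : (a * b) ^ 2 ≠ 0 := by positivity
    apply mul_left_cancel₀ this
    linear_combination hz
  clear hcop hcop' hprod hz e1 e2
  -- `h = gcd(s1, w)` splits `s1 = h * k`, and `k` then divides the cofactor of `q = w / h`
  obtain ⟨h, k, q, hh, rfl, rfl, k_q⟩ := exists_gcd_factor s1 w hs1.ne'
  have hk : 0 < k := pos_of_mul_pos_right hs1 hh.le
  have hw' : q * (h * q + f ^ 2 * d * a * b ^ 3) = -(k * y) := by
    apply mul_left_cancel₀ hh.ne'
    linear_combination hw
  obtain ⟨m, hm⟩ : k ∣ h * q + f ^ 2 * d * a * b ^ 3 :=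
    k_q.dvd_of_dvd_mul_left (hw' ▸ (dvd_mul_right k y).neg_right)
  obtain rfl : y = q * -m := by
    apply mul_left_cancel₀ hk.ne'
    linear_combination (-q) * hm + hw'
  have eq : k * -m + h * q + a * b ^ 3 * f ^ 2 * d = 0 := by linear_combination hm
  generalize -m = m at *
  simp only [IsCoprime.mul_left_iff, IsCoprime.mul_right_iff,
    IsCoprime.pow_left_iff two_pos, IsCoprime.pow_right_iff two_pos] at *
  have h_last : IsCoprime h (a * b ^ 3 * f ^ 2 * d) :=
    ((hgs.1.symm.mul_right s_t.1.pow_right).mul_right s_f.1.pow_right).mul_right s_d.1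
  -- by the torsor equation, `k * m` is minus its third term modulo `h`
  have h_km : IsCoprime h (k * m) := by
    have : k * m = -(a * b ^ 3 * f ^ 2 * d) + h * -q := by linear_combination eq
    rw [this]
    exact IsCoprime.add_mul_left_right h_last.neg_right _
  rw [IsCoprime.mul_right_iff] at h_km
  refine ⟨k, h, c, a, b, f, d, q, m, hk, hh, hc, ha, hb, hf, hd, eq, ?_, by ring, by ring,
    by ring, by ring, by ring⟩
  have k_h := h_km.1.symm
  tauto

/-! ### The bijection -/

theorem torsor_primitive {η : Fin 9 → ℤ}
    (hc : ∀ i j : Fin 9, i ≠ j → ({i, j} : Finset (Fin 9)) ∉ edgeSet → Int.gcd (η i) (η j) = 1) :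
    Primitive (psiMap η) := by
  rw [coprimality_iff] at hc
  rw [primitive_iff]
  intro p hp hd
  have d1 := hd 1
  have d3 := hd 3
  have d4 := hd 4
  simp only [psiMap, Fin.isValue, Matrix.cons_val] at d1 d3 d4
  obtain ⟨hA, hB, -⟩ := hc
  have nA : ¬ (p ∣ η 0 * η 1 * η 2 ∧ p ∣ η 4 * η 5 * η 6) := fun h =>
    hp.not_isUnit (hA.isUnit_of_dvd' h.1 h.2)
  have nB : ¬ (p ∣ η 2 * η 3 * η 5 ∧ p ∣ η 6 * η 7 * η 8) := fun h =>
    hp.not_isUnit (hB.isUnit_of_dvd' h.1 h.2)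
  simp only [hp.dvd_mul, hp.dvd_pow_iff_dvd (two_ne_zero), hp.dvd_pow_iff_dvd (three_ne_zero),
    hp.dvd_pow_iff_dvd (four_ne_zero)] at d1 d3 d4 nA nB
  tauto

/-- The torsor parameterization: `η ↦ ψ(η)` defines a bijection between `T₀(B)` and the
rational points of height at most `B` on the complement `U` of the lines, a point of `P⁴(ℚ)`
being identified with a primitive integral vector, unique up to sign. -/
theorem torsor_bijection (B : ℝ) (hB : 3 ≤ B) :
    (∀ η ∈ T0 B, Primitive (psiMap η) ∧ OnU (psiMap η) ∧
        ∀ j : Fin 5, (|psiMap η j| : ℝ) ≤ B) ∧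
    (∀ η₁ ∈ T0 B, ∀ η₂ ∈ T0 B,
        (psiMap η₁ = psiMap η₂ ∨ psiMap η₁ = -psiMap η₂) → η₁ = η₂) ∧
    (∀ v : Fin 5 → ℤ, Primitive v → OnU v → (∀ j : Fin 5, (|v j| : ℝ) ≤ B) →
        ∃ η ∈ T0 B, psiMap η = v ∨ psiMap η = -v) := by
  have pos1 : ∀ η ∈ T0 B, 0 < psiMap η 1 := by
    rintro η ⟨hpos, -⟩
    have p0 := hpos 0 (by decide)
    have p1 := hpos 1 (by decide)
    have p2 := hpos 2 (by decide)
    have p3 := hpos 3 (by decide)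
    have p5 := hpos 5 (by decide)
    simp only [psiMap, Fin.isValue, Matrix.cons_val]
    positivity
  refine ⟨?_, ?_, ?_⟩
  · intro η hη
    have h1 := pos1 η hη
    obtain ⟨hpos, h6, he, hH, hc⟩ := hη
    have h3 : psiMap η 3 ≠ 0 := by
      have p2 := hpos 2 (by decide)
      have p3 := hpos 3 (by decide)
      have p4 := hpos 4 (by decide)
      have p5 := hpos 5 (by decide)
      simp only [psiMap, Fin.isValue, Matrix.cons_val]
      positivity
    refine ⟨torsor_primitive hc, ⟨?_, ?_, fun h => h1.ne' h.2.1, fun h => h1.ne' h.2.1,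
      fun h => h3 h.2.2⟩, hH⟩
    · simp only [psiMap, Fin.isValue, Matrix.cons_val]
      linear_combination (η 1 * η 2 ^ 2 * η 3 ^ 2 * η 4 ^ 2 * η 5 ^ 2 * η 6 ^ 2 * η 7) * he
    · simp only [psiMap, Fin.isValue, Matrix.cons_val]
      ring
  · intro η hη θ hθ h
    rcases h with h | h
    · obtain ⟨a1, a2, a3, -, a5⟩ := hη
      obtain ⟨b1, b2, b3, -, b5⟩ := hθ
      exact torsor_unique a1 a2 b1 b2 a3 b3 a5 b5 h
    · have h1 := pos1 η hη
      have h2 := pos1 θ hθ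
      have h3 := congrFun h 1
      rw [Pi.neg_apply] at h3
      omega
  · rintro v hv ⟨e1, e2, l1, l2, l3⟩ hH
    -- a point of the surface with `x₂ = 0` lies on one of the three lines
    have hv2 : v 2 ≠ 0 := by
      intro h2
      rw [h2] at e1 e2
      have e1' : v 0 * (v 0 + v 3) = 0 := by linear_combination e1
      have e2' : v 1 * v 3 = 0 := by linear_combination e2
      rcases mul_eq_zero.1 e2' with h1 | h3
      · rcases mul_eq_zero.1 e1' with h0 | h0
        · exact l1 ⟨h0, h1, h2⟩
        · exact l2 ⟨h0, h1, h2⟩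
      · rw [h3, add_zero, mul_self_eq_zero] at e1'
        exact l3 ⟨e1', h2, h3⟩
    have hv1 : v 1 ≠ 0 := by
      intro h1
      rw [h1] at e2
      exact hv2 (pow_eq_zero_iff (two_ne_zero) |>.1 (by linear_combination -e2))
    rcases lt_or_gt_of_ne hv1 with hneg | hpos
    · have hv' : Primitive (-v) := by
        rw [primitive_iff] at hv ⊢
        simpa using hv
      obtain ⟨η, a1, a2, a3, a4, a5⟩ := exists_torsor (-v) hv'
        (by simp only [Pi.neg_apply]; linear_combination e1)
        (by simp only [Pi.neg_apply]; linear_combination e2)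
        (by simpa using hneg) (by simpa using hv2)
      exact ⟨η, ⟨a1, a2, a3, by rw [a5]; simpa using hH, a4⟩, Or.inr a5⟩
    · obtain ⟨η, a1, a2, a3, a4, a5⟩ := exists_torsor v hv e1 e2 hpos hv2
      exact ⟨η, ⟨a1, a2, a3, by rw [a5]; exact hH, a4⟩, Or.inl a5⟩
end

section
/- For B ≥ 3, define h(η₁,…,η₈;B) = B^{−1}·max{ |η₂η₃η₄η₅η₆η₇η₈|, η₁²η₂²η₃³η₄²η₆, |η₁η₂η₃²η₄²η₅²η₆²η₇|, η₃η₄²η₅⁴η₆³η₇², |η₁^{−1}(η₂η₇η₈² + η₄η₅³η₆²η₇²η₈)| }. Let R(B) = {(η₁,…,η₈) : η₁,…,η₆ ∈ [1,∞), η₇ ∈ (−∞,−1] ∪ [1,∞), η₈ ∈ ℝ, h(η;B) ≤ 1} and V₀(B) = ∫_{R(B)} η₁^{−1} dη₁⋯dη₈. Let R'(B) = {(η₁,…,η₈) : η₁,…,η₅ ∈ [1,∞), η₁²η₂²η₃³η₄² ≤ B, η₁³η₂³η₃⁴η₄²η₅^{−2} ≥ B, η₆ ∈ [0,∞), η₇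 ∈ ℝ, η₈ ∈ ℝ, h(η;B) ≤ 1} and V₀'(B) = ∫_{R'(B)} η₁^{−1} dη₁⋯dη₈. Then there is a constant K such that |V₀(B) − V₀'(B)| ≤ K·B·(log B)⁴ for all B ≥ 3. -/
/-!
Write `a, …, f, g, x` for `η₁, …, η₈`. The two regions differ only in three sets: the part of
`R(B)` with `a³b³c⁴d² < B e²` (`lintegral_diff`), and the parts of `R'(B)` with `f ≥ 1`, `|g| < 1`
(`lintegral_diff_g`) and with `f < 1` (`lintegral_diff_f`). Each contributes `O(B (log B)⁴)`.
Since `R(B)` is bounded, `1 / a` is integrable on both regions, and the difference of the two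
integrals is the difference of the integrals over `R \ R'` and `R' \ R`.

On all three sets the last term of the height confines `x` to a set of measure at most
`4 √(aB / (b|g|))` (`volume_quadratic_le`), so integrating `1 / a` over `x` gives at most
`4 (B / (ab|g|))^(1/2)`. The remaining variables are integrated in the order `g, f, e, d, c, b, a`.

* If `a³b³c⁴d² < B e²`, the term `c d² e⁴ f³ g² ≤ B` bounds `|g|`, and with `|g| ≥ 1` also
  `f ≤ (B / (c d² e⁴))^(1/3)`. The result is `≪ B^(5/6) (ab)^(-1/2) c^(-1/3) d^(-2/3) e^(-4/3)`,
  whose integral over `e > (a³b³c⁴d² / B)^(1/2)` is `≪ B / (abcd)`.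
* If `|g| ≤ 1`, the ranges `f ≤ B / (a²b²c³d²)` and `e ≤ (a³b³c⁴d² / B)^(1/2)` give
  `≪ B / (abcd)`.
* If `f < 1`, the bound for `|g|` gives `≪ B^(3/4) (ab)^(-1/2) c^(-1/4) d^(-1/2) e⁻¹`; here `e ≤ B`
  yields a logarithm, and `d ≤ (B / (a²b²c³))^(1/2)` leaves `≪ B log B / (abc)`.

The outer integrals over `[1, B]` supply the remaining logarithms. Identities and inequalities
between monomials with real exponents become linear after writing each variable as an exponential.
-/

open MeasureTheory

/-- The height function `h(η₁,…,η₈; B)` (zero-indexed), obtained from the anticanonical height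
after eliminating `η₉` via the torsor equation. -/
noncomputable def hFun (η : Fin 8 → ℝ) (B : ℝ) : ℝ :=
  B⁻¹ * max (|η 1 * η 2 * η 3 * η 4 * η 5 * η 6 * η 7|)
    (max (η 0 ^ 2 * η 1 ^ 2 * η 2 ^ 3 * η 3 ^ 2 * η 5)
      (max (|η 0 * η 1 * η 2 ^ 2 * η 3 ^ 2 * η 4 ^ 2 * η 5 ^ 2 * η 6|)
        (max (η 2 * η 3 ^ 2 * η 4 ^ 4 * η 5 ^ 3 * η 6 ^ 2)
          (|(η 0)⁻¹ * (η 1 * η 6 * η 7 ^ 2 + η 3 * η 4 ^ 3 * η 5 ^ 2 * η 6 ^ 2 * η 7)|))))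

/-- The region `R(B)`: `η₁,…,η₆ ≥ 1`, `|η₇| ≥ 1`, `η₈ ∈ ℝ` and `h(η; B) ≤ 1`. -/
def RSet (B : ℝ) : Set (Fin 8 → ℝ) :=
  {η | (∀ i : Fin 8, i.val ≤ 5 → 1 ≤ η i) ∧ 1 ≤ |η 6| ∧ hFun η B ≤ 1}

/-- The modified region `R'(B)`: `η₁,…,η₅ ≥ 1`, `η₁²η₂²η₃³η₄² ≤ B`,
`η₁³η₂³η₃⁴η₄²η₅⁻² ≥ B`, `η₆ ≥ 0`, `η₇, η₈ ∈ ℝ` and `h(η; B) ≤ 1`. -/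
def RSet' (B : ℝ) : Set (Fin 8 → ℝ) :=
  {η | (∀ i : Fin 8, i.val ≤ 4 → 1 ≤ η i) ∧
    η 0 ^ 2 * η 1 ^ 2 * η 2 ^ 3 * η 3 ^ 2 ≤ B ∧
    B ≤ η 0 ^ 3 * η 1 ^ 3 * η 2 ^ 4 * η 3 ^ 2 * (η 4 ^ 2)⁻¹ ∧
    0 ≤ η 5 ∧ hFun η B ≤ 1}

/-- `V₀(B) = ∫_{R(B)} η₁⁻¹ dη₁⋯dη₈`. -/
noncomputable def V0 (B : ℝ) : ℝ := ∫ η in RSet B, (η 0)⁻¹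

/-- `V₀'(B) = ∫_{R'(B)} η₁⁻¹ dη₁⋯dη₈`. -/
noncomputable def V0' (B : ℝ) : ℝ := ∫ η in RSet' B, (η 0)⁻¹

/-! ### Iterated integrals on `ℝ⁸` -/

/-- Tonelli, splitting off the first coordinate. -/
lemma lintegral_fin_succ {n : ℕ} {G : (Fin (n + 1) → ℝ) → ENNReal} (hG : Measurable G) :
    ∫⁻ η, G η = ∫⁻ a : ℝ, ∫⁻ t : Fin n → ℝ, G (Matrix.vecCons a t) := by
  have h := (volume_preserving_piFinSuccAbove (fun _ : Fin (n + 1) => ℝ) 0).symm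
  rw [← h.lintegral_comp hG, Measure.volume_eq_prod, lintegral_prod]
  · refine lintegral_congr fun a => lintegral_congr fun t => ?_
    congr 1
    simp [MeasurableEquiv.piFinSuccAbove, Matrix.vecCons]
    rfl
  · exact (hG.comp (MeasurableEquiv.measurable _)).aemeasurable

lemma measurable_vecCons {n : ℕ} (a : ℝ) :
    Measurable (fun t : Fin n → ℝ => (Matrix.vecCons a t : Fin (n + 1) → ℝ)) := by
  refine measurable_pi_iff.2 fun i => ?_
  refine Fin.cases ?_ (fun j => ?_) i
  · simp
  · simpa using measurable_pi_apply j

lemma lintegral_fin_eight {G : (Fin 8 → ℝ) → ENNReal} (hG : Measurable G) :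
    ∫⁻ η, G η = ∫⁻ a : ℝ, ∫⁻ b : ℝ, ∫⁻ c : ℝ, ∫⁻ d : ℝ, ∫⁻ e : ℝ, ∫⁻ f : ℝ, ∫⁻ g : ℝ,
      ∫⁻ x : ℝ, G ![a, b, c, d, e, f, g, x] := by
  rw [lintegral_fin_succ hG]
  refine lintegral_congr fun a => ?_
  have h1 := hG.comp (measurable_vecCons a)
  refine (lintegral_fin_succ h1).trans (lintegral_congr fun b => ?_)
  have h2 := h1.comp (measurable_vecCons b)
  refine (lintegral_fin_succ h2).trans (lintegral_congr fun c => ?_)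
  have h3 := h2.comp (measurable_vecCons c)
  refine (lintegral_fin_succ h3).trans (lintegral_congr fun d => ?_)
  have h4 := h3.comp (measurable_vecCons d)
  refine (lintegral_fin_succ h4).trans (lintegral_congr fun e => ?_)
  have h5 := h4.comp (measurable_vecCons e)
  refine (lintegral_fin_succ h5).trans (lintegral_congr fun f => ?_)
  have h6 := h5.comp (measurable_vecCons f)
  refine (lintegral_fin_succ h6).trans (lintegral_congr fun g => ?_)
  have h7 := h6.comp (measurable_vecCons g)
  refine (lintegral_fin_succ h7).trans (lintegral_congr fun x => ?_)
  rw [lintegral_unique]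
  have huniv : (volume : Measure (Fin 0 → ℝ)) Set.univ = 1 := by
    simp [volume_pi]
  rw [huniv, mul_one]
  simp only [Function.comp]
  congr!

lemma lintegral_le_setLIntegral {S : Set ℝ} (hS : MeasurableSet S) {F φ : ℝ → ENNReal}
    (h0 : ∀ t, t ∉ S → F t = 0) (h : ∀ t ∈ S, F t ≤ φ t) :
    ∫⁻ t, F t ≤ ∫⁻ t in S, φ t := by
  rw [← lintegral_indicator hS]
  refine lintegral_mono fun t => ?_
  by_cases ht : t ∈ S
  · simpa [ht] using h t ht
  · simp [ht, h0 t ht]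

/-- Tonelli over a region fibred over its coordinates: each coordinate is confined to a set
depending on the previous ones. -/
lemma setLIntegral_le_iterated {E : Set (Fin 8 → ℝ)} (hE : MeasurableSet E)
    {S0 : Set ℝ} {S1 : ℝ → Set ℝ} {S2 : ℝ → ℝ → Set ℝ} {S3 : ℝ → ℝ → ℝ → Set ℝ}
    {S4 : ℝ → ℝ → ℝ → ℝ → Set ℝ} {S5 : ℝ → ℝ → ℝ → ℝ → ℝ → Set ℝ}
    {S6 : ℝ → ℝ → ℝ → ℝ → ℝ → ℝ → Set ℝ} {S7 : ℝ → ℝ → ℝ → ℝ → ℝ → ℝ → ℝ → Set ℝ}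
    (h0 : MeasurableSet S0) (h1 : ∀ a, MeasurableSet (S1 a)) (h2 : ∀ a b, MeasurableSet (S2 a b))
    (h3 : ∀ a b c, MeasurableSet (S3 a b c)) (h4 : ∀ a b c d, MeasurableSet (S4 a b c d))
    (h5 : ∀ a b c d e, MeasurableSet (S5 a b c d e))
    (h6 : ∀ a b c d e f, MeasurableSet (S6 a b c d e f))
    (h7 : ∀ a b c d e f g, MeasurableSet (S7 a b c d e f g))
    (hsub : ∀ a b c d e f g x, ![a, b, c, d, e, f, g, x] ∈ E →
      a ∈ S0 ∧ b ∈ S1 a ∧ c ∈ S2 a b ∧ d ∈ S3 a b c ∧ e ∈ S4 a b c d ∧ f ∈ S5 a b c d e ∧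
      g ∈ S6 a b c d e f ∧ x ∈ S7 a b c d e f g) :
    ∫⁻ η in E, ENNReal.ofReal (η 0)⁻¹ ≤
      ∫⁻ a in S0, ∫⁻ b in S1 a, ∫⁻ c in S2 a b, ∫⁻ d in S3 a b c, ∫⁻ e in S4 a b c d,
        ∫⁻ f in S5 a b c d e, ∫⁻ g in S6 a b c d e f, ∫⁻ _x in S7 a b c d e f g,
          ENNReal.ofReal a⁻¹ := by
  have hm : Measurable (fun η : Fin 8 → ℝ => ENNReal.ofReal (η 0)⁻¹) := by fun_prop
  rw [← lintegral_indicator hE, lintegral_fin_eight (hm.indicator hE)]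
  have key : ∀ a b c d e f g x, ¬ (a ∈ S0 ∧ b ∈ S1 a ∧ c ∈ S2 a b ∧ d ∈ S3 a b c ∧
      e ∈ S4 a b c d ∧ f ∈ S5 a b c d e ∧ g ∈ S6 a b c d e f ∧ x ∈ S7 a b c d e f g) →
      E.indicator (fun η : Fin 8 → ℝ => ENNReal.ofReal (η 0)⁻¹) ![a, b, c, d, e, f, g, x] = 0 :=
    fun a b c d e f g x h => Set.indicator_of_notMem (fun hmem => h (hsub _ _ _ _ _ _ _ _ hmem)) _
  refine lintegral_le_setLIntegral h0 (fun a ha => ?_) fun a ha => ?_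
  · have hz := fun b c d e f g x => key a b c d e f g x (by tauto)
    simp only [hz, lintegral_zero]
  refine lintegral_le_setLIntegral (h1 _) (fun b hb => ?_) fun b hb => ?_
  · have hz := fun c d e f g x => key a b c d e f g x (by tauto)
    simp only [hz, lintegral_zero]
  refine lintegral_le_setLIntegral (h2 _ _) (fun c hc => ?_) fun c hc => ?_
  · have hz := fun d e f g x => key a b c d e f g x (by tauto)
    simp only [hz, lintegral_zero]
  refine lintegral_le_setLIntegral (h3 _ _ _) (fun d hd => ?_) fun d hd => ?_
  · have hz := fun e f g x => key a b c d e f g x (by tauto)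
    simp only [hz, lintegral_zero]
  refine lintegral_le_setLIntegral (h4 _ _ _ _) (fun e he => ?_) fun e he => ?_
  · have hz := fun f g x => key a b c d e f g x (by tauto)
    simp only [hz, lintegral_zero]
  refine lintegral_le_setLIntegral (h5 _ _ _ _ _) (fun f hf => ?_) fun f hf => ?_
  · have hz := fun g x => key a b c d e f g x (by tauto)
    simp only [hz, lintegral_zero]
  refine lintegral_le_setLIntegral (h6 _ _ _ _ _ _) (fun g hg => ?_) fun g hg => ?_
  · have hz := fun x => key a b c d e f g x (by tauto)
    simp only [hz, lintegral_zero]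
  refine lintegral_le_setLIntegral (h7 _ _ _ _ _ _ _) (fun x hx => ?_) fun x hx => ?_
  · exact key a b c d e f g x (by tauto)
  exact Set.indicator_le_self _ _ _

/-! ### One-dimensional integrals -/

lemma setLIntegral_le_of_le {S : Set ℝ} (hS : MeasurableSet S) {F : ℝ → ENNReal} {φ : ℝ → ℝ}
    {C : ENNReal} (h : ∀ t ∈ S, F t ≤ ENNReal.ofReal (φ t))
    (hC : ∫⁻ t in S, ENNReal.ofReal (φ t) ≤ C) : ∫⁻ t in S, F t ≤ C :=
  (setLIntegral_mono' hS h).trans hC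

lemma setLIntegral_Ioc_rpow {p k M : ℝ} (hp : -1 < p) (hk : 0 ≤ k) (hM : 0 ≤ M) :
    ∫⁻ t in Set.Ioc 0 M, ENNReal.ofReal (k * t ^ p) ≤
      ENNReal.ofReal (k * (M ^ (p + 1) / (p + 1))) := by
  rw [← ofReal_integral_eq_lintegral_ofReal, integral_const_mul,
    ← intervalIntegral.integral_of_le hM, integral_rpow (Or.inl hp),
    Real.zero_rpow (by linarith), sub_zero]
  · exact (((intervalIntegrable_iff_integrableOn_Ioc_of_le hM).1
      (intervalIntegral.intervalIntegrable_rpow' hp)).const_mul k)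
  · filter_upwards [ae_restrict_mem measurableSet_Ioc] with t ht
    have := Real.rpow_nonneg ht.1.le p
    simp only [Pi.zero_apply]; positivity

lemma setLIntegral_Ioi_rpow {p k m : ℝ} (hp : p < -1) (hk : 0 ≤ k) (hm : 0 < m) :
    ∫⁻ t in Set.Ioi m, ENNReal.ofReal (k * t ^ p) ≤
      ENNReal.ofReal (k * (-m ^ (p + 1) / (p + 1))) := by
  rw [← ofReal_integral_eq_lintegral_ofReal, integral_const_mul,
    integral_Ioi_rpow_of_lt hp hm]
  · exact (integrableOn_Ioi_rpow_of_lt hp hm).const_mul k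
  · filter_upwards [ae_restrict_mem measurableSet_Ioi] with t ht
    have := Real.rpow_nonneg (hm.trans ht).le p
    simp only [Pi.zero_apply]; positivity

lemma setLIntegral_Icc_inv {k B : ℝ} (hk : 0 ≤ k) (hB : 1 ≤ B) :
    ∫⁻ t in Set.Icc 1 B, ENNReal.ofReal (k * t⁻¹) ≤ ENNReal.ofReal (k * Real.log B) := by
  have hB0 : 0 < B := by linarith
  rw [← restrict_Ioc_eq_restrict_Icc, ← ofReal_integral_eq_lintegral_ofReal, integral_const_mul,
    ← intervalIntegral.integral_of_le hB, integral_inv_of_pos one_pos hB0, div_one]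
  · have hi : IntegrableOn (fun t : ℝ => t⁻¹) (Set.Ioc 1 B) volume := by
      rw [← intervalIntegrable_iff_integrableOn_Ioc_of_le hB, intervalIntegrable_inv_iff]
      right
      rw [Set.uIcc_of_le hB]
      intro h; linarith [h.1]
    exact hi.const_mul k
  · filter_upwards [ae_restrict_mem measurableSet_Ioc] with t ht
    have : 0 < t := one_pos.trans ht.1
    simp only [Pi.zero_apply]; positivity

lemma measurableSet_punctured (M : ℝ) : MeasurableSet {t : ℝ | 0 < |t| ∧ |t| ≤ M} := by
  measurability

lemma setLIntegral_punctured {k M : ℝ} (hk : 0 ≤ k) (hM : 0 ≤ M) :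
    ∫⁻ t in {t : ℝ | 0 < |t| ∧ |t| ≤ M}, ENNReal.ofReal (k * |t| ^ (-(1 / 2) : ℝ)) ≤
      ENNReal.ofReal (4 * k * M ^ (1 / 2 : ℝ)) := by
  have hpos : ∫⁻ t in Set.Ioc 0 M, ENNReal.ofReal (k * |t| ^ (-(1 / 2) : ℝ)) ≤
      ENNReal.ofReal (2 * k * M ^ (1 / 2 : ℝ)) := by
    refine setLIntegral_le_of_le measurableSet_Ioc (φ := fun t => k * t ^ (-(1 / 2) : ℝ))
      (fun t ht => by rw [abs_of_pos ht.1]) ?_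
    refine (setLIntegral_Ioc_rpow (by norm_num) hk hM).trans_eq ?_
    congr 1; norm_num; ring
  have hneg : ∫⁻ t in Set.Ico (-M) 0, ENNReal.ofReal (k * |t| ^ (-(1 / 2) : ℝ)) ≤
      ENNReal.ofReal (2 * k * M ^ (1 / 2 : ℝ)) := by
    refine le_trans (le_of_eq ?_) hpos
    have h := (Measure.measurePreserving_neg (volume : Measure ℝ)).setLIntegral_comp_emb
      (MeasurableEquiv.neg ℝ).measurableEmbedding
      (fun t => ENNReal.ofReal (k * |t| ^ (-(1 / 2) : ℝ))) (Set.Ico (-M) 0)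
    simpa using h
  have hsub : {t : ℝ | 0 < |t| ∧ |t| ≤ M} ⊆ Set.Ioc 0 M ∪ Set.Ico (-M) 0 := by
    rintro t ⟨h1, h2⟩
    rcases lt_or_ge 0 t with h | h
    · left; exact ⟨h, (abs_le.1 h2).2⟩
    · right; exact ⟨(abs_le.1 h2).1, lt_of_le_of_ne h (abs_pos.1 h1)⟩
  refine (lintegral_mono_set hsub).trans ((lintegral_union_le _ _ _).trans
    ((add_le_add hpos hneg).trans_eq ?_))
  rw [← ENNReal.ofReal_add (by positivity) (by positivity)]
  congr 1; ring

/-- `|p x² + q x| ≤ T` forces `|x| ≤ r` or `|x + q / p| ≤ r` where `r = √(T / |p|)`. -/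
lemma volume_quadratic_le {p q T : ℝ} (hp : p ≠ 0) (hT : 0 ≤ T) :
    volume {x : ℝ | |p * x ^ 2 + q * x| ≤ T} ≤ ENNReal.ofReal (4 * √(T / |p|)) := by
  set r := √(T / |p|) with hr
  have hr0 : 0 ≤ r := Real.sqrt_nonneg _
  have hsub : {x : ℝ | |p * x ^ 2 + q * x| ≤ T} ⊆
      Set.Icc (-r) r ∪ Set.Icc (-(q / p) - r) (-(q / p) + r) := by
    intro x hx
    have hx' : |p * x ^ 2 + q * x| ≤ T := hx
    have hp' : 0 < |p| := abs_pos.2 hp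
    have hxx : |x| * |x + q / p| ≤ r ^ 2 := by
      rw [hr, Real.sq_sqrt (by positivity), le_div_iff₀ hp', ← abs_mul, ← abs_mul]
      have hpx : x * (x + q / p) * p = p * x ^ 2 + q * x := by field_simp
      rwa [hpx]
    by_contra hcon
    rw [Set.mem_union, not_or] at hcon
    have h1 : r < |x| := by
      by_contra! h; exact hcon.1 (abs_le.1 h)
    have h2 : r < |x + q / p| := by
      by_contra! h
      have := abs_le.1 h
      exact hcon.2 ⟨by linarith, by linarith⟩
    nlinarith
  refine (measure_mono hsub).trans ((measure_union_le _ _).trans_eq ?_)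
  rw [Real.volume_Icc, Real.volume_Icc, ← ENNReal.ofReal_add (by linarith) (by linarith)]
  congr 1; ring

/-! ### Monomial inequalities -/

lemma exists_exp_eq {a : ℝ} (ha : 0 < a) : ∃ α, Real.exp α = a := ⟨Real.log a, Real.exp_log ha⟩

lemma g_le {B c d e f G : ℝ} (hB : 0 < B) (hc : 0 < c) (hd : 0 < d) (he : 0 < e) (hf : 0 < f)
    (hG : 0 < G) (h : c * d ^ 2 * e ^ 4 * f ^ 3 * G ^ 2 ≤ B) :
    G ≤ B ^ (1 / 2 : ℝ) * c ^ (-(1 / 2) : ℝ) * d ^ (-1 : ℝ) * e ^ (-2 : ℝ) *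
      f ^ (-(3 / 2) : ℝ) := by
  obtain ⟨β, rfl⟩ := exists_exp_eq hB
  obtain ⟨γ, rfl⟩ := exists_exp_eq hc
  obtain ⟨δ, rfl⟩ := exists_exp_eq hd
  obtain ⟨ε, rfl⟩ := exists_exp_eq he
  obtain ⟨φ, rfl⟩ := exists_exp_eq hf
  obtain ⟨ρ, rfl⟩ := exists_exp_eq hG
  simp only [← Real.exp_mul, ← Real.exp_nat_mul, ← Real.exp_add, Real.exp_le_exp] at h ⊢
  push_cast at h
  linarith

/-- The range of `η₆` forced by the fourth height term together with `|η₇| ≥ 1`. -/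
lemma f_le {B c d e f G : ℝ} (hB : 0 < B) (hc : 0 < c) (hd : 0 < d) (he : 0 < e) (hf : 0 < f)
    (hG : 1 ≤ G) (h : c * d ^ 2 * e ^ 4 * f ^ 3 * G ^ 2 ≤ B) :
    f ≤ B ^ (1 / 3 : ℝ) * c ^ (-(1 / 3) : ℝ) * d ^ (-(2 / 3) : ℝ) * e ^ (-(4 / 3) : ℝ) := by
  obtain ⟨β, rfl⟩ := exists_exp_eq hB
  obtain ⟨γ, rfl⟩ := exists_exp_eq hc
  obtain ⟨δ, rfl⟩ := exists_exp_eq hd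
  obtain ⟨ε, rfl⟩ := exists_exp_eq he
  obtain ⟨φ, rfl⟩ := exists_exp_eq hf
  obtain ⟨ρ, rfl⟩ := exists_exp_eq (one_pos.trans_le hG)
  rw [Real.one_le_exp_iff] at hG
  simp only [← Real.exp_mul, ← Real.exp_nat_mul, ← Real.exp_add, Real.exp_le_exp] at h ⊢
  push_cast at h
  linarith

/-- The condition cutting out `R'(B)` inside `R(B)`, solved for `η₅`. -/
lemma lt_e_iff {B a b c d e : ℝ} (hB : 0 < B) (ha : 0 < a) (hb : 0 < b) (hc : 0 < c)
    (hd : 0 < d) (he : 0 < e) :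
    B ^ (-(1 / 2) : ℝ) * a ^ (3 / 2 : ℝ) * b ^ (3 / 2 : ℝ) * c ^ (2 : ℝ) * d ^ (1 : ℝ) < e ↔
      a ^ 3 * b ^ 3 * c ^ 4 * d ^ 2 * (e ^ 2)⁻¹ < B := by
  obtain ⟨β, rfl⟩ := exists_exp_eq hB
  obtain ⟨α, rfl⟩ := exists_exp_eq ha
  obtain ⟨b, rfl⟩ := exists_exp_eq hb
  obtain ⟨γ, rfl⟩ := exists_exp_eq hc
  obtain ⟨δ, rfl⟩ := exists_exp_eq hd
  obtain ⟨ε, rfl⟩ := exists_exp_eq he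
  simp only [← Real.exp_mul, ← Real.exp_nat_mul, ← Real.exp_add, ← Real.exp_neg,
    Real.exp_lt_exp]
  push_cast
  constructor <;> intro h <;> linarith

lemma f_le' {B a b c d f : ℝ} (hB : 0 < B) (ha : 0 < a) (hb : 0 < b) (hc : 0 < c)
    (hd : 0 < d) (hf : 0 < f) (h : a ^ 2 * b ^ 2 * c ^ 3 * d ^ 2 * f ≤ B) :
    f ≤ B ^ (1 : ℝ) * a ^ (-2 : ℝ) * b ^ (-2 : ℝ) * c ^ (-3 : ℝ) * d ^ (-2 : ℝ) := by
  obtain ⟨β, rfl⟩ := exists_exp_eq hB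
  obtain ⟨α, rfl⟩ := exists_exp_eq ha
  obtain ⟨b, rfl⟩ := exists_exp_eq hb
  obtain ⟨γ, rfl⟩ := exists_exp_eq hc
  obtain ⟨δ, rfl⟩ := exists_exp_eq hd
  obtain ⟨φ, rfl⟩ := exists_exp_eq hf
  simp only [← Real.exp_mul, ← Real.exp_nat_mul, ← Real.exp_add, Real.exp_le_exp] at h ⊢
  push_cast at h
  linarith

lemma d_le {B a b c d : ℝ} (hB : 0 < B) (ha : 0 < a) (hb : 0 < b) (hc : 0 < c)
    (hd : 0 < d) (h : a ^ 2 * b ^ 2 * c ^ 3 * d ^ 2 ≤ B) :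
    d ≤ B ^ (1 / 2 : ℝ) * a ^ (-1 : ℝ) * b ^ (-1 : ℝ) * c ^ (-(3 / 2) : ℝ) := by
  obtain ⟨β, rfl⟩ := exists_exp_eq hB
  obtain ⟨α, rfl⟩ := exists_exp_eq ha
  obtain ⟨b, rfl⟩ := exists_exp_eq hb
  obtain ⟨γ, rfl⟩ := exists_exp_eq hc
  obtain ⟨δ, rfl⟩ := exists_exp_eq hd
  simp only [← Real.exp_mul, ← Real.exp_nat_mul, ← Real.exp_add, Real.exp_le_exp] at h ⊢
  push_cast at h
  linarith

lemma abcd_le {B a b c d : ℝ} (hB : 0 < B) (ha : 1 ≤ a) (hb : 1 ≤ b) (hc : 1 ≤ c) (hd : 1 ≤ d)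
    (h : a ^ 2 * b ^ 2 * c ^ 3 * d ^ 2 ≤ B) : a ≤ B ∧ b ≤ B ∧ c ≤ B ∧ d ≤ B := by
  obtain ⟨β, rfl⟩ := exists_exp_eq hB
  obtain ⟨α, rfl⟩ := exists_exp_eq (one_pos.trans_le ha)
  obtain ⟨b, rfl⟩ := exists_exp_eq (one_pos.trans_le hb)
  obtain ⟨γ, rfl⟩ := exists_exp_eq (one_pos.trans_le hc)
  obtain ⟨δ, rfl⟩ := exists_exp_eq (one_pos.trans_le hd)
  rw [Real.one_le_exp_iff] at ha hb hc hd
  simp only [← Real.exp_nat_mul, ← Real.exp_add, Real.exp_le_exp] at h ⊢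
  push_cast at h
  refine ⟨?_, ?_, ?_, ?_⟩ <;> linarith

/-- Holds because `e² ≤ a³b³c⁴d² / B ≤ (a²b²c³d²)² / B ≤ B`. -/
lemma e_le {B a b c d e : ℝ} (hB : 0 < B) (ha : 1 ≤ a) (hb : 1 ≤ b) (hc : 1 ≤ c) (hd : 1 ≤ d)
    (he : 1 ≤ e) (h : a ^ 2 * b ^ 2 * c ^ 3 * d ^ 2 ≤ B)
    (h' : B ≤ a ^ 3 * b ^ 3 * c ^ 4 * d ^ 2 * (e ^ 2)⁻¹) : e ≤ B := by
  obtain ⟨β, rfl⟩ := exists_exp_eq hB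
  obtain ⟨α, rfl⟩ := exists_exp_eq (one_pos.trans_le ha)
  obtain ⟨b, rfl⟩ := exists_exp_eq (one_pos.trans_le hb)
  obtain ⟨γ, rfl⟩ := exists_exp_eq (one_pos.trans_le hc)
  obtain ⟨δ, rfl⟩ := exists_exp_eq (one_pos.trans_le hd)
  obtain ⟨ε, rfl⟩ := exists_exp_eq (one_pos.trans_le he)
  rw [Real.one_le_exp_iff] at ha hb hc hd
  simp only [← Real.exp_nat_mul, ← Real.exp_add, ← Real.exp_neg, Real.exp_le_exp] at h h' ⊢
  push_cast at h h'
  linarith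

lemma efg_le {B c d e f G : ℝ} (hB : 0 < B) (hc : 1 ≤ c) (hd : 1 ≤ d) (he : 1 ≤ e) (hf : 1 ≤ f)
    (hG : 1 ≤ G) (h : c * d ^ 2 * e ^ 4 * f ^ 3 * G ^ 2 ≤ B) : e ≤ B ∧ f ≤ B ∧ G ≤ B := by
  obtain ⟨β, rfl⟩ := exists_exp_eq hB
  obtain ⟨γ, rfl⟩ := exists_exp_eq (one_pos.trans_le hc)
  obtain ⟨δ, rfl⟩ := exists_exp_eq (one_pos.trans_le hd)
  obtain ⟨ε, rfl⟩ := exists_exp_eq (one_pos.trans_le he)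
  obtain ⟨φ, rfl⟩ := exists_exp_eq (one_pos.trans_le hf)
  obtain ⟨ρ, rfl⟩ := exists_exp_eq (one_pos.trans_le hG)
  rw [Real.one_le_exp_iff] at hc hd he hf hG
  simp only [← Real.exp_nat_mul, ← Real.exp_add, Real.exp_le_exp] at h ⊢
  push_cast at h
  refine ⟨?_, ?_, ?_⟩ <;> linarith

/-! ### Inner and outer integrals -/

/-- The range of `η₈` permitted by the last term of the height. -/
def xSet (B a b d e f g : ℝ) : Set ℝ :=
  {x | |b * g * x ^ 2 + d * e ^ 3 * f ^ 2 * g ^ 2 * x| ≤ a * B}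

lemma measurableSet_xSet (B a b d e f g : ℝ) : MeasurableSet (xSet B a b d e f g) :=
  measurableSet_le (by fun_prop) measurable_const

/-- Integration over `η₈`. -/
lemma lintegral_x {B a b d e f g : ℝ} (hB : 0 < B) (ha : 0 < a) (hb : 0 < b) (hg : 0 < |g|) :
    ∫⁻ _x in xSet B a b d e f g, ENNReal.ofReal a⁻¹ ≤ ENNReal.ofReal
      (4 * (B ^ (1 / 2 : ℝ) * a ^ (-(1 / 2) : ℝ) * b ^ (-(1 / 2) : ℝ)) * |g| ^ (-(1 / 2) : ℝ)) := by
  rw [setLIntegral_const]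
  refine (mul_le_mul_right (volume_quadratic_le (p := b * g) (q := d * e ^ 3 * f ^ 2 * g ^ 2)
    (mul_ne_zero hb.ne' (abs_pos.1 hg)) (by positivity)) _).trans_eq ?_
  rw [← ENNReal.ofReal_mul (by positivity)]
  congr 1
  rw [abs_mul, abs_of_pos hb, Real.sqrt_eq_rpow]
  generalize |g| = G at hg
  have key : a⁻¹ * (a * B / (b * G)) ^ (1 / 2 : ℝ) = B ^ (1 / 2 : ℝ) * a ^ (-(1 / 2) : ℝ) *
      b ^ (-(1 / 2) : ℝ) * G ^ (-(1 / 2) : ℝ) := by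
    obtain ⟨β, rfl⟩ := exists_exp_eq hB
    obtain ⟨α, rfl⟩ := exists_exp_eq ha
    obtain ⟨b, rfl⟩ := exists_exp_eq hb
    obtain ⟨ρ, rfl⟩ := exists_exp_eq hg
    simp only [← Real.exp_mul, ← Real.exp_add, ← Real.exp_sub, ← Real.exp_neg]
    congr 1; ring
  linear_combination 4 * key

/-- Integration over `η₇, η₈` when `0 < |η₇| ≤ M`. -/
lemma lintegral_gx {B a b d e f M : ℝ} (hB : 0 < B) (ha : 0 < a) (hb : 0 < b) (hM : 0 ≤ M) :
    ∫⁻ g in {g : ℝ | 0 < |g| ∧ |g| ≤ M}, ∫⁻ _x in xSet B a b d e f g, ENNReal.ofReal a⁻¹ ≤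
      ENNReal.ofReal (16 * (B ^ (1 / 2 : ℝ) * a ^ (-(1 / 2) : ℝ) * b ^ (-(1 / 2) : ℝ)) *
        M ^ (1 / 2 : ℝ)) := by
  refine setLIntegral_le_of_le (measurableSet_punctured M)
    (fun g hg => lintegral_x hB ha hb hg.1) ?_
  refine (setLIntegral_punctured (by positivity) hM).trans_eq ?_
  congr 1; ring

/-- The upper bound for `|η₇|` from the fourth term of the height. -/
noncomputable def gMax (B c d e f : ℝ) : ℝ :=
  B ^ (1 / 2 : ℝ) * c ^ (-(1 / 2) : ℝ) * d ^ (-1 : ℝ) * e ^ (-2 : ℝ) * f ^ (-(3 / 2) : ℝ)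

/-- Integration over `η₆, η₇, η₈` when `η₆ ≤ N` and `|η₇|` runs up to `gMax`. -/
lemma lintegral_fgx {B a b c d e N : ℝ} (hB : 0 < B) (ha : 0 < a) (hb : 0 < b) (hc : 0 < c)
    (hd : 0 < d) (he : 0 < e) (hN : 0 ≤ N) :
    ∫⁻ f in Set.Ioc 0 N, ∫⁻ g in {g : ℝ | 0 < |g| ∧ |g| ≤ gMax B c d e f},
      ∫⁻ _x in xSet B a b d e f g, ENNReal.ofReal a⁻¹ ≤
      ENNReal.ofReal (64 * (B ^ (3 / 4 : ℝ) * a ^ (-(1 / 2) : ℝ) * b ^ (-(1 / 2) : ℝ) *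
        c ^ (-(1 / 4) : ℝ) * d ^ (-(1 / 2) : ℝ) * e⁻¹) * N ^ (1 / 4 : ℝ)) := by
  refine setLIntegral_le_of_le measurableSet_Ioc (φ := fun f =>
    16 * (B ^ (3 / 4 : ℝ) * a ^ (-(1 / 2) : ℝ) * b ^ (-(1 / 2) : ℝ) *
        c ^ (-(1 / 4) : ℝ) * d ^ (-(1 / 2) : ℝ) * e⁻¹) * f ^ (-(3 / 4) : ℝ)) (fun f hf => ?_) ?_
  · have hf : 0 < f := hf.1
    refine (lintegral_gx hB ha hb (by unfold gMax; positivity)).trans_eq ?_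
    congr 1
    rw [mul_assoc (16 : ℝ), mul_assoc (16 : ℝ)]
    congr 1
    unfold gMax
    obtain ⟨β, rfl⟩ := exists_exp_eq hB
    obtain ⟨α, rfl⟩ := exists_exp_eq ha
    obtain ⟨b, rfl⟩ := exists_exp_eq hb
    obtain ⟨γ, rfl⟩ := exists_exp_eq hc
    obtain ⟨δ, rfl⟩ := exists_exp_eq hd
    obtain ⟨ε, rfl⟩ := exists_exp_eq he
    obtain ⟨φ, rfl⟩ := exists_exp_eq hf
    simp only [← Real.exp_mul, ← Real.exp_add, ← Real.exp_neg]
    congr 1; ring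
  · refine (setLIntegral_Ioc_rpow (by norm_num) (by positivity) hN).trans_eq ?_
    congr 1
    norm_num
    ring

/-- Integration over the three outer variables, confined to `[1, B]`, with weight `1 / (abc)`. -/
lemma lintegral_abc {B k : ℝ} (hB : 1 ≤ B) (hk : 0 ≤ k) {F : ℝ → ℝ → ℝ → ENNReal}
    (hF : ∀ a b c, 1 ≤ a → 1 ≤ b → 1 ≤ c → F a b c ≤ ENNReal.ofReal (k * a⁻¹ * b⁻¹ * c⁻¹)) :
    ∫⁻ a in Set.Icc 1 B, ∫⁻ b in Set.Icc 1 B, ∫⁻ c in Set.Icc 1 B, F a b c ≤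
      ENNReal.ofReal (k * Real.log B ^ 3) := by
  have hL : 0 ≤ Real.log B := Real.log_nonneg hB
  refine setLIntegral_le_of_le measurableSet_Icc
    (φ := fun a => k * Real.log B ^ 2 * a⁻¹) (fun a ha => ?_) ?_
  · have ha0 : 0 < a := one_pos.trans_le ha.1
    refine setLIntegral_le_of_le measurableSet_Icc
      (φ := fun b => k * Real.log B * a⁻¹ * b⁻¹) (fun b hb => ?_) ?_
    · have hb0 : 0 < b := one_pos.trans_le hb.1
      refine setLIntegral_le_of_le measurableSet_Icc (fun c hc => hF a b c ha.1 hb.1 hc.1) ?_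
      refine (setLIntegral_Icc_inv (by positivity) hB).trans_eq ?_
      congr 1; ring
    · refine (setLIntegral_Icc_inv (by positivity) hB).trans_eq ?_
      congr 1; ring
  · refine (setLIntegral_Icc_inv (by positivity) hB).trans_eq ?_
    congr 1; ring

/-! ### Membership in the regions and measurability -/

/-- The height conditions used in the estimates; the third term of the height is not needed. -/
lemma hFun_le_one {B a b c d e f g x : ℝ} (hB : 0 < B) (ha : 0 < a)
    (h : hFun ![a, b, c, d, e, f, g, x] B ≤ 1) :
    |b * c * d * e * f * g * x| ≤ B ∧ a ^ 2 * b ^ 2 * c ^ 3 * d ^ 2 * f ≤ B ∧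
      c * d ^ 2 * e ^ 4 * f ^ 3 * |g| ^ 2 ≤ B ∧ x ∈ xSet B a b d e f g := by
  unfold hFun at h
  rw [inv_mul_le_iff₀ hB, mul_one] at h
  simp only [max_le_iff] at h
  obtain ⟨h1, h2, -, h4, h5⟩ := h
  refine ⟨h1, h2, ?_, ?_⟩
  · rw [sq_abs]; exact h4
  · replace h5 : |a⁻¹ * (b * g * x ^ 2 + d * e ^ 3 * f ^ 2 * g ^ 2 * x)| ≤ B := h5
    rwa [abs_mul, abs_of_pos (inv_pos.2 ha), inv_mul_le_iff₀ ha] at h5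

lemma measurable_hFun (B : ℝ) : Measurable (fun η : Fin 8 → ℝ => hFun η B) := by
  unfold hFun
  simp only [← Real.norm_eq_abs]
  fun_prop

lemma measurableSet_one_le (k : ℕ) :
    MeasurableSet {η : Fin 8 → ℝ | ∀ i : Fin 8, i.val ≤ k → 1 ≤ η i} := by
  simp only [Set.ofPred_forall]
  exact MeasurableSet.iInter fun i => MeasurableSet.iInter fun _ =>
    measurableSet_le measurable_const (by fun_prop)

lemma measurableSet_RSet (B : ℝ) : MeasurableSet (RSet B) := by
  have h2 : MeasurableSet {η : Fin 8 → ℝ | 1 ≤ |η 6|} := by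
    simp only [← Real.norm_eq_abs]
    exact measurableSet_le measurable_const (by fun_prop)
  have h3 : MeasurableSet {η : Fin 8 → ℝ | hFun η B ≤ 1} :=
    measurableSet_le (measurable_hFun B) measurable_const
  exact (measurableSet_one_le 5).inter (h2.inter h3)

lemma measurableSet_RSet' (B : ℝ) : MeasurableSet (RSet' B) := by
  have h2 : MeasurableSet {η : Fin 8 → ℝ | η 0 ^ 2 * η 1 ^ 2 * η 2 ^ 3 * η 3 ^ 2 ≤ B} :=
    measurableSet_le (by fun_prop) measurable_const
  have h3 : MeasurableSet
      {η : Fin 8 → ℝ | B ≤ η 0 ^ 3 * η 1 ^ 3 * η 2 ^ 4 * η 3 ^ 2 * (η 4 ^ 2)⁻¹} :=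
    measurableSet_le measurable_const (by fun_prop)
  have h4 : MeasurableSet {η : Fin 8 → ℝ | 0 ≤ η 5} :=
    measurableSet_le measurable_const (by fun_prop)
  have h5 : MeasurableSet {η : Fin 8 → ℝ | hFun η B ≤ 1} :=
    measurableSet_le (measurable_hFun B) measurable_const
  exact (measurableSet_one_le 4).inter (h2.inter (h3.inter (h4.inter h5)))

lemma mem_RSet {B a b c d e f g x : ℝ} (hB : 0 < B) (h : ![a, b, c, d, e, f, g, x] ∈ RSet B) :
    (1 ≤ a ∧ 1 ≤ b ∧ 1 ≤ c ∧ 1 ≤ d ∧ 1 ≤ e ∧ 1 ≤ f ∧ 1 ≤ |g|) ∧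
      |b * c * d * e * f * g * x| ≤ B ∧ a ^ 2 * b ^ 2 * c ^ 3 * d ^ 2 * f ≤ B ∧
      c * d ^ 2 * e ^ 4 * f ^ 3 * |g| ^ 2 ≤ B ∧ x ∈ xSet B a b d e f g := by
  obtain ⟨h1, h2, h3⟩ := h
  have ha : 1 ≤ a := h1 0 (by decide)
  exact ⟨⟨ha, h1 1 (by decide), h1 2 (by decide), h1 3 (by decide), h1 4 (by decide),
    h1 5 (by decide), h2⟩, hFun_le_one hB (by linarith) h3⟩

lemma mem_RSet' {B a b c d e f g x : ℝ} (hB : 0 < B) (h : ![a, b, c, d, e, f, g, x] ∈ RSet' B) :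
    (1 ≤ a ∧ 1 ≤ b ∧ 1 ≤ c ∧ 1 ≤ d ∧ 1 ≤ e ∧ 0 ≤ f) ∧
      a ^ 2 * b ^ 2 * c ^ 3 * d ^ 2 ≤ B ∧ B ≤ a ^ 3 * b ^ 3 * c ^ 4 * d ^ 2 * (e ^ 2)⁻¹ ∧
      a ^ 2 * b ^ 2 * c ^ 3 * d ^ 2 * f ≤ B ∧
      c * d ^ 2 * e ^ 4 * f ^ 3 * |g| ^ 2 ≤ B ∧ x ∈ xSet B a b d e f g := by
  obtain ⟨h1, h2, h3, h4, h5⟩ := h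
  have ha : 1 ≤ a := h1 0 (by decide)
  exact ⟨⟨ha, h1 1 (by decide), h1 2 (by decide), h1 3 (by decide), h1 4 (by decide), h4⟩,
    h2, h3, (hFun_le_one hB (by linarith) h5).2⟩

lemma abcd_le_of_f {B a b c d f : ℝ} (hf : 1 ≤ f)
    (h : a ^ 2 * b ^ 2 * c ^ 3 * d ^ 2 * f ≤ B) (hc : 0 ≤ c) :
    a ^ 2 * b ^ 2 * c ^ 3 * d ^ 2 ≤ B :=
  (le_mul_of_one_le_right (by positivity) hf).trans h

/-! ### The three error regions -/

/-- The part of `R(B)` where `η₁³η₂³η₃⁴η₄²η₅⁻² < B` is negligible. -/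
lemma lintegral_diff {B : ℝ} (hB : 3 ≤ B) :
    ∫⁻ η in RSet B \ RSet' B, ENNReal.ofReal (η 0)⁻¹ ≤
      ENNReal.ofReal (192 * B * Real.log B ^ 4) := by
  have hB0 : 0 < B := by linarith
  have hB1 : 1 ≤ B := by linarith
  have hL : 0 ≤ Real.log B := Real.log_nonneg hB1
  refine (setLIntegral_le_iterated ((measurableSet_RSet B).diff (measurableSet_RSet' B))
    (S0 := Set.Icc 1 B) (S1 := fun _ => Set.Icc 1 B) (S2 := fun _ _ => Set.Icc 1 B)
    (S3 := fun _ _ _ => Set.Icc 1 B)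
    (S4 := fun a b c d => Set.Ioi
      (B ^ (-(1 / 2) : ℝ) * a ^ (3 / 2 : ℝ) * b ^ (3 / 2 : ℝ) * c ^ (2 : ℝ) * d ^ (1 : ℝ)))
    (S5 := fun a b c d e => Set.Ioc 0
      (B ^ (1 / 3 : ℝ) * c ^ (-(1 / 3) : ℝ) * d ^ (-(2 / 3) : ℝ) * e ^ (-(4 / 3) : ℝ)))
    (S6 := fun a b c d e f => {g : ℝ | 0 < |g| ∧ |g| ≤ gMax B c d e f})
    (S7 := fun a b c d e f g => xSet B a b d e f g)
    measurableSet_Icc (fun _ => measurableSet_Icc) (fun _ _ => measurableSet_Icc)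
    (fun _ _ _ => measurableSet_Icc) (fun _ _ _ _ => measurableSet_Ioi)
    (fun _ _ _ _ _ => measurableSet_Ioc) (fun _ _ _ _ _ _ => measurableSet_punctured _)
    (fun _ _ _ _ _ _ _ => measurableSet_xSet _ _ _ _ _ _ _) ?_).trans ?_
  · rintro a b c d e f g x ⟨hR, hR'⟩
    obtain ⟨⟨ha, hb, hc, hd, he, hf, hg⟩, -, h2, h4, h5⟩ := mem_RSet hB0 hR
    have h2' := abcd_le_of_f hf h2 (by linarith)
    obtain ⟨haB, hbB, hcB, hdB⟩ := abcd_le hB0 ha hb hc hd h2'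
    have hlt : a ^ 3 * b ^ 3 * c ^ 4 * d ^ 2 * (e ^ 2)⁻¹ < B := by
      by_contra! hcon
      exact hR' ⟨fun i hi => hR.1 i (by omega), h2', hcon, zero_le_one.trans hf, hR.2.2⟩
    exact ⟨⟨ha, haB⟩, ⟨hb, hbB⟩, ⟨hc, hcB⟩, ⟨hd, hdB⟩,
      (lt_e_iff hB0 (by linarith) (by linarith) (by linarith) (by linarith) (by linarith)).2 hlt,
      ⟨by linarith, f_le hB0 (by linarith) (by linarith) (by linarith) (by linarith) hg h4⟩,
      ⟨by linarith, g_le hB0 (by linarith) (by linarith) (by linarith) (by linarith)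
        (by linarith) h4⟩, h5⟩
  · refine (lintegral_abc hB1 (k := 192 * B * Real.log B) (by positivity)
      fun a b c ha hb hc => ?_).trans_eq (by congr 1; ring)
    have ha0 : 0 < a := one_pos.trans_le ha
    have hb0 : 0 < b := one_pos.trans_le hb
    have hc0 : 0 < c := one_pos.trans_le hc
    refine setLIntegral_le_of_le measurableSet_Icc
      (φ := fun d => 192 * B * a⁻¹ * b⁻¹ * c⁻¹ * d⁻¹) (fun d hd => ?_)
      ((setLIntegral_Icc_inv (by positivity) hB1).trans_eq (by congr 1; ring))
    have hd0 : 0 < d := one_pos.trans_le hd.1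
    refine setLIntegral_le_of_le measurableSet_Ioi
      (φ := fun e => 64 * (B ^ (5 / 6 : ℝ) * a ^ (-(1 / 2) : ℝ) * b ^ (-(1 / 2) : ℝ) *
        c ^ (-(1 / 3) : ℝ) * d ^ (-(2 / 3) : ℝ)) * e ^ (-(4 / 3) : ℝ)) (fun e he => ?_) ?_
    · have he0 : 0 < e := lt_trans (by positivity) he
      refine (lintegral_fgx hB0 ha0 hb0 hc0 hd0 he0 (by positivity)).trans_eq ?_
      congr 1
      rw [mul_assoc (64 : ℝ), mul_assoc (64 : ℝ)]
      congr 1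
      obtain ⟨β, rfl⟩ := exists_exp_eq hB0
      obtain ⟨α, rfl⟩ := exists_exp_eq ha0
      obtain ⟨b, rfl⟩ := exists_exp_eq hb0
      obtain ⟨γ, rfl⟩ := exists_exp_eq hc0
      obtain ⟨δ, rfl⟩ := exists_exp_eq hd0
      obtain ⟨ε, rfl⟩ := exists_exp_eq he0
      simp only [← Real.exp_mul, ← Real.exp_add, ← Real.exp_neg]
      congr 1; ring
    · refine (setLIntegral_Ioi_rpow (by norm_num) (by positivity) (by positivity)).trans_eq ?_
      congr 1
      have key : (B ^ (5 / 6 : ℝ) * a ^ (-(1 / 2) : ℝ) * b ^ (-(1 / 2) : ℝ) *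
          c ^ (-(1 / 3) : ℝ) * d ^ (-(2 / 3) : ℝ)) * (B ^ (-(1 / 2) : ℝ) * a ^ (3 / 2 : ℝ) *
          b ^ (3 / 2 : ℝ) * c ^ (2 : ℝ) * d ^ (1 : ℝ)) ^ (-(4 / 3) + 1 : ℝ) =
          B * a⁻¹ * b⁻¹ * c⁻¹ * d⁻¹ := by
        obtain ⟨β, rfl⟩ := exists_exp_eq hB0
        obtain ⟨α, rfl⟩ := exists_exp_eq ha0
        obtain ⟨b, rfl⟩ := exists_exp_eq hb0
        obtain ⟨γ, rfl⟩ := exists_exp_eq hc0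
        obtain ⟨δ, rfl⟩ := exists_exp_eq hd0
        simp only [← Real.exp_mul, ← Real.exp_add, ← Real.exp_neg]
        congr 1; ring
      linear_combination 192 * key

lemma ae_ne_zero (i : Fin 8) : ∀ᵐ η : Fin 8 → ℝ, η i ≠ 0 := by
  have h : volume {η : Fin 8 → ℝ | η i = 0} = 0 :=
    Measure.pi_hyperplane (fun _ : Fin 8 => (volume : Measure ℝ)) i 0
  simpa [ae_iff] using h

/-- The part of `R'(B)` where `η₆ ≥ 1` and `|η₇| < 1` is negligible. -/
lemma lintegral_diff_g {B : ℝ} (hB : 3 ≤ B) :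
    ∫⁻ η in (RSet' B \ RSet B) ∩ {η | 1 ≤ η 5}, ENNReal.ofReal (η 0)⁻¹ ≤
      ENNReal.ofReal (16 * B * Real.log B ^ 4) := by
  have hB0 : 0 < B := by linarith
  have hB1 : 1 ≤ B := by linarith
  have hL : 0 ≤ Real.log B := Real.log_nonneg hB1
  have hmeas : MeasurableSet ((RSet' B \ RSet B) ∩ {η | 1 ≤ η 5}) :=
    ((measurableSet_RSet' B).diff (measurableSet_RSet B)).inter
      (measurableSet_le measurable_const (by fun_prop))
  have hmeas6 : MeasurableSet {η : Fin 8 → ℝ | η 6 ≠ 0} :=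
    (measurableSet_singleton (0 : ℝ)).compl.preimage (measurable_pi_apply 6)
  -- The hyperplane `η₇ = 0` is removed: there the range of `η₈` is unbounded.
  have hae : ((RSet' B \ RSet B) ∩ {η | 1 ≤ η 5} : Set (Fin 8 → ℝ)) ≤ᵐ[volume]
      (((RSet' B \ RSet B) ∩ {η | 1 ≤ η 5}) ∩ {η | η 6 ≠ 0} : Set (Fin 8 → ℝ)) := by
    filter_upwards [ae_ne_zero 6] with η h6 hη using ⟨hη, h6⟩
  refine (lintegral_mono_set' hae).trans ((setLIntegral_le_iterated (hmeas.inter hmeas6)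
    (S0 := Set.Icc 1 B) (S1 := fun _ => Set.Icc 1 B) (S2 := fun _ _ => Set.Icc 1 B)
    (S3 := fun _ _ _ => Set.Icc 1 B)
    (S4 := fun a b c d => Set.Ioc 0
      (B ^ (-(1 / 2) : ℝ) * a ^ (3 / 2 : ℝ) * b ^ (3 / 2 : ℝ) * c ^ (2 : ℝ) * d ^ (1 : ℝ)))
    (S5 := fun a b c d e => Set.Ioc 0
      (B ^ (1 : ℝ) * a ^ (-2 : ℝ) * b ^ (-2 : ℝ) * c ^ (-3 : ℝ) * d ^ (-2 : ℝ)))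
    (S6 := fun a b c d e f => {g : ℝ | 0 < |g| ∧ |g| ≤ 1})
    (S7 := fun a b c d e f g => xSet B a b d e f g)
    measurableSet_Icc (fun _ => measurableSet_Icc) (fun _ _ => measurableSet_Icc)
    (fun _ _ _ => measurableSet_Icc) (fun _ _ _ _ => measurableSet_Ioc)
    (fun _ _ _ _ _ => measurableSet_Ioc) (fun _ _ _ _ _ _ => measurableSet_punctured _)
    (fun _ _ _ _ _ _ _ => measurableSet_xSet _ _ _ _ _ _ _) ?_).trans ?_)
  · rintro a b c d e f g x ⟨⟨⟨hR', hR⟩, hf⟩, hg⟩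
    replace hf : 1 ≤ f := hf
    replace hg : g ≠ 0 := hg
    obtain ⟨⟨ha, hb, hc, hd, he, -⟩, h2', h3, h2, h4, h5⟩ := mem_RSet' hB0 hR'
    obtain ⟨haB, hbB, hcB, hdB⟩ := abcd_le hB0 ha hb hc hd h2'
    have hg1 : |g| ≤ 1 := by
      by_contra! hcon
      refine hR ⟨fun i hi => ?_, hcon.le, hR'.2.2.2.2⟩
      rcases eq_or_ne i 5 with rfl | h5
      · exact hf
      · exact hR'.1 i (by omega)
    exact ⟨⟨ha, haB⟩, ⟨hb, hbB⟩, ⟨hc, hcB⟩, ⟨hd, hdB⟩,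
      ⟨by linarith, not_lt.1 fun hlt => absurd ((lt_e_iff hB0 (by linarith) (by linarith)
        (by linarith) (by linarith) (by linarith)).1 hlt) (not_lt.2 h3)⟩,
      ⟨by linarith, f_le' hB0 (by linarith) (by linarith) (by linarith) (by linarith)
        (by linarith) h2⟩,
      ⟨abs_pos.2 hg, hg1⟩, h5⟩
  · refine (lintegral_abc hB1 (k := 16 * B * Real.log B) (by positivity)
      fun a b c ha hb hc => ?_).trans_eq (by congr 1; ring)
    have ha0 : 0 < a := one_pos.trans_le ha
    have hb0 : 0 < b := one_pos.trans_le hb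
    have hc0 : 0 < c := one_pos.trans_le hc
    refine setLIntegral_le_of_le measurableSet_Icc
      (φ := fun d => 16 * B * a⁻¹ * b⁻¹ * c⁻¹ * d⁻¹) (fun d hd => ?_)
      ((setLIntegral_Icc_inv (by positivity) hB1).trans_eq (by congr 1; ring))
    have hd0 : 0 < d := one_pos.trans_le hd.1
    have inner : ∀ e, ∫⁻ f in Set.Ioc 0
        (B ^ (1 : ℝ) * a ^ (-2 : ℝ) * b ^ (-2 : ℝ) * c ^ (-3 : ℝ) * d ^ (-2 : ℝ)),
        ∫⁻ g in {g : ℝ | 0 < |g| ∧ |g| ≤ 1}, ∫⁻ _x in xSet B a b d e f g, ENNReal.ofReal a⁻¹ ≤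
        ENNReal.ofReal (16 * (B ^ (1 / 2 : ℝ) * a ^ (-(1 / 2) : ℝ) * b ^ (-(1 / 2) : ℝ)) *
        (B ^ (1 : ℝ) * a ^ (-2 : ℝ) * b ^ (-2 : ℝ) * c ^ (-3 : ℝ) * d ^ (-2 : ℝ))) := by
      intro e
      refine setLIntegral_le_of_le measurableSet_Ioc
        (fun f _ => lintegral_gx hB0 ha0 hb0 zero_le_one) ?_
      rw [setLIntegral_const, Real.volume_Ioc, ← ENNReal.ofReal_mul (by positivity),
        Real.one_rpow, mul_one, sub_zero]
    refine setLIntegral_le_of_le measurableSet_Ioc (fun e _ => inner e) ?_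
    rw [setLIntegral_const, Real.volume_Ioc, ← ENNReal.ofReal_mul (by positivity), sub_zero]
    apply le_of_eq
    congr 1
    have key : (B ^ (1 / 2 : ℝ) * a ^ (-(1 / 2) : ℝ) * b ^ (-(1 / 2) : ℝ)) *
        (B ^ (1 : ℝ) * a ^ (-2 : ℝ) * b ^ (-2 : ℝ) * c ^ (-3 : ℝ) * d ^ (-2 : ℝ)) *
        (B ^ (-(1 / 2) : ℝ) * a ^ (3 / 2 : ℝ) * b ^ (3 / 2 : ℝ) * c ^ (2 : ℝ) * d ^ (1 : ℝ)) =
        B * a⁻¹ * b⁻¹ * c⁻¹ * d⁻¹ := by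
      obtain ⟨β, rfl⟩ := exists_exp_eq hB0
      obtain ⟨α, rfl⟩ := exists_exp_eq ha0
      obtain ⟨b, rfl⟩ := exists_exp_eq hb0
      obtain ⟨γ, rfl⟩ := exists_exp_eq hc0
      obtain ⟨δ, rfl⟩ := exists_exp_eq hd0
      simp only [← Real.exp_mul, ← Real.exp_add, ← Real.exp_neg]
      congr 1; ring
    linear_combination 16 * key

/-- The part of `R'(B)` where `η₆ < 1` is negligible. -/
lemma lintegral_diff_f {B : ℝ} (hB : 3 ≤ B) :
    ∫⁻ η in (RSet' B \ RSet B) ∩ {η | η 5 < 1}, ENNReal.ofReal (η 0)⁻¹ ≤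
      ENNReal.ofReal (128 * B * Real.log B ^ 4) := by
  have hB0 : 0 < B := by linarith
  have hB1 : 1 ≤ B := by linarith
  have hL : 0 ≤ Real.log B := Real.log_nonneg hB1
  have hmeas : MeasurableSet ((RSet' B \ RSet B) ∩ {η | η 5 < 1}) :=
    ((measurableSet_RSet' B).diff (measurableSet_RSet B)).inter
      (measurableSet_lt (by fun_prop) measurable_const)
  have hmeas' : ∀ i, MeasurableSet {η : Fin 8 → ℝ | η i ≠ 0} := fun i =>
    (measurableSet_singleton (0 : ℝ)).compl.preimage (measurable_pi_apply i)
  -- The hyperplanes `η₆ = 0` and `η₇ = 0` are removed: the bounds for `η₇` and `η₈` fail there.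
  have hae : ((RSet' B \ RSet B) ∩ {η | η 5 < 1} : Set (Fin 8 → ℝ)) ≤ᵐ[volume]
      ((((RSet' B \ RSet B) ∩ {η | η 5 < 1}) ∩ {η | η 5 ≠ 0}) ∩ {η | η 6 ≠ 0} :
        Set (Fin 8 → ℝ)) := by
    filter_upwards [ae_ne_zero 5, ae_ne_zero 6] with η h5 h6 hη using ⟨⟨hη, h5⟩, h6⟩
  refine (lintegral_mono_set' hae).trans ((setLIntegral_le_iterated
    ((hmeas.inter (hmeas' 5)).inter (hmeas' 6))
    (S0 := Set.Icc 1 B) (S1 := fun _ => Set.Icc 1 B) (S2 := fun _ _ => Set.Icc 1 B)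
    (S3 := fun a b c => Set.Ioc 0
      (B ^ (1 / 2 : ℝ) * a ^ (-1 : ℝ) * b ^ (-1 : ℝ) * c ^ (-(3 / 2) : ℝ)))
    (S4 := fun a b c d => Set.Icc 1 B)
    (S5 := fun a b c d e => Set.Ioc 0 1)
    (S6 := fun a b c d e f => {g : ℝ | 0 < |g| ∧ |g| ≤ gMax B c d e f})
    (S7 := fun a b c d e f g => xSet B a b d e f g)
    measurableSet_Icc (fun _ => measurableSet_Icc) (fun _ _ => measurableSet_Icc)
    (fun _ _ _ => measurableSet_Ioc) (fun _ _ _ _ => measurableSet_Icc)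
    (fun _ _ _ _ _ => measurableSet_Ioc) (fun _ _ _ _ _ _ => measurableSet_punctured _)
    (fun _ _ _ _ _ _ _ => measurableSet_xSet _ _ _ _ _ _ _) ?_).trans ?_)
  · rintro a b c d e f g x ⟨⟨⟨⟨hR', hR⟩, hf1⟩, hf0⟩, hg⟩
    replace hf1 : f < 1 := hf1
    replace hf0 : f ≠ 0 := hf0
    replace hg : 0 < |g| := abs_pos.2 hg
    obtain ⟨⟨ha, hb, hc, hd, he, hf⟩, h2', h3, h2, h4, h5⟩ := mem_RSet' hB0 hR'
    obtain ⟨haB, hbB, hcB, hdB⟩ := abcd_le hB0 ha hb hc hd h2'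
    have hfpos : 0 < f := lt_of_le_of_ne hf hf0.symm
    exact ⟨⟨ha, haB⟩, ⟨hb, hbB⟩, ⟨hc, hcB⟩,
      ⟨by linarith, d_le hB0 (by linarith) (by linarith) (by linarith) (by linarith) h2'⟩,
      ⟨he, e_le hB0 ha hb hc hd he h2' h3⟩, ⟨hfpos, hf1.le⟩,
      ⟨hg, g_le hB0 (by linarith) (by linarith) (by linarith) hfpos hg h4⟩, h5⟩
  · refine (lintegral_abc hB1 (k := 128 * B * Real.log B) (by positivity)
      fun a b c ha hb hc => ?_).trans_eq (by congr 1; ring)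
    have ha0 : 0 < a := one_pos.trans_le ha
    have hb0 : 0 < b := one_pos.trans_le hb
    have hc0 : 0 < c := one_pos.trans_le hc
    refine setLIntegral_le_of_le measurableSet_Ioc
      (φ := fun d => 64 * Real.log B * (B ^ (3 / 4 : ℝ) * a ^ (-(1 / 2) : ℝ) *
        b ^ (-(1 / 2) : ℝ) * c ^ (-(1 / 4) : ℝ)) * d ^ (-(1 / 2) : ℝ)) (fun d hd => ?_) ?_
    · have hd0 : 0 < d := hd.1
      refine setLIntegral_le_of_le measurableSet_Icc
        (φ := fun e => 64 * (B ^ (3 / 4 : ℝ) * a ^ (-(1 / 2) : ℝ) * b ^ (-(1 / 2) : ℝ) *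
          c ^ (-(1 / 4) : ℝ) * d ^ (-(1 / 2) : ℝ)) * e⁻¹) (fun e he => ?_)
        ((setLIntegral_Icc_inv (by positivity) hB1).trans_eq (by congr 1; ring))
      have he0 : 0 < e := one_pos.trans_le he.1
      refine (lintegral_fgx hB0 ha0 hb0 hc0 hd0 he0 zero_le_one).trans_eq ?_
      rw [Real.one_rpow]
      congr 1; ring
    · refine (setLIntegral_Ioc_rpow (by norm_num) (by positivity) (by positivity)).trans_eq ?_
      congr 1
      have key : (B ^ (3 / 4 : ℝ) * a ^ (-(1 / 2) : ℝ) * b ^ (-(1 / 2) : ℝ) *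
          c ^ (-(1 / 4) : ℝ)) * (B ^ (1 / 2 : ℝ) * a ^ (-1 : ℝ) * b ^ (-1 : ℝ) *
          c ^ (-(3 / 2) : ℝ)) ^ (-(1 / 2) + 1 : ℝ) = B * a⁻¹ * b⁻¹ * c⁻¹ := by
        obtain ⟨β, rfl⟩ := exists_exp_eq hB0
        obtain ⟨α, rfl⟩ := exists_exp_eq ha0
        obtain ⟨b, rfl⟩ := exists_exp_eq hb0
        obtain ⟨γ, rfl⟩ := exists_exp_eq hc0
        simp only [← Real.exp_mul, ← Real.exp_add, ← Real.exp_neg]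
        congr 1; ring
      linear_combination 128 * Real.log B * key

/-! ### Integrability and comparison -/

/-- All coordinates are bounded by `B` in absolute value on `R(B)`; for `η₈` this uses the first
height term and `|η₂η₃η₄η₅η₆η₇| ≥ 1`. -/
lemma RSet_subset {B : ℝ} (hB : 3 ≤ B) : RSet B ⊆ Set.Icc (fun _ => -B) (fun _ => B) := by
  have hB0 : 0 < B := by linarith
  intro η hη
  have hvec : η = ![η 0, η 1, η 2, η 3, η 4, η 5, η 6, η 7] := by
    ext i; fin_cases i <;> rfl
  rw [hvec] at hη
  obtain ⟨⟨ha, hb, hc, hd, he, hf, hg⟩, h1, h2, h4, -⟩ := mem_RSet hB0 hη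
  have h2' := abcd_le_of_f hf h2 (by linarith)
  obtain ⟨haB, hbB, hcB, hdB⟩ := abcd_le hB0 ha hb hc hd h2'
  obtain ⟨heB, hfB, hgB⟩ := efg_le hB0 hc hd he hf hg h4
  have hx : |η 7| ≤ B := by
    refine le_trans ?_ h1
    rw [abs_mul]
    refine le_mul_of_one_le_left (abs_nonneg _) ?_
    rw [abs_mul, abs_of_pos (a := η 1 * η 2 * η 3 * η 4 * η 5) (by positivity)]
    exact one_le_mul_of_one_le_of_one_le (one_le_mul_of_one_le_of_one_le
      (one_le_mul_of_one_le_of_one_le (one_le_mul_of_one_le_of_one_le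
      (one_le_mul_of_one_le_of_one_le hb hc) hd) he) hf) hg
  have hall : ∀ i, -B ≤ η i ∧ η i ≤ B := by
    intro i
    fin_cases i
    · exact ⟨(by linarith : -B ≤ η 0), haB⟩
    · exact ⟨(by linarith : -B ≤ η 1), hbB⟩
    · exact ⟨(by linarith : -B ≤ η 2), hcB⟩
    · exact ⟨(by linarith : -B ≤ η 3), hdB⟩
    · exact ⟨(by linarith : -B ≤ η 4), heB⟩
    · exact ⟨(by linarith : -B ≤ η 5), hfB⟩
    · exact abs_le.1 hgB
    · exact abs_le.1 hx
  exact ⟨fun i => (hall i).1, fun i => (hall i).2⟩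

lemma integrableOn_RSet {B : ℝ} (hB : 3 ≤ B) :
    IntegrableOn (fun η : Fin 8 → ℝ => (η 0)⁻¹) (RSet B) := by
  have hfin : volume (RSet B) < ⊤ :=
    (measure_mono (RSet_subset hB)).trans_lt isCompact_Icc.measure_lt_top
  refine Measure.integrableOn_of_bounded (M := 1) hfin.ne
    (by fun_prop : Measurable fun η : Fin 8 → ℝ => (η 0)⁻¹).aestronglyMeasurable ?_
  filter_upwards [ae_restrict_mem (measurableSet_RSet B)] with η hη
  have h0 : 1 ≤ η 0 := hη.1 0 (by decide)
  rw [Real.norm_of_nonneg (by positivity)]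
  exact inv_le_one_of_one_le₀ h0

/-- The combined bound over `R'(B) \ R(B)`. -/
lemma lintegral_diff' {B : ℝ} (hB : 3 ≤ B) :
    ∫⁻ η in RSet' B \ RSet B, ENNReal.ofReal (η 0)⁻¹ ≤
      ENNReal.ofReal (144 * B * Real.log B ^ 4) := by
  have hL : 0 ≤ Real.log B := Real.log_nonneg (by linarith)
  have hsub : RSet' B \ RSet B ⊆ ((RSet' B \ RSet B) ∩ {η | 1 ≤ η 5}) ∪
      ((RSet' B \ RSet B) ∩ {η | η 5 < 1}) := fun η hη => by
    rcases le_or_gt 1 (η 5) with h | h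
    · exact Or.inl ⟨hη, h⟩
    · exact Or.inr ⟨hη, h⟩
  refine (lintegral_mono_set hsub).trans ((lintegral_union_le _ _ _).trans
    ((add_le_add (lintegral_diff_g hB) (lintegral_diff_f hB)).trans_eq ?_))
  rw [← ENNReal.ofReal_add (by positivity) (by positivity)]
  congr 1; ring

lemma setIntegral_inv_bounds {E : Set (Fin 8 → ℝ)} (hE : MeasurableSet E)
    (hpos : ∀ η ∈ E, 1 ≤ η 0) {C : ℝ} (hC : 0 ≤ C)
    (h : ∫⁻ η in E, ENNReal.ofReal (η 0)⁻¹ ≤ ENNReal.ofReal C) :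
    IntegrableOn (fun η : Fin 8 → ℝ => (η 0)⁻¹) E ∧ 0 ≤ ∫ η in E, (η 0)⁻¹ ∧
      ∫ η in E, (η 0)⁻¹ ≤ C := by
  have hm : AEStronglyMeasurable (fun η : Fin 8 → ℝ => (η 0)⁻¹) (volume.restrict E) :=
    (by fun_prop : Measurable fun η : Fin 8 → ℝ => (η 0)⁻¹).aestronglyMeasurable
  have hnn : 0 ≤ᵐ[volume.restrict E] fun η : Fin 8 → ℝ => (η 0)⁻¹ := by
    filter_upwards [ae_restrict_mem hE] with η hη
    exact inv_nonneg.2 (zero_le_one.trans (hpos η hη))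
  refine ⟨⟨hm, ?_⟩, integral_nonneg_of_ae hnn, ?_⟩
  · rw [hasFiniteIntegral_iff_ofReal hnn]
    exact h.trans_lt ENNReal.ofReal_lt_top
  · rw [integral_eq_lintegral_of_nonneg_ae hnn hm]
    exact ENNReal.toReal_le_of_le_ofReal hC h

/-- Comparison of the torsor volume with the modified volume:
`V₀(B) = V₀'(B) + O(B (log B)⁴)`. -/
theorem V0_eq_V0'_add_error :
    ∃ K : ℝ, 0 < K ∧ ∀ B : ℝ, 3 ≤ B → |V0 B - V0' B| ≤ K * B * Real.log B ^ 4 := by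
  refine ⟨192, by norm_num, fun B hB => ?_⟩
  have hL : 0 ≤ Real.log B := Real.log_nonneg (by linarith)
  have hR := measurableSet_RSet B
  have hR' := measurableSet_RSet' B
  obtain ⟨-, h1, h2⟩ := setIntegral_inv_bounds (hR.diff hR')
    (fun η hη => hη.1.1 0 (by decide)) (by positivity) (lintegral_diff hB)
  obtain ⟨hi, h1', h2'⟩ := setIntegral_inv_bounds (hR'.diff hR)
    (fun η hη => hη.1.1 0 (by decide)) (by positivity) (lintegral_diff' hB)
  have hint := integrableOn_RSet hB
  have hint' : IntegrableOn (fun η : Fin 8 → ℝ => (η 0)⁻¹) (RSet' B) :=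
    (hint.union hi).mono_set fun η hη => by
      by_cases h : η ∈ RSet B
      · exact Or.inl h
      · exact Or.inr ⟨hη, h⟩
  have e1 := integral_inter_add_sdiff hR' hint
  have e2 := integral_inter_add_sdiff hR hint'
  rw [Set.inter_comm] at e2
  have hBL : 0 ≤ B * Real.log B ^ 4 := by positivity
  unfold V0 V0'
  rw [← e1, ← e2, abs_le]
  constructor <;> linarith
end
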